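/- arXiv:2205.08453 — 2 statements merged into one kernel-verified Lean document; each statement's English description precedes it below -/
import Mathlib

section
/- For the Fadell–Neuwirth fibration p : F(ℝ^d, m+n) → F(ℝ^d, m) (forgetting the last n points) with d ≥ 3 odd, n ≥ 1, m ≥ 2 and r ≥ 2, the r-th sequential parametrized topological complexity equals TC_r[p] = rn + m − 1. -/
open Set unitInterval

universe u v

/-- `HasSecatLE p k`: the base admits an open cover by `k+1` sets,
each admitting a continuous local section of `p`. -/
def HasSecatLE {E : Type u} {B : Type v} [TopologicalSpace E] [TopologicalSpace B]
    (p : E → B) (k : ℕ) : Prop :=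
  ∃ U : Fin (k + 1) → Set B, (∀ i, IsOpen (U i)) ∧ (⋃ i, U i) = Set.univ ∧
    ∀ i, ∃ s : C(U i, E), ∀ x : U i, p (s x) = (x : B)

/-- The sectional category (Schwarz genus) of a map, valued in `ℕ∞`. -/
noncomputable def secat {E : Type u} {B : Type v} [TopologicalSpace E] [TopologicalSpace B]
    (p : E → B) : ℕ∞ :=
  ⨅ k ∈ {k : ℕ | HasSecatLE p k}, (k : ℕ∞)

/-- A Hurewicz fibration: a continuous map with the homotopy lifting property
with respect to all spaces. -/
def IsHurewiczFibration {E : Type u} {B : Type v} [TopologicalSpace E] [TopologicalSpace B]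
    (p : E → B) : Prop :=
  Continuous p ∧
    ∀ (Z : Type (max u v)) [TopologicalSpace Z] (H : C(Z × unitInterval, B)) (h : C(Z, E)),
      (∀ z, p (h z) = H (z, 0)) →
        ∃ H' : C(Z × unitInterval, E), (∀ z, H' (z, 0) = h z) ∧ ∀ q, p (H' q) = H q

/-- The standard time schedule `t_i = i/(r-1)`, `i = 0, …, r-1` in `[0,1]`. -/
noncomputable def schedule (r : ℕ) (i : Fin r) : unitInterval :=
  Set.projIcc 0 1 zero_le_one ((i : ℝ) / ((r : ℝ) - 1))

/-- The space `E^I_B` of paths in `E` along which `p` is constant. -/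
def FibConstPath {E : Type u} {B : Type v} [TopologicalSpace E] [TopologicalSpace B]
    (p : E → B) : Set C(unitInterval, E) :=
  {α | ∀ s t, p (α s) = p (α t)}

/-- The space `E^r_B` of `r`-tuples in `E` lying in a common fibre of `p`. -/
def ParamSpace {E : Type u} {B : Type v} [TopologicalSpace E] [TopologicalSpace B]
    (p : E → B) (r : ℕ) : Set (Fin r → E) :=
  {e | ∀ i j, p (e i) = p (e j)}

/-- The evaluation fibration `Π_r : E^I_B → E^r_B`. -/
noncomputable def paramEval {E : Type u} {B : Type v} [TopologicalSpace E] [TopologicalSpace B]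
    (p : E → B) (r : ℕ) (α : FibConstPath p) : ParamSpace p r :=
  ⟨fun i => α.1 (schedule r i), fun _ _ => α.2 _ _⟩

/-- The `r`-th sequential parametrized topological complexity `TC_r[p : E → B]`. -/
noncomputable def seqParamTC {E : Type u} {B : Type v} [TopologicalSpace E] [TopologicalSpace B]
    (p : E → B) (r : ℕ) : ℕ∞ :=
  secat (paramEval p r)

/-- The `r`-th sequential topological complexity `TC_r(X)` of a space. -/
noncomputable def seqTC (X : Type u) [TopologicalSpace X] (r : ℕ) : ℕ∞ :=
  secat (fun (α : C(unitInterval, X)) (i : Fin r) => α (schedule r i))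

/-- `HasCatLE Y k`: `Y` admits an open cover by `k+1` sets each contractible in `Y`. -/
def HasCatLE (Y : Type u) [TopologicalSpace Y] (k : ℕ) : Prop :=
  ∃ U : Fin (k + 1) → Set Y, (∀ i, IsOpen (U i)) ∧ (⋃ i, U i) = Set.univ ∧
    ∀ i, ∃ (H : C((U i) × unitInterval, Y)) (y : Y),
      (∀ x, H (x, 0) = (x.1 : Y)) ∧ (∀ x, H (x, 1) = y)

/-- The Lusternik–Schnirelmann category of a space, valued in `ℕ∞`. -/
noncomputable def LScat (Y : Type u) [TopologicalSpace Y] : ℕ∞ :=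
  ⨅ k ∈ {k : ℕ | HasCatLE Y k}, (k : ℕ∞)

/-- The ordered configuration space `F(ℝ^d, N)` of `N` distinct points in `ℝ^d`. -/
abbrev Conf (d N : ℕ) : Type :=
  {u : Fin N → EuclideanSpace ℝ (Fin d) // Function.Injective u}

/-- The Fadell–Neuwirth fibration `F(ℝ^d, m+n) → F(ℝ^d, m)` forgetting the last `n` points. -/
def fnProj (d m n : ℕ) (u : Conf d (m + n)) : Conf d m :=
  ⟨fun i => u.1 (Fin.castAdd n i), fun a b h => by
    have h2 : Fin.castAdd n a = Fin.castAdd n b := u.2 h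
    exact Fin.ext (by simpa using congrArg Fin.val h2)⟩

namespace FN

/-- Alexander–Spanier coboundary on list cochains. -/
def dd {X : Type*} : (List X → ℤ) → List X → ℤ
  | _, [] => 0
  | φ, a :: l => φ l - dd (fun t => φ (a :: t)) l

theorem dd_congr {X : Type*} (l : List X) : ∀ (φ ψ : List X → ℤ),
    (∀ t, t.Sublist l → t.length + 1 = l.length → φ t = ψ t) → dd φ l = dd ψ l := by
  induction l with
  | nil => intro φ ψ _; rfl
  | cons a l ih =>
    intro φ ψ h
    simp only [dd]
    rw [h l (List.sublist_cons_self a l) (by simp)]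
    congr 1
    apply ih
    intro t ht hl
    exact h (a :: t) (ht.cons_cons a) (by simp [hl])

theorem dd_sub {X : Type*} (l : List X) : ∀ (φ ψ : List X → ℤ),
    dd (fun t => φ t - ψ t) l = dd φ l - dd ψ l := by
  induction l with
  | nil => intro φ ψ; rfl
  | cons a l ih => intro φ ψ; simp only [dd]; rw [ih]; ring

theorem dd_add {X : Type*} (l : List X) : ∀ (φ ψ : List X → ℤ),
    dd (fun t => φ t + ψ t) l = dd φ l + dd ψ l := by
  induction l with
  | nil => intro φ ψ; rfl
  | cons a l ih => intro φ ψ; simp only [dd]; rw [ih]; ring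

theorem dd_smul {X : Type*} (c : ℤ) (l : List X) : ∀ (φ : List X → ℤ),
    dd (fun t => c * φ t) l = c * dd φ l := by
  induction l with
  | nil => intro φ; simp [dd]
  | cons a l ih => intro φ; simp only [dd]; rw [ih]; ring

theorem dd_zero {X : Type*} (l : List X) : dd (fun _ => 0) l = 0 := by
  have := dd_smul 0 l (fun _ => 0)
  simpa using this

theorem dd_sum {X : Type*} (l : List X) (n : ℕ) (φ : ℕ → List X → ℤ) :
    dd (fun t => ∑ k ∈ Finset.range n, φ k t) l = ∑ k ∈ Finset.range n, dd (φ k) l := by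
  induction n with
  | zero => simp [dd_zero]
  | succ n ih => simp only [Finset.sum_range_succ]; rw [dd_add, ih]

theorem dd_dd {X : Type*} (l : List X) : ∀ (φ : List X → ℤ), dd (dd φ) l = 0 := by
  induction l with
  | nil => intro φ; rfl
  | cons a l ih =>
    intro φ
    simp only [dd]
    rw [dd_sub, ih]
    ring

theorem dd_map {X Y : Type*} (f : X → Y) (l : List X) : ∀ (φ : List Y → ℤ),
    dd (fun t => φ (t.map f)) l = dd φ (l.map f) := by
  induction l with
  | nil => intro φ; rfl
  | cons a l ih =>
    intro φ
    simp only [dd, List.map_cons]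
    rw [ih (fun t => φ (f a :: t))]

theorem dd_ofFn {X : Type*} (n : ℕ) : ∀ (φ : List X → ℤ) (x : Fin (n + 1) → X),
    dd φ (List.ofFn x) = ∑ i : Fin (n + 1), (-1) ^ (i : ℕ) * φ (List.ofFn (fun k => x (i.succAbove k))) := by
  induction n with
  | zero => intro φ x; simp [dd]
  | succ n ih =>
    intro φ x
    rw [List.ofFn_succ, dd, ih, Fin.sum_univ_succ (n := n + 1)]
    simp only [Fin.val_zero, pow_zero, one_mul, Fin.succAbove_zero, Fin.val_succ, pow_succ]
    rw [sub_eq_add_neg, ← Finset.sum_neg_distrib]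
    congr 1
    apply Finset.sum_congr rfl
    intro i _
    rw [List.ofFn_succ (n := n)]
    simp

/-- prism operator -/
def hh {X Y : Type*} (f g : X → Y) : (List Y → ℤ) → List X → ℤ
  | _, [] => 0
  | φ, a :: l => φ (f a :: g a :: l.map g) - hh f g (fun t => φ (f a :: t)) l

theorem hh_sub {X Y : Type*} (f g : X → Y) (l : List X) : ∀ (φ ψ : List Y → ℤ),
    hh f g (fun t => φ t - ψ t) l = hh f g φ l - hh f g ψ l := by
  induction l with
  | nil => intro φ ψ; rfl
  | cons a l ih => intro φ ψ; simp only [hh]; rw [ih]; ring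

theorem hh_eq {X Y : Type*} (f g : X → Y) (l : List X) : ∀ (φ : List Y → ℤ),
    dd (hh f g φ) l + hh f g (dd φ) l = φ (l.map g) - φ (l.map f) := by
  induction l with
  | nil => intro φ; simp [dd, hh]
  | cons a l ih =>
    intro φ
    have h1 := ih (fun t => φ (f a :: t))
    simp only [dd, hh, List.map_cons]
    rw [hh_sub, dd_sub, dd_map g l (fun t => φ (f a :: g a :: t))]
    linarith

theorem hh_vanish {X Y : Type*} (f g : X → Y) (l : List X) : ∀ (φ : List Y → ℤ),
    (∀ t : List Y, (∀ y ∈ t, ∃ x ∈ l, y = f x ∨ y = g x) → t.length = l.length + 1 → φ t = 0) →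
    hh f g φ l = 0 := by
  induction l with
  | nil => intro φ _; rfl
  | cons a l ih =>
    intro φ h
    simp only [hh]
    rw [h, ih]
    · ring
    · intro t ht hl
      apply h
      · intro y hy
        rcases List.mem_cons.1 hy with rfl | hy
        · exact ⟨a, by simp, Or.inl rfl⟩
        · obtain ⟨x, hx, hxy⟩ := ht y hy
          exact ⟨x, by simp [hx], hxy⟩
      · simp [hl]
    · intro y hy
      simp only [List.mem_cons, List.mem_map] at hy
      rcases hy with rfl | rfl | ⟨x, hx, rfl⟩
      · exact ⟨a, by simp, Or.inl rfl⟩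
      · exact ⟨a, by simp, Or.inr rfl⟩
      · exact ⟨x, by simp [hx], Or.inr rfl⟩
    · simp

/-- cup product, first factor of degree `p` -/
def cup {X : Type*} (p : ℕ) (φ ψ : List X → ℤ) (l : List X) : ℤ :=
  φ (l.take (p + 1)) * ψ (l.drop p)

theorem leibniz {X : Type*} (p : ℕ) : ∀ (φ ψ : List X → ℤ) (l : List X), p + 2 ≤ l.length →
    dd (cup p φ ψ) l = cup (p + 1) (dd φ) ψ l + (-1) ^ p * cup p φ (dd ψ) l := by
  induction p with
  | zero =>
    intro φ ψ l hl
    match l, hl with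
    | a :: b :: l, _ =>
      have h : dd (fun t => cup 0 φ ψ (a :: t)) (b :: l) =
          φ [a] * dd (fun t => ψ (a :: t)) (b :: l) := by
        rw [← dd_smul]
        rfl
      rw [dd, h]
      simp [cup, dd]
      ring
  | succ p ih =>
    intro φ ψ l hl
    match l, hl with
    | a :: l, hl =>
      have h : (fun t => cup (p + 1) φ ψ (a :: t)) = cup p (fun t => φ (a :: t)) ψ := by
        funext t; simp [cup]
      rw [dd, h, ih _ _ _ (by simpa using hl)]
      simp [cup, dd]
      ring

/-- Iterated cup product of degree-`q` cochains -/
def PP {X : Type*} (q : ℕ) (u : ℕ → List X → ℤ) : ℕ → List X → ℤ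
  | 0 => u 0
  | k + 1 => cup ((k + 1) * q) (PP q u k) (u (k + 1))

theorem PP_eq {X : Type*} (q : ℕ) (u : ℕ → List X → ℤ) (k : ℕ) : ∀ l : List X,
    l.length = (k + 1) * q + 1 →
    PP q u k l = ∏ j ∈ Finset.range (k + 1), u j ((l.drop (j * q)).take (q + 1)) := by
  induction k with
  | zero =>
    intro l hl
    simp only [zero_add, one_mul] at hl
    simp [PP, ← hl]
  | succ k ih =>
    intro l hl
    rw [Finset.prod_range_succ, PP, cup, ih]
    · congr 1
      · apply Finset.prod_congr rfl
        intro j hj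
        congr 1
        rw [List.drop_take, List.take_take]
        congr 1
        have : j + 1 ≤ k + 1 := by simpa using hj
        have h2 : (j + 1) * q ≤ (k + 1) * q := Nat.mul_le_mul_right q this
        have : (j + 1) * q = j * q + q := by ring
        omega
      · rw [List.take_of_length_le]
        rw [List.length_drop, hl]
        have : (k + 1 + 1) * q = (k + 1) * q + q := by ring
        omega
    · rw [List.length_take, hl]
      have : (k + 1 + 1) * q = (k + 1) * q + q := by ring
      omega

theorem PP_coh {X : Type*} (q : ℕ) (hq : 1 ≤ q) (S : List X → Prop)
    (hS : ∀ l t : List X, t.Sublist l → S l → S t)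
    (u w : ℕ → List X → ℤ)
    (hu : ∀ k, ∀ l, S l → l.length = q + 2 → dd (u k) l = 0) (k : ℕ) :
    (∀ l, S l → l.length = (k + 1) * q + 2 → dd (PP q u k) l = 0) ∧
    ∃ W : List X → ℤ, ∀ l, S l → l.length = (k + 1) * q + 1 →
      PP q u k l - PP q (fun j l => u j l - dd (w j) l) k l = dd W l := by
  induction k with
  | zero =>
    constructor
    · intro l hl hll; exact hu 0 l hl (by simpa using hll)
    · exact ⟨w 0, fun l hl hll => by simp [PP]⟩
  | succ k ih =>
    obtain ⟨ih1, W, hW⟩ := ih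
    have hmul : (k + 1 + 1) * q = (k + 1) * q + q := by ring
    constructor
    · intro l hl hll
      rw [PP, leibniz _ _ _ _ (by rw [hll]; omega)]
      simp only [cup]
      rw [ih1, hu]
      · ring
      · exact hS l _ (List.drop_sublist _ _) hl
      · rw [List.length_drop]; omega
      · exact hS l _ (List.take_sublist _ _) hl
      · rw [List.length_take]; omega
    · obtain ⟨p, hp⟩ : ∃ p, (k + 1) * q = p + 1 :=
        ⟨(k + 1) * q - 1, by have : 1 ≤ (k + 1) * q := Nat.mul_pos (by omega) hq
                             omega⟩
      set u' : ℕ → List X → ℤ := fun j l => u j l - dd (w j) l with hu'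
      refine ⟨fun l => cup p W (u' (k + 1)) l +
        (-1) ^ ((k + 1) * q) * cup ((k + 1) * q) (PP q u k) (w (k + 1)) l, ?_⟩
      intro l hl hll
      rw [dd_add, dd_smul, leibniz _ _ _ _ (by rw [hll]; omega),
        leibniz _ _ _ _ (by rw [hll]; omega)]
      have e1 : cup ((k + 1) * q + 1) (dd (PP q u k)) (w (k + 1)) l = 0 := by
        simp only [cup]
        rw [ih1, zero_mul]
        · exact hS l _ (List.take_sublist _ _) hl
        · rw [List.length_take]; omega
      have e2 : cup p W (dd (u' (k + 1))) l = 0 := by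
        simp only [cup, hu']
        rw [dd_sub, dd_dd, hu]
        · ring
        · exact hS l _ (List.drop_sublist _ _) hl
        · rw [List.length_drop]; omega
      have e3 := hW (l.take ((k + 1) * q + 1)) (hS l _ (List.take_sublist _ _) hl)
        (by rw [List.length_take]; omega)
      rw [e1, e2]
      simp only [PP]
      rw [← hp]
      simp only [cup]
      rw [← e3]
      have : u' (k + 1) (List.drop ((k + 1) * q) l) =
        u (k + 1) (List.drop ((k + 1) * q) l) - dd (w (k + 1)) (List.drop ((k + 1) * q) l) := rfl
      rw [this]
      have h1 : ((-1 : ℤ) ^ ((k + 1) * q)) * ((-1 : ℤ) ^ ((k + 1) * q)) = 1 := by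
        rw [← mul_pow]; simp
      linear_combination (-(PP q u k (List.take ((k + 1) * q + 1) l) * dd (w (k + 1)) (List.drop ((k + 1) * q) l))) * h1

end FN

namespace FN

/-- vertices of the Kuhn simplex -/
def pth {D L : ℕ} (v : Fin D → ZMod L) (τ : Equiv.Perm (Fin D)) (k : Fin (D + 1)) :
    Fin D → ZMod L :=
  fun c => v c + if ((τ⁻¹ c : Fin D) : ℕ) < k then 1 else 0

/-- evaluation on the fundamental cycle of the torus -/
def cyc {D L : ℕ} [NeZero L] (φ : List (Fin D → ZMod L) → ℤ) : ℤ :=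
  ∑ τ : Equiv.Perm (Fin D), ∑ v : Fin D → ZMod L,
    (Equiv.Perm.sign τ : ℤ) * φ (List.ofFn (pth v τ))

theorem cyc_dd {n L : ℕ} [NeZero L] (φ : List (Fin (n + 1) → ZMod L) → ℤ) : cyc (dd φ) = 0 := by
  have h0 : cyc (dd φ) = ∑ i : Fin (n + 2), (-1) ^ (i : ℕ) *
      ∑ τ : Equiv.Perm (Fin (n + 1)), ∑ v : Fin (n + 1) → ZMod L,
        (Equiv.Perm.sign τ : ℤ) * φ (List.ofFn (fun k => pth v τ (i.succAbove k))) := by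
    simp only [cyc, dd_ofFn, Finset.mul_sum]
    rw [Finset.sum_congr rfl (fun τ _ => Finset.sum_comm), Finset.sum_comm]
    apply Finset.sum_congr rfl
    intro i _
    apply Finset.sum_congr rfl
    intro τ _
    apply Finset.sum_congr rfl
    intro v _
    ring
  rw [h0]
  set A : Fin (n + 2) → ℤ := fun i => ∑ τ : Equiv.Perm (Fin (n + 1)), ∑ v : Fin (n + 1) → ZMod L,
        (Equiv.Perm.sign τ : ℤ) * φ (List.ofFn (fun k => pth v τ (i.succAbove k))) with hA
  have hin : ∀ i : Fin n, A i.succ.castSucc = 0 := by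
    intro i
    have : A i.succ.castSucc = - A i.succ.castSucc := by
      simp only [hA]
      conv_lhs => rw [← Equiv.sum_comp (Equiv.mulRight (Equiv.swap i.castSucc i.succ))]
      rw [← Finset.sum_neg_distrib]
      apply Finset.sum_congr rfl
      intro τ _
      rw [← Finset.sum_neg_distrib]
      apply Finset.sum_congr rfl
      intro v _
      have hne : i.castSucc ≠ i.succ := by
        intro h; have := congrArg Fin.val h; simp at this
      simp only [Equiv.coe_mulRight, Equiv.Perm.sign_mul, Equiv.Perm.sign_swap hne]
      have hp : ∀ k, pth v (τ * Equiv.swap i.castSucc i.succ) (i.succ.castSucc.succAbove k) =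
          pth v τ (i.succ.castSucc.succAbove k) := by
        intro k
        have hk : i.succ.castSucc.succAbove k ≠ i.succ.castSucc := Fin.succAbove_ne _ _
        generalize i.succ.castSucc.succAbove k = k' at hk
        have hk2 : (k' : ℕ) ≠ i + 1 := by
          intro h; apply hk; ext; simpa using h
        funext c
        simp only [pth, mul_inv_rev, Equiv.swap_inv, Equiv.Perm.mul_apply]
        congr 1
        generalize (τ⁻¹ c : Fin (n+1)) = x
        have : ((Equiv.swap i.castSucc i.succ x : Fin (n+1)) : ℕ) < k' ↔ (x : ℕ) < k' := by
          rw [Equiv.swap_apply_def]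
          split_ifs with h1 h2
          · subst h1; simp; omega
          · subst h2; simp; omega
          · rfl
        simp only [this]
      simp only [hp]
      push_cast
      ring
    omega
  rw [Fin.sum_univ_succ, Fin.sum_univ_castSucc]
  have hmid : ∑ i : Fin n, (-1) ^ ((i.castSucc.succ : Fin (n+2)) : ℕ) * A i.castSucc.succ = 0 := by
    apply Finset.sum_eq_zero
    intro i _
    have : (i.castSucc.succ : Fin (n+2)) = i.succ.castSucc := by ext; simp
    rw [this, hin i, mul_zero]
  change (-1) ^ ((0 : Fin (n+2)) : ℕ) * A 0 + (∑ i : Fin n, (-1) ^ ((i.castSucc.succ : Fin (n+2)) : ℕ) * A i.castSucc.succ + (-1) ^ (((Fin.last n).succ : Fin (n+2)) : ℕ) * A (Fin.last n).succ) = 0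
  rw [hmid]
  have hend : A (Fin.last n).succ = (-1) ^ n * A 0 := by
    simp only [hA]
    rw [← Equiv.sum_comp (Equiv.mulRight (finRotate (n + 1))), Finset.mul_sum]
    apply Finset.sum_congr rfl
    intro τ _
    rw [← Equiv.sum_comp (Equiv.addRight (Pi.single (τ 0) 1)), Finset.mul_sum]
    apply Finset.sum_congr rfl
    intro v _
    simp only [Equiv.coe_mulRight, Equiv.Perm.sign_mul, sign_finRotate]
    have hp : ∀ k : Fin (n + 1), pth (Equiv.addRight (Pi.single (τ 0) 1) v) (τ * finRotate (n + 1))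
        ((Fin.last n).succ.succAbove k) = pth v τ ((0 : Fin (n + 2)).succAbove k) := by
      intro k
      have e1 : (Fin.last n).succ.succAbove k = k.castSucc := by
        rw [Fin.succ_last, Fin.succAbove_last]
      rw [e1, Fin.succAbove_zero]
      funext c
      obtain ⟨x, rfl⟩ : ∃ x, c = τ (finRotate (n+1) x) := ⟨(finRotate (n+1))⁻¹ (τ⁻¹ c), by simp⟩
      have i1 : ∀ (s : Equiv.Perm (Fin (n+1))) y, s⁻¹ (s y) = y := fun s y => by simp
      simp only [pth, mul_inv_rev, Equiv.Perm.mul_apply, i1,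
        Equiv.coe_addRight, Pi.add_apply, Pi.single_apply, EmbeddingLike.apply_eq_iff_eq,
        Fin.val_castSucc, Fin.val_succ]
      have hk := k.2
      by_cases hx : x = Fin.last n
      · subst hx
        rw [finRotate_last]
        simp
        intro h; omega
      · have hv : ((finRotate (n+1) x : Fin (n+1)) : ℕ) = x + 1 := coe_finRotate_of_ne_last hx
        have : finRotate (n+1) x ≠ 0 := by
          intro h; rw [h] at hv; simp at hv
        rw [if_neg this, hv]
        simp
    simp only [hp]
    push_cast
    ring
  rw [hend]
  simp only [Fin.val_zero, pow_zero, Fin.val_succ, Fin.val_last, pow_succ]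
  have : ((-1 : ℤ) ^ n) * ((-1 : ℤ) ^ n) = 1 := by rw [← mul_pow]; simp
  linear_combination (-A 0) * this

end FN

namespace FN

/-- simplicial cocycle on the boundary of the simplex with vertices `0..q+1` -/
def om (q : ℕ) (l : List ℕ) : ℤ :=
  Matrix.det (fun i j : Fin (q + 1) => if l[(i : ℕ)]? = some ((j : ℕ) + 1) then (1 : ℤ) else 0)

theorem om_ofFn (q : ℕ) (x : Fin (q + 1) → ℕ) :
    om q (List.ofFn x) = Matrix.det (fun i j : Fin (q + 1) => if x i = (j : ℕ) + 1 then (1 : ℤ) else 0) := by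
  unfold om
  congr 1
  funext i j
  simp [-List.ofFn_succ, Nat.lt_succ_iff.1 i.2]

theorem om_cocycle (q : ℕ) (l : List ℕ) (hl : l.length = q + 2) (hb : ∀ y ∈ l, y ≤ q + 1)
    (j : ℕ) (hj : j ≤ q + 1) (hjl : ∀ y ∈ l, y ≠ j) : dd (om q) l = 0 := by
  obtain ⟨x, rfl⟩ : ∃ x : Fin (q + 2) → ℕ, l = List.ofFn x := by
    refine ⟨fun i => l.get (Fin.cast hl.symm i), ?_⟩
    apply List.ext_get
    · simp [hl]
    · intro n h1 h2; simp [-List.ofFn_succ]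
  have hb' : ∀ i, x i ≤ q + 1 := fun i => hb _ (List.mem_ofFn.2 ⟨i, rfl⟩)
  have hj' : ∀ i, x i ≠ j := fun i => hjl _ (List.mem_ofFn.2 ⟨i, rfl⟩)
  rw [dd_ofFn]
  set A : Matrix (Fin (q + 2)) (Fin (q + 2)) ℤ := fun i c => if c = 0 then 1 else if x i = (c : ℕ) then 1 else 0 with hA
  have h1 : A.det = ∑ i : Fin (q + 2), (-1) ^ (i : ℕ) * om q (List.ofFn fun k => x (i.succAbove k)) := by
    rw [Matrix.det_succ_column_zero]
    apply Finset.sum_congr rfl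
    intro i _
    rw [om_ofFn]
    simp only [hA, if_true, mul_one]
    congr 2
  rw [← h1]
  by_cases h0 : j = 0
  · subst h0
    rw [← Matrix.exists_mulVec_eq_zero_iff]
    refine ⟨fun c => if c = 0 then -1 else 1, fun h => by simpa using congrFun h 0, ?_⟩
    funext i
    simp only [Matrix.mulVec, dotProduct, hA, Pi.zero_apply]
    rw [Fin.sum_univ_succ]
    simp only [if_true, Fin.succ_ne_zero, if_false, mul_one, Fin.val_succ]
    have hx0 := hj' i
    have hx1 := hb' i
    rw [Finset.sum_eq_single (⟨x i - 1, by omega⟩ : Fin (q + 1))]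
    · simp; omega
    · intro b _ hb2
      rw [if_neg]
      intro h
      apply hb2
      ext
      simp; omega
    · simp
  · apply Matrix.det_eq_zero_of_column_eq_zero (⟨j, by omega⟩ : Fin (q + 2))
    intro i
    simp only [hA]
    rw [if_neg (by intro h; apply h0; simpa using congrArg Fin.val h), if_neg (hj' i)]

theorem om_repeat (q : ℕ) (x : Fin (q + 1) → ℕ) (h : om q (List.ofFn x) ≠ 0) :
    Function.Injective x ∧ ∀ i, x i ≠ 0 := by
  rw [om_ofFn] at h
  constructor
  · intro a b hab
    by_contra hne
    apply h
    apply Matrix.det_zero_of_row_eq hne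
    funext c
    simp [hab]
  · intro i hi
    apply h
    apply Matrix.det_eq_zero_of_row_eq_zero i
    intro j
    simp [hi]

theorem om_id (q : ℕ) (x : Fin (q + 1) → ℕ) (h : ∀ i, x i = i + 1) : om q (List.ofFn x) = 1 := by
  rw [om_ofFn]
  have : (fun i j : Fin (q + 1) => if x i = (j : ℕ) + 1 then (1 : ℤ) else 0) = (1 : Matrix _ _ ℤ) := by
    funext i j
    rw [Matrix.one_apply, h]
    simp [Fin.ext_iff]
  rw [this, Matrix.det_one]

theorem om_contig {X : Type*} (q : ℕ) (lam : ℕ → X → ℕ) (hb : ∀ k x, lam k x ≤ q + 1) (n : ℕ)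
    (l : List X) (hl : l.length = q + 1)
    (h : ∀ k < n, ∃ j ≤ q + 1, ∀ x ∈ l, lam k x ≠ j ∧ lam (k + 1) x ≠ j) :
    om q (l.map (lam n)) - om q (l.map (lam 0)) =
      dd (fun t => ∑ k ∈ Finset.range n, hh (lam k) (lam (k + 1)) (om q) t) l := by
  rw [dd_sum, ← Finset.sum_range_sub (fun k => om q (l.map (lam k)))]
  apply Finset.sum_congr rfl
  intro k hk
  rw [← hh_eq, hh_vanish, add_zero]
  intro t ht hlen
  obtain ⟨j, hj, hjl⟩ := h k (by simpa using hk)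
  apply om_cocycle q t (by omega) _ j hj
  · intro y hy
    obtain ⟨x, hx, rfl | rfl⟩ := ht y hy
    · exact (hjl x hx).1
    · exact (hjl x hx).2
  · intro y hy
    obtain ⟨x, hx, rfl | rfl⟩ := ht y hy <;> exact hb _ _

/-- lists of grid points in a unit cube -/
def InCube {D L : ℕ} (v : Fin D → ZMod L) (l : List (Fin D → ZMod L)) : Prop :=
  ∀ x ∈ l, ∀ c, x c = v c ∨ x c = v c + 1

theorem cyc_vanish {D L : ℕ} [NeZero L] (q K : ℕ) (hq : 1 ≤ q) (hD : D = (K + 1) * q)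
    (f g : ℕ → (Fin D → ZMod L) → ℕ) (hfb : ∀ j x, f j x ≤ q + 1) (hgb : ∀ j x, g j x ≤ q + 1)
    (hf : ∀ j v, ∃ i ≤ q + 1, ∀ l, InCube v l → ∀ x ∈ l, f j x ≠ i)
    (hg : ∀ j v, ∃ i ≤ q + 1, ∀ l, InCube v l → ∀ x ∈ l, g j x ≠ i)
    (w : ℕ → List (Fin D → ZMod L) → ℤ)
    (hw : ∀ v, ∃ j ≤ K, ∀ l, InCube v l → l.length = q + 1 →
      om q (l.map (f j)) - om q (l.map (g j)) = dd (w j) l) :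
    cyc (PP q (fun j (l : List (Fin D → ZMod L)) => om q (l.map (f j)) - om q (l.map (g j))) K) = 0 := by
  set u : ℕ → List (Fin D → ZMod L) → ℤ := fun j l => om q (l.map (f j)) - om q (l.map (g j)) with hu
  obtain ⟨n, rfl⟩ : ∃ n, D = n + 1 := ⟨D - 1, by
    have : 1 ≤ (K + 1) * q := Nat.mul_pos (by omega) hq
    omega⟩
  obtain ⟨-, W, hW⟩ := PP_coh q hq (fun l => ∃ v : Fin (n + 1) → ZMod L, InCube v l)
    (fun l t htl ⟨v, hv⟩ => ⟨v, fun x hx => hv x (htl.subset hx)⟩) u w (by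
      rintro k l ⟨v, hv⟩ hl
      simp only [hu]
      rw [dd_sub, dd_map, dd_map]
      obtain ⟨i, hi, hil⟩ := hf k v
      obtain ⟨i', hi', hil'⟩ := hg k v
      rw [om_cocycle q _ (by simpa using hl) _ i hi, om_cocycle q _ (by simpa using hl) _ i' hi', sub_zero]
      · simpa using hil' l hv
      · simpa using fun x _ => hgb k x
      · simpa using hil l hv
      · simpa using fun x _ => hfb k x) K
  rw [← cyc_dd W]
  unfold cyc
  apply Finset.sum_congr rfl
  intro τ _
  apply Finset.sum_congr rfl
  intro v _
  have hc : InCube v (List.ofFn (pth v τ)) := by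
    intro x hx c
    rw [List.mem_ofFn] at hx
    obtain ⟨k, rfl⟩ := hx
    simp only [pth]
    split_ifs
    · right; rfl
    · left; simp
  have hlen : (List.ofFn (pth v τ)).length = (K + 1) * q + 1 := by simp [hD]
  have h1 := hW _ ⟨v, hc⟩ hlen
  rw [← h1]
  rw [PP_eq q (fun j l => u j l - dd (w j) l) K _ hlen]
  obtain ⟨j, hj, hjl⟩ := hw v
  rw [Finset.prod_eq_zero (i := j) (by simp; omega), sub_zero]
  rw [sub_eq_zero]
  apply hjl
  · intro x hx
    exact hc x ((((List.take_sublist _ _).trans (List.drop_sublist _ _))).subset hx)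
  · rw [List.length_take, List.length_drop, hlen]
    have : (j + 1) * q ≤ (K + 1) * q := Nat.mul_le_mul_right q (by omega)
    have : (j + 1) * q = j * q + q := by ring
    omega

end FN

namespace FN

def blk {N q L : ℕ} (b : Fin N) (x : Fin (N * q) → ZMod L) : Fin q → ZMod L :=
  fun i => x (finProdFinEquiv (b, i))

/-- the vertices of the Kuhn simplex, indexed by naturals -/
def pv {D L : ℕ} (v : Fin D → ZMod L) (τ : Equiv.Perm (Fin D)) (s : ℕ) : Fin D → ZMod L :=
  fun c => v c + if ((τ⁻¹ c : Fin D) : ℕ) < s then 1 else 0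

theorem pv_same {D L : ℕ} (v : Fin D → ZMod L) (τ : Equiv.Perm (Fin D)) (s : ℕ) (c : Fin D)
    (h : ((τ⁻¹ c : Fin D) : ℕ) ≠ s) : pv v τ (s + 1) c = pv v τ s c := by
  simp only [pv]
  congr 1
  have : ((τ⁻¹ c : Fin D) : ℕ) < s + 1 ↔ ((τ⁻¹ c : Fin D) : ℕ) < s := by omega
  simp only [this]

theorem pv_step {D L : ℕ} (v : Fin D → ZMod L) (τ : Equiv.Perm (Fin D)) (s : ℕ) (c : Fin D)
    (h : ((τ⁻¹ c : Fin D) : ℕ) = s) : pv v τ s c = v c ∧ pv v τ (s + 1) c = v c + 1 := by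
  simp only [pv, h]; simp

theorem seg_eq {D L : ℕ} (v : Fin D → ZMod L) (τ : Equiv.Perm (Fin D)) (a q : ℕ) (h : a + q ≤ D) :
    ((List.ofFn (pth v τ)).drop a).take (q + 1) = List.ofFn (fun k : Fin (q + 1) => pv v τ (a + k)) := by
  apply List.ext_getElem
  · simp [-List.ofFn_succ]; omega
  · intro n h1 h2
    simp only [List.getElem_take, List.getElem_drop, List.getElem_ofFn]
    rfl

section
variable {N q L : ℕ}

theorem step_in (v : Fin (N * q) → ZMod L) (τ : Equiv.Perm (Fin (N * q))) (b j : Fin N)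
    (G : (Fin q → ZMod L) → ℕ)
    (h : om q (List.ofFn (fun k : Fin (q + 1) => G (blk b (pv v τ (j * q + k))))) ≠ 0) (k : Fin q) :
    (finProdFinEquiv.symm (τ (finProdFinEquiv (j, k)))).1 = b := by
  by_contra hne
  have := (om_repeat q _ h).1 (a₁ := k.castSucc) (a₂ := k.succ) (by
    simp only [Fin.val_castSucc, Fin.val_succ]
    congr 1
    funext i
    simp only [blk]
    rw [← add_assoc, pv_same]
    intro h2
    apply hne
    have : τ⁻¹ (finProdFinEquiv (b, i)) = finProdFinEquiv (j, k) := by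
      ext
      rw [h2]
      simp [mul_comm, add_comm]
    rw [← this]
    simp)
  have := congrArg Fin.val this
  simp at this

theorem std_unique (neg : ZMod L → Prop) (H : (Fin q → ZMod L) → ℕ) (t0 : ZMod L)
    (H0 : ∀ t, H t ≤ q + 1)
    (H1 : ∀ t, H t ≠ 0 → ∀ i : Fin q, (i : ℕ) + 1 < H t → ¬ neg (t i))
    (H1' : ∀ t, H t ≠ 0 → ∀ i : Fin q, (i : ℕ) + 1 = H t → neg (t i))
    (H2 : ∀ t, H t ≠ 0 → ∀ i, ¬ neg (t i) → ¬ neg (t i + 1))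
    (H3 : ∀ t, neg t → ¬ neg (t + 1) → t = t0)
    (v : Fin (N * q) → ZMod L) (τ : Equiv.Perm (Fin (N * q))) (b j : Fin N)
    (h : om q (List.ofFn (fun k : Fin (q + 1) => H (blk b (pv v τ (j * q + k))))) ≠ 0) :
    (∀ k, τ (finProdFinEquiv (j, k)) = finProdFinEquiv (b, k) ∧ v (finProdFinEquiv (b, k)) = t0) ∧
    om q (List.ofFn (fun k : Fin (q + 1) => H (blk b (pv v τ (j * q + k))))) = 1 := by
  obtain ⟨hinj, hnz⟩ := om_repeat q _ h
  set x : Fin (q + 1) → ℕ := fun k : Fin (q + 1) => H (blk b (pv v τ (j * q + k))) with hx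
  have hmono : StrictMono x := by
    rw [Fin.strictMono_iff_lt_succ]
    intro k
    have hne : x k.castSucc ≠ x k.succ := by
      intro h2
      have := congrArg Fin.val (hinj h2)
      simp at this
    by_contra hlt
    have hlt : x k.succ < x k.castSucc := by omega
    have hle : x k.castSucc ≤ q + 1 := H0 _
    have hpos : x k.succ ≠ 0 := hnz _
    have h1 := H1 _ (hnz k.castSucc) ⟨x k.succ - 1, by omega⟩ (by
      change x k.succ - 1 + 1 < x k.castSucc; omega)
    have h2 := H1' _ (hnz k.succ) ⟨x k.succ - 1, by omega⟩ (by
      change x k.succ - 1 + 1 = x k.succ; omega)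
    have h3 := H2 _ (hnz k.castSucc) _ h1
    simp only [blk, Fin.val_castSucc, Fin.val_succ] at h1 h2 h3
    rw [← add_assoc] at h2
    by_cases hc : ((τ⁻¹ (finProdFinEquiv (b, (⟨x k.succ - 1, by omega⟩ : Fin q))) : Fin (N * q)) : ℕ) = j * q + k
    · obtain ⟨e1, e2⟩ := pv_step v τ _ _ hc
      rw [e2] at h2
      rw [e1] at h3
      exact h3 h2
    · rw [pv_same _ _ _ _ hc] at h2
      exact h1 h2
  have hval : ∀ k, x k = k + 1 := by
    have hge : ∀ n (hn : n < q + 1), n + 1 ≤ x ⟨n, hn⟩ := by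
      intro n
      induction n with
      | zero => intro hn; have h5 : x ⟨0, hn⟩ ≠ 0 := hnz ⟨0, hn⟩
                omega
      | succ n ih =>
        intro hn
        have h1 := ih (by omega)
        have h2 : x ⟨n, by omega⟩ < x ⟨n + 1, hn⟩ := hmono (by simp)
        omega
    have hle : ∀ n (hn : n ≤ q), x ⟨q - n, by omega⟩ ≤ q - n + 1 := by
      intro n
      induction n with
      | zero => intro hn; exact H0 _
      | succ n ih =>
        intro hn
        have h1 := ih (by omega)
        have h2 : x ⟨q - (n + 1), by omega⟩ < x ⟨q - n, by omega⟩ := hmono (by simp; omega)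
        omega
    intro k
    have h1 := hge k k.2
    have hk := k.2
    have h2 := hle (q - k) (by omega)
    have e : q - (q - (k : ℕ)) = k := by omega
    simp only [e] at h2
    exact le_antisymm h2 h1
  refine ⟨?_, om_id q x hval⟩
  intro k
  have h1 := H1' _ (hnz k.castSucc) k (by
    have := hval k.castSucc
    change (k : ℕ) + 1 = x k.castSucc
    simpa using this.symm)
  have h2 := H1 _ (hnz k.succ) k (by
    have := hval k.succ
    change (k : ℕ) + 1 < x k.succ
    rw [this]; simp)
  simp only [blk, Fin.val_castSucc, Fin.val_succ] at h1 h2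
  rw [← add_assoc] at h2
  by_cases hc : ((τ⁻¹ (finProdFinEquiv (b, k)) : Fin (N * q)) : ℕ) = j * q + k
  · obtain ⟨e1, e2⟩ := pv_step v τ _ _ hc
    rw [e2] at h2
    rw [e1] at h1
    refine ⟨?_, H3 _ h1 h2⟩
    have : τ⁻¹ (finProdFinEquiv (b, k)) = finProdFinEquiv (j, k) := by
      ext
      rw [hc]
      simp [mul_comm, add_comm]
    rw [← this]
    simp
  · rw [pv_same _ _ _ _ hc] at h2
    exact absurd h1 h2

theorem std_exists (neg : ZMod L → Prop) (H : (Fin q → ZMod L) → ℕ) (t0 : ZMod L)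
    (H0 : ∀ t, H t ≤ q + 1)
    (H1 : ∀ t, H t ≠ 0 → ∀ i : Fin q, (i : ℕ) + 1 < H t → ¬ neg (t i))
    (H1' : ∀ t, H t ≠ 0 → ∀ i : Fin q, (i : ℕ) + 1 = H t → neg (t i))
    (H3' : neg t0) (H3'' : ¬ neg (t0 + 1))
    (H4 : ∀ t : Fin q → ZMod L, (∀ i, t i = t0 ∨ t i = t0 + 1) → H t ≠ 0)
    (v : Fin (N * q) → ZMod L) (τ : Equiv.Perm (Fin (N * q))) (b j : Fin N)
    (h : ∀ k, τ (finProdFinEquiv (j, k)) = finProdFinEquiv (b, k) ∧ v (finProdFinEquiv (b, k)) = t0) :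
    om q (List.ofFn (fun k : Fin (q + 1) => H (blk b (pv v τ (j * q + k))))) = 1 := by
  apply om_id
  intro k
  have hi : ∀ i : Fin q, blk b (pv v τ (j * q + k)) i = if (i : ℕ) < k then t0 + 1 else t0 := by
    intro i
    have : ((τ⁻¹ (finProdFinEquiv (b, i)) : Fin (N * q)) : ℕ) = j * q + i := by
      rw [← (h i).1]
      simp [mul_comm, add_comm]
    simp only [blk, pv, (h i).2, this, add_lt_add_iff_left]
    split_ifs <;> simp
  set t := blk b (pv v τ (j * q + k)) with ht
  have hnz : H t ≠ 0 := H4 t (by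
    intro i; rw [hi]; split_ifs <;> simp)
  have hb := H0 t
  rcases lt_trichotomy (H t) (k + 1) with hlt | heq | hgt
  · exfalso
    have h1 := H1' t hnz ⟨H t - 1, by omega⟩ (by simp; omega)
    rw [hi, if_pos (by simp; omega)] at h1
    exact H3'' h1
  · exact heq
  · exfalso
    have h1 := H1 t hnz ⟨k, by omega⟩ (by simpa using hgt)
    rw [hi, if_neg (by simp)] at h1
    exact h1 H3'

end

theorem sign_block {N q : ℕ} (hqe : Even q) (e : Equiv.Perm (Fin N)) (τ : Equiv.Perm (Fin (N * q)))
    (h : ∀ j k, τ (finProdFinEquiv (j, k)) = finProdFinEquiv (e j, k)) : Equiv.Perm.sign τ = 1 := by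
  have : τ = finProdFinEquiv.permCongr (Equiv.prodCongrLeft (fun _ : Fin q => e)) := by
    ext c
    obtain ⟨⟨j, k⟩, rfl⟩ := finProdFinEquiv.surjective c
    rw [h]
    simp [Equiv.permCongr_apply]
  rw [this, Equiv.Perm.sign_permCongr, Equiv.Perm.sign_prodCongrLeft]
  simp only [Finset.prod_const, Finset.card_univ, Fintype.card_fin]
  obtain ⟨c, rfl⟩ := hqe
  rw [pow_add, ← mul_pow, Int.units_mul_self, one_pow]

theorem eval_ne {K q L : ℕ} [NeZero L] (hq : 1 ≤ q) (hqe : Even q)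
    (neg : ZMod L → Prop) (H : (Fin q → ZMod L) → ℕ) (t0 : ZMod L)
    (H0 : ∀ t, H t ≤ q + 1)
    (H1 : ∀ t, H t ≠ 0 → ∀ i : Fin q, (i : ℕ) + 1 < H t → ¬ neg (t i))
    (H1' : ∀ t, H t ≠ 0 → ∀ i : Fin q, (i : ℕ) + 1 = H t → neg (t i))
    (H2 : ∀ t, H t ≠ 0 → ∀ i, ¬ neg (t i) → ¬ neg (t i + 1))
    (H3 : ∀ t, neg t → ¬ neg (t + 1) → t = t0)
    (H3' : neg t0) (H3'' : ¬ neg (t0 + 1))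
    (H4 : ∀ t : Fin q → ZMod L, (∀ i, t i = t0 ∨ t i = t0 + 1) → H t ≠ 0)
    (f g : ℕ → (Fin ((K + 1) * q) → ZMod L) → ℕ)
    (ef eg : Fin (K + 1) → Fin (K + 1)) (hne : ∀ j, ef j ≠ eg j)
    (hf : ∀ (j : Fin (K + 1)) x, f j x = H (blk (ef j) x))
    (G : Fin (K + 1) → (Fin q → ZMod L) → ℕ)
    (hg : ∀ (j : Fin (K + 1)) x, g j x = G j (blk (eg j) x))
    (n0 : ℕ)
    (hch : ∀ e : Fin (K + 1) → Fin (K + 1), Function.Bijective e →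
      (∀ j, e j = ef j ∨ e j = eg j) → (∀ j, e j = eg j → G j = H) ∧
        (Finset.univ.filter (fun j => e j = eg j)).card = n0)
    (e0 : Fin (K + 1) → Fin (K + 1)) (he0 : Function.Bijective e0)
    (he0' : ∀ j, e0 j = ef j ∨ e0 j = eg j) :
    cyc (PP q (fun j (l : List (Fin ((K + 1) * q) → ZMod L)) =>
      om q (l.map (f j)) - om q (l.map (g j))) K) ≠ 0 := by
  classical
  set A : Equiv.Perm (Fin ((K + 1) * q)) → (Fin ((K + 1) * q) → ZMod L) → Fin (K + 1) → ℤ :=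
    fun τ v j => om q (List.ofFn (fun k : Fin (q + 1) => H (blk (ef j) (pv v τ (j * q + k))))) with hA
  set B : Equiv.Perm (Fin ((K + 1) * q)) → (Fin ((K + 1) * q) → ZMod L) → Fin (K + 1) → ℤ :=
    fun τ v j => om q (List.ofFn (fun k : Fin (q + 1) => G j (blk (eg j) (pv v τ (j * q + k))))) with hB
  have hcyc : cyc (PP q (fun j (l : List (Fin ((K + 1) * q) → ZMod L)) =>
      om q (l.map (f j)) - om q (l.map (g j))) K) =
      ∑ τ : Equiv.Perm (Fin ((K + 1) * q)), ∑ v : Fin ((K + 1) * q) → ZMod L,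
        (Equiv.Perm.sign τ : ℤ) * ∏ j, (A τ v j - B τ v j) := by
    unfold cyc
    apply Finset.sum_congr rfl
    intro τ _
    apply Finset.sum_congr rfl
    intro v _
    rw [PP_eq _ _ _ _ (by simp), Finset.prod_range]
    congr 1
    apply Finset.prod_congr rfl
    intro j _
    have hjq : (j : ℕ) * q + q ≤ (K + 1) * q := by
      have := Nat.mul_le_mul_right q (Nat.succ_le_of_lt j.2)
      rw [Nat.succ_mul] at this
      exact this
    rw [seg_eq v τ _ q hjq, List.map_ofFn, List.map_ofFn]
    simp only [hA, hB]
    congr 3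
    · funext k; exact hf j _
    · funext k; exact hg j _
  -- block structure
  have hAin : ∀ τ v j, A τ v j ≠ 0 → ∀ k, (finProdFinEquiv.symm (τ (finProdFinEquiv (j, k)))).1 = ef j :=
    fun τ v j h k => step_in v τ _ j _ h k
  have hBin : ∀ τ v j, B τ v j ≠ 0 → ∀ k, (finProdFinEquiv.symm (τ (finProdFinEquiv (j, k)))).1 = eg j :=
    fun τ v j h k => step_in v τ _ j _ h k
  have hterm : ∀ τ v, (Equiv.Perm.sign τ : ℤ) * ∏ j, (A τ v j - B τ v j) ≠ 0 →
      (Equiv.Perm.sign τ : ℤ) * ∏ j, (A τ v j - B τ v j) = (-1) ^ n0 := by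
    intro τ v hnz
    have hj : ∀ j, A τ v j - B τ v j ≠ 0 := by
      intro j hj
      exact hnz (by rw [Finset.prod_eq_zero (Finset.mem_univ j) hj, mul_zero])
    set e : Fin (K + 1) → Fin (K + 1) := fun j => if A τ v j ≠ 0 then ef j else eg j with he
    have hein : ∀ j k, (finProdFinEquiv.symm (τ (finProdFinEquiv (j, k)))).1 = e j := by
      intro j k
      simp only [he]
      split_ifs with h
      · exact hAin τ v j h k
      · have h' : A τ v j = 0 := by simpa using h
        apply hBin τ v j
        intro hb
        apply hj j
        rw [h', hb, sub_zero]
    have hsurj : Function.Surjective e := by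
      intro b
      obtain ⟨c, hc⟩ := τ.surjective (finProdFinEquiv (b, (⟨0, by omega⟩ : Fin q)))
      obtain ⟨⟨j, k⟩, rfl⟩ := finProdFinEquiv.surjective c
      exact ⟨j, by rw [← hein j k, hc]; simp⟩
    have hbij : Function.Bijective e := Finite.injective_iff_bijective.1 (Finite.injective_iff_surjective.2 hsurj)
    have hche : ∀ j, e j = ef j ∨ e j = eg j := by
      intro j; simp only [he]; split_ifs <;> simp
    obtain ⟨hgood, hcard⟩ := hch e hbij hche
    have hval : ∀ j, (∀ k, τ (finProdFinEquiv (j, k)) = finProdFinEquiv (e j, k)) ∧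
        A τ v j - B τ v j = if e j = eg j then -1 else 1 := by
      intro j
      by_cases h : A τ v j ≠ 0
      · have hej : e j = ef j := by simp only [he]; rw [if_pos h]
        obtain ⟨h1, h2⟩ := std_unique neg H t0 H0 H1 H1' H2 H3 v τ (ef j) j h
        have hB0 : B τ v j = 0 := by
          by_contra hB0
          apply hne j
          rw [← hAin τ v j h ⟨0, by omega⟩, ← hBin τ v j hB0 ⟨0, by omega⟩]
        rw [hej]
        refine ⟨fun k => (h1 k).1, ?_⟩
        rw [if_neg (hne j), hB0, sub_zero]
        exact h2
      · have hej : e j = eg j := by simp only [he]; rw [if_neg h]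
        have h' : A τ v j = 0 := by simpa using h
        have hBn : B τ v j ≠ 0 := by
          intro hb
          apply hj j
          rw [h', hb, sub_zero]
        have hGH := hgood j hej
        simp only [hB] at hBn
        rw [hGH] at hBn
        obtain ⟨h1, h2⟩ := std_unique neg H t0 H0 H1 H1' H2 H3 v τ (eg j) j hBn
        rw [hej]
        refine ⟨fun k => (h1 k).1, ?_⟩
        rw [if_pos rfl, h']
        simp only [hB]
        rw [hGH, h2]
        norm_num
    have hs : Equiv.Perm.sign τ = 1 := sign_block hqe (Equiv.ofBijective e hbij) τ
      (fun j k => (hval j).1 k)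
    rw [hs, Finset.prod_congr rfl (fun j _ => (hval j).2)]
    rw [Finset.prod_ite]
    simp [hcard]
  have hex : ∃ τ v, (Equiv.Perm.sign τ : ℤ) * ∏ j, (A τ v j - B τ v j) ≠ 0 := by
    set τ : Equiv.Perm (Fin ((K + 1) * q)) :=
      finProdFinEquiv.permCongr (Equiv.prodCongrLeft (fun _ : Fin q => Equiv.ofBijective e0 he0)) with hτ
    have hτ' : ∀ j k, τ (finProdFinEquiv (j, k)) = finProdFinEquiv (e0 j, k) := by
      intro j k; simp [hτ, Equiv.permCongr_apply]
    refine ⟨τ, fun _ => t0, ?_⟩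
    obtain ⟨hgood, hcard⟩ := hch e0 he0 he0'
    apply mul_ne_zero
    · simp
    · rw [Finset.prod_ne_zero_iff]
      intro j _
      rcases he0' j with h | h
      · have h1 : A τ (fun _ => t0) j = 1 := std_exists neg H t0 H0 H1 H1' H3' H3'' H4 _ τ (ef j) j
          (fun k => ⟨by rw [hτ', h], rfl⟩)
        have h2 : B τ (fun _ => t0) j = 0 := by
          by_contra hb
          have := hBin _ _ j hb ⟨0, by omega⟩
          rw [hτ'] at this
          simp at this
          exact hne j (h.symm.trans this)
        rw [h1, h2]; norm_num
      · have h1 : B τ (fun _ => t0) j = 1 := by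
          simp only [hB]
          rw [hgood j h]
          exact std_exists neg H t0 H0 H1 H1' H3' H3'' H4 _ τ (eg j) j
            (fun k => ⟨by rw [hτ', h], rfl⟩)
        have h2 : A τ (fun _ => t0) j = 0 := by
          by_contra hb
          have := hAin _ _ j hb ⟨0, by omega⟩
          rw [hτ'] at this
          simp at this
          exact hne j (this.symm.trans h)
        rw [h1, h2]; norm_num
  rw [hcyc]
  have hpos : 0 < ∑ τ : Equiv.Perm (Fin ((K + 1) * q)), ∑ v : Fin ((K + 1) * q) → ZMod L,
        (-1) ^ n0 * ((Equiv.Perm.sign τ : ℤ) * ∏ j, (A τ v j - B τ v j)) := by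
    have hsq : ((-1 : ℤ) ^ n0) * ((-1 : ℤ) ^ n0) = 1 := by rw [← mul_pow]; simp
    have hnn : ∀ τ v, 0 ≤ (-1 : ℤ) ^ n0 * ((Equiv.Perm.sign τ : ℤ) * ∏ j, (A τ v j - B τ v j)) := by
      intro τ v
      by_cases h : (Equiv.Perm.sign τ : ℤ) * ∏ j, (A τ v j - B τ v j) = 0
      · rw [h, mul_zero]
      · rw [hterm τ v h, hsq]; norm_num
    obtain ⟨τ, v, hτv⟩ := hex
    apply Finset.sum_pos' (fun τ _ => Finset.sum_nonneg (fun v _ => hnn τ v))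
    refine ⟨τ, Finset.mem_univ _, ?_⟩
    apply Finset.sum_pos' (fun v _ => hnn τ v)
    refine ⟨v, Finset.mem_univ _, ?_⟩
    rw [hterm τ v hτv, hsq]; norm_num
  intro h0
  have h00 : ∑ τ : Equiv.Perm (Fin ((K + 1) * q)), ∑ v : Fin ((K + 1) * q) → ZMod L,
        (-1) ^ n0 * ((Equiv.Perm.sign τ : ℤ) * ∏ j, (A τ v j - B τ v j)) = (-1) ^ n0 * 0 := by
    rw [← h0, Finset.mul_sum]
    simp only [Finset.mul_sum]
  rw [h00] at hpos
  simp at hpos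

end FN

namespace FN

open Filter Topology

abbrev EE (q : ℕ) := EuclideanSpace ℝ (Fin (q + 1))

noncomputable def lab (q : ℕ) (y : EE q) : ℕ :=
  open Classical in
  if 0 ≤ y (Fin.last q) then 0 else sInf {i : ℕ | ∃ h : i < q + 1, y ⟨i, h⟩ < 0} + 1

theorem lab_zero {q : ℕ} (y : EE q) : lab q y = 0 ↔ 0 ≤ y (Fin.last q) := by
  unfold lab
  split_ifs with h <;> simp [h]

theorem lab_mem {q : ℕ} (y : EE q) (i : ℕ) (h : lab q y = i + 1) :
    ∃ h : i < q + 1, y ⟨i, h⟩ < 0 := by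
  unfold lab at h
  split_ifs at h with h1
  have hne : {i : ℕ | ∃ h : i < q + 1, y ⟨i, h⟩ < 0}.Nonempty :=
    ⟨q, by omega, by simpa [Fin.last] using h1⟩
  have := Nat.sInf_mem hne
  simp only [Nat.add_right_cancel_iff] at h
  rwa [h] at this

theorem lab_lt {q : ℕ} (y : EE q) (i : ℕ) (hi : i < q + 1) (h : i + 1 < lab q y) :
    0 ≤ y ⟨i, hi⟩ := by
  unfold lab at h
  split_ifs at h with h1
  · omega
  have : i ∉ {i : ℕ | ∃ h : i < q + 1, y ⟨i, h⟩ < 0} := Nat.notMem_of_lt_sInf (by omega)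
  by_contra hc
  exact this ⟨hi, by linarith⟩

theorem lab_le {q : ℕ} (y : EE q) : lab q y ≤ q + 1 := by
  rcases Nat.eq_zero_or_pos (lab q y) with h | h
  · omega
  obtain ⟨h', -⟩ := lab_mem y (lab q y - 1) (by omega)
  omega

theorem lab_smul {q : ℕ} (y : EE q) (c : ℝ) (hc : 0 < c) : lab q (c • y) = lab q y := by
  unfold lab
  have h : ∀ a : ℝ, c * a < 0 ↔ a < 0 := fun a => by
    rw [← not_le, ← not_le, mul_nonneg_iff_of_pos_left hc]
  simp only [PiLp.smul_apply, smul_eq_mul, mul_nonneg_iff_of_pos_left hc, h]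

def VV (q : ℕ) (j : Fin (q + 2)) : Set (EE q) :=
  {y | ((j : ℕ) = 0 ∧ y (Fin.last q) < 0) ∨ ((j : ℕ) ≠ 0 ∧ 0 < y (Fin.last q)) ∨
    (∃ i : Fin (q + 1), (i : ℕ) < q ∧ (j : ℕ) = i + 1 ∧ 0 < y i) ∨
    (∃ i : Fin (q + 1), (i : ℕ) < q ∧ (j : ℕ) = q + 1 ∧ y i < 0)}

theorem VV_open (q : ℕ) (j : Fin (q + 2)) : IsOpen (VV q j) := by
  have hc : ∀ i : Fin (q + 1), Continuous fun y : EE q => y i := fun i => by fun_prop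
  unfold VV
  refine IsOpen.union ?_ (IsOpen.union ?_ (IsOpen.union ?_ ?_))
  · exact isOpen_const.inter (isOpen_lt (hc _) continuous_const)
  · exact isOpen_const.inter (isOpen_lt continuous_const (hc _))
  · have : {y : EE q | ∃ i : Fin (q + 1), (i : ℕ) < q ∧ (j : ℕ) = i + 1 ∧ 0 < y i} =
      ⋃ i : Fin (q + 1), {y : EE q | (i : ℕ) < q ∧ (j : ℕ) = i + 1 ∧ 0 < y i} := by ext; simp
    change IsOpen {y : EE q | _}
    rw [this]
    exact isOpen_iUnion fun i => isOpen_const.inter (isOpen_const.inter (isOpen_lt continuous_const (hc _)))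
  · have : {y : EE q | ∃ i : Fin (q + 1), (i : ℕ) < q ∧ (j : ℕ) = q + 1 ∧ y i < 0} =
      ⋃ i : Fin (q + 1), {y : EE q | (i : ℕ) < q ∧ (j : ℕ) = q + 1 ∧ y i < 0} := by ext; simp
    change IsOpen {y : EE q | _}
    rw [this]
    exact isOpen_iUnion fun i => isOpen_const.inter (isOpen_const.inter (isOpen_lt (hc _) continuous_const))

theorem VV_cover {q : ℕ} (y : EE q) (hy : y ≠ 0) : ∃ j, y ∈ VV q j := by
  rcases lt_trichotomy (y (Fin.last q)) 0 with h | h | h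
  · exact ⟨0, Or.inl ⟨rfl, h⟩⟩
  · obtain ⟨i, hi⟩ : ∃ i, y i ≠ 0 := by
      by_contra hc
      push Not at hc
      exact hy (by ext i; simpa using hc i)
    have hiq : (i : ℕ) < q := by
      rcases i.is_le.lt_or_eq with h' | h'
      · exact h'
      · exact absurd (by rw [show i = Fin.last q from Fin.ext h']; exact h) hi
    rcases lt_or_gt_of_ne hi with h' | h'
    · exact ⟨Fin.last (q + 1), Or.inr (Or.inr (Or.inr ⟨i, hiq, rfl, h'⟩))⟩
    · exact ⟨⟨i + 1, by omega⟩, Or.inr (Or.inr (Or.inl ⟨i, hiq, rfl, h'⟩))⟩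
  · exact ⟨Fin.last (q + 1), Or.inr (Or.inl ⟨by simp, h⟩)⟩

theorem lab_VV {q : ℕ} (y : EE q) (j : Fin (q + 2)) (h : y ∈ VV q j) : lab q y ≠ j := by
  intro hl
  rcases h with ⟨hj, h⟩ | ⟨hj, h⟩ | ⟨i, hi, hj, h⟩ | ⟨i, hi, hj, h⟩
  · rw [hj, lab_zero] at hl
    linarith
  · exact hj (by rw [← hl, lab_zero]; exact h.le)
  · obtain ⟨h1, h2⟩ := lab_mem y i (by omega)
    change y i < 0 at h2
    linarith
  · have := lab_lt y i (by omega) (by omega)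
    change 0 ≤ y i at this
    linarith

/-- grid points on the circle -/
noncomputable def gr {L : ℕ} (t : ZMod L) : Circle := Circle.exp (2 * Real.pi * t.val / L)

theorem gr_succ {L : ℕ} [NeZero L] (t : ZMod L) :
    gr (t + 1) = gr t * Circle.exp (2 * Real.pi / L) := by
  unfold gr
  rw [← Circle.exp_add]
  have hL : (L : ℝ) ≠ 0 := by exact_mod_cast NeZero.ne L
  rcases (Nat.succ_le_of_lt (ZMod.val_lt t)).lt_or_eq with h | h
  · have h1 : (1 : ZMod L).val = 1 := ZMod.val_one'' (by omega)
    rw [ZMod.val_add_of_lt (by rw [h1]; exact h), h1]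
    congr 1
    push_cast
    ring
  · have h1 : t + 1 = 0 := by
      have : ((t.val + 1 : ℕ) : ZMod L) = ((L : ℕ) : ZMod L) :=
        congrArg (Nat.cast : ℕ → ZMod L) h
      simpa using this
    have h2 : (L : ℝ) = t.val + 1 := by exact_mod_cast h.symm
    rw [h1, ZMod.val_zero]
    have : 2 * Real.pi * (t.val : ℝ) / L + 2 * Real.pi / L = 2 * Real.pi := by
      rw [← add_div, h2]
      field_simp
    rw [this]
    simp

noncomputable def grid {D L : ℕ} (x : Fin D → ZMod L) : Fin D → Circle := fun c => gr (x c)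

theorem grid_dist (D : ℕ) (δ : ℝ) (hδ : 0 < δ) : ∀ᶠ L : ℕ in atTop, ∀ v x : Fin D → ZMod L,
    (∀ c, x c = v c ∨ x c = v c + 1) → dist (grid x) (grid v) < δ := by
  have h1 : Tendsto (fun L : ℕ => Circle.exp (2 * Real.pi / L)) atTop (𝓝 1) := by
    have : Tendsto (fun L : ℕ => 2 * Real.pi / (L : ℝ)) atTop (𝓝 0) :=
      tendsto_const_div_atTop_nhds_zero_nat _
    have h2 := (Circle.exp.continuous.tendsto 0).comp this
    simpa [Function.comp_def] using h2
  filter_upwards [h1 (Metric.ball_mem_nhds 1 hδ), eventually_gt_atTop 0] with L hL hL0 v x hx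
  have : NeZero L := ⟨by omega⟩
  rw [dist_pi_lt_iff hδ]
  intro c
  unfold grid
  rcases hx c with h | h
  · rw [h, dist_self]; exact hδ
  · rw [h, gr_succ]
    have h2 : dist (gr (v c) * Circle.exp (2 * Real.pi / L)) (gr (v c)) =
        dist (Circle.exp (2 * Real.pi / L)) 1 := by
      change dist ((gr (v c) * Circle.exp (2 * Real.pi / L) : Circle) : ℂ) (gr (v c) : ℂ) =
        dist (Circle.exp (2 * Real.pi / L) : ℂ) ((1 : Circle) : ℂ)
      rw [dist_eq_norm, dist_eq_norm]
      have : ((gr (v c) * Circle.exp (2 * Real.pi / L) : Circle) : ℂ) - (gr (v c) : ℂ) =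
        (gr (v c) : ℂ) * ((Circle.exp (2 * Real.pi / L) : ℂ) - ((1 : Circle) : ℂ)) := by
        simp [mul_sub]
      rw [this, norm_mul, Circle.norm_coe, one_mul]
    rw [h2]
    exact hL

theorem top_vanish {D : ℕ} (q K : ℕ) (hq : 1 ≤ q) (hD : D = (K + 1) * q)
    (F G : Fin (K + 1) → (Fin D → Circle) → EE q)
    (hF : ∀ j, Continuous (F j)) (hG : ∀ j, Continuous (G j))
    (hF0 : ∀ j x, F j x ≠ 0) (hG0 : ∀ j x, G j x ≠ 0)
    (U : Fin (K + 1) → Set (Fin D → Circle)) (hU : ∀ j, IsOpen (U j)) (hcov : (⋃ j, U j) = univ)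
    (h : Fin (K + 1) → (Fin D → Circle) × I → EE q)
    (hh1 : ∀ j, ContinuousOn (h j) (U j ×ˢ univ))
    (hh0 : ∀ j, ∀ x ∈ U j, ∀ t, h j (x, t) ≠ 0)
    (hhF : ∀ j, ∀ x ∈ U j, h j (x, 1) = F j x) (hhG : ∀ j, ∀ x ∈ U j, h j (x, 0) = G j x) :
    ∀ᶠ L : ℕ in atTop, ∀ [NeZero L],
      cyc (PP q (fun j (l : List (Fin D → ZMod L)) =>
        om q (l.map (fun x => lab q (F (Fin.ofNat (K + 1) j) (grid x)))) -
        om q (l.map (fun x => lab q (G (Fin.ofNat (K + 1) j) (grid x))))) K) = 0 := by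
  have key : ∀ F : Fin (K + 1) → (Fin D → Circle) → EE q, (∀ j, Continuous (F j)) →
      (∀ j x, F j x ≠ 0) → ∀ᶠ L : ℕ in atTop, ∀ j, ∀ v : Fin D → ZMod L, ∃ i ≤ q + 1,
        ∀ l, InCube v l → ∀ x ∈ l, lab q (F j (grid x)) ≠ i := by
    intro F hF hF0
    rw [eventually_all]
    intro j
    obtain ⟨δ, hδ, hδ'⟩ := lebesgue_number_lemma_of_metric (isCompact_univ (X := Fin D → Circle))
      (c := fun i => F j ⁻¹' VV q i) (fun i => (VV_open q i).preimage (hF j))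
      (fun x _ => by
        obtain ⟨i, hi⟩ := VV_cover (F j x) (hF0 j x)
        exact mem_iUnion.2 ⟨i, hi⟩)
    filter_upwards [grid_dist D δ hδ] with L hL v
    obtain ⟨i, hi⟩ := hδ' (grid v) trivial
    refine ⟨i, by omega, fun l hl x hx => lab_VV _ _ (hi (hL v x (hl x hx)))⟩
  obtain ⟨V, hVcov, hVo, hVU⟩ := exists_iUnion_eq_closure_subset hU (fun x => Set.toFinite _) hcov
  obtain ⟨δ₀, hδ₀, hδ₀'⟩ := lebesgue_number_lemma_of_metric (isCompact_univ (X := Fin D → Circle))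
      (c := V) hVo (by rw [hVcov])
  have key2 : ∀ j, ∃ n : ℕ, 0 < n ∧ ∀ᶠ L : ℕ in atTop, ∀ v : Fin D → ZMod L, grid v ∈ V j → ∀ k < n,
      ∃ i ≤ q + 1, ∀ x, (∀ c, x c = v c ∨ x c = v c + 1) →
        lab q (h j (grid x, projIcc 0 1 zero_le_one ((k : ℝ) / n))) ≠ i ∧
        lab q (h j (grid x, projIcc 0 1 zero_le_one (((k + 1 : ℕ) : ℝ) / n))) ≠ i := by
    intro j
    have hcomp : IsCompact (closure (V j) ×ˢ (univ : Set I)) := isClosed_closure.isCompact.prod isCompact_univ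
    obtain ⟨δ, hδ, hδ'⟩ := lebesgue_number_lemma_of_metric hcomp
      (c := fun i => (U j ×ˢ univ) ∩ h j ⁻¹' VV q i)
      (fun i => (hh1 j).isOpen_inter_preimage ((hU j).prod isOpen_univ) (VV_open q i))
      (by
        rintro ⟨x, t⟩ ⟨hx, -⟩
        obtain ⟨i, hi⟩ := VV_cover (h j (x, t)) (hh0 j x (hVU j hx) t)
        exact mem_iUnion.2 ⟨i, ⟨hVU j hx, trivial⟩, hi⟩)
    obtain ⟨n, hn⟩ := exists_nat_one_div_lt hδ
    refine ⟨n + 1, by omega, ?_⟩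
    filter_upwards [grid_dist D δ hδ] with L hL v hv k hk
    obtain ⟨i, hi⟩ := hδ' (grid v, projIcc 0 1 zero_le_one ((k : ℝ) / (n + 1 : ℕ))) ⟨subset_closure hv, trivial⟩
    refine ⟨i, by omega, fun x hx => ⟨lab_VV _ _ (hi ?_).2, lab_VV _ _ (hi ?_).2⟩⟩
    · rw [Metric.mem_ball, Prod.dist_eq]
      simp [hL v x hx]
    · rw [Metric.mem_ball, Prod.dist_eq]
      refine max_lt (hL v x hx) ?_
      refine lt_of_le_of_lt ?_ hn
      rw [Subtype.dist_eq, projIcc_of_mem, projIcc_of_mem]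
      · simp only [Real.dist_eq]
        rw [← sub_div]
        push_cast
        rw [add_sub_cancel_left, abs_of_nonneg (by positivity)]
      · exact ⟨by positivity, by rw [div_le_one (by positivity)]; exact_mod_cast hk.le⟩
      · exact ⟨by positivity, by rw [div_le_one (by positivity)]; exact_mod_cast hk⟩
  choose n hn0 hn using key2
  filter_upwards [key F hF hF0, key G hG hG0, eventually_all.2 hn, grid_dist D δ₀ hδ₀] with L h1 h2 h3 h4 _
  let lam : Fin (K + 1) → ℕ → (Fin D → ZMod L) → ℕ := fun j k x =>
    lab q (h j (grid x, projIcc 0 1 zero_le_one ((k : ℝ) / n j)))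
  refine cyc_vanish q K hq hD (fun j x => lab q (F (Fin.ofNat (K + 1) j) (grid x)))
    (fun j x => lab q (G (Fin.ofNat (K + 1) j) (grid x))) (fun _ _ => lab_le _) (fun _ _ => lab_le _)
    (fun j => h1 _) (fun j => h2 _)
    (fun j t => ∑ k ∈ Finset.range (n (Fin.ofNat (K + 1) j)), hh (lam (Fin.ofNat (K + 1) j) k) (lam (Fin.ofNat (K + 1) j) (k + 1)) (om q) t) ?_
  intro v
  obtain ⟨j, hj⟩ := hδ₀' (grid v) trivial
  refine ⟨j, j.is_le, fun l hl hlen => ?_⟩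
  have hjj : Fin.ofNat (K + 1) (j : ℕ) = j := by
    apply Fin.ext
    simp [Fin.ofNat, Nat.mod_eq_of_lt j.2]
  rw [hjj]
  have hin : ∀ x ∈ l, grid x ∈ U j := fun x hx =>
    hVU j (subset_closure (hj (h4 v x (hl x hx))))
  have hn' : (n j : ℝ) ≠ 0 := by exact_mod_cast (hn0 j).ne'
  rw [← om_contig q (lam j) (fun _ _ => lab_le _) (n j) l hlen]
  · congr 2
    · apply List.map_congr_left
      intro x hx
      simp only [lam]
      rw [div_self hn', projIcc_right, ← hhF j _ (hin x hx)]
      rfl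
    · apply List.map_congr_left
      intro x hx
      simp only [lam]
      rw [Nat.cast_zero, zero_div, projIcc_left, ← hhG j _ (hin x hx)]
      rfl
  · intro k hk
    obtain ⟨i, hi, hi'⟩ := h3 j v (hj (Metric.mem_ball_self hδ₀)) k hk
    exact ⟨i, hi, fun x hx => hi' x (hl x hx)⟩

end FN

namespace FN

open Filter Topology

noncomputable def ps (q : ℕ) (z : Fin q → Circle) : EE q :=
  WithLp.toLp 2 (Fin.snoc (α := fun _ => ℝ) (fun i => -((z i : ℂ).im)) ((q : ℝ) - 1 + ∑ i, (z i : ℂ).re))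

theorem ps_castSucc {q : ℕ} (z : Fin q → Circle) (i : Fin q) : ps q z i.castSucc = -((z i : ℂ).im) := by
  simp [ps]

theorem ps_last {q : ℕ} (z : Fin q → Circle) :
    ps q z (Fin.last q) = (q : ℝ) - 1 + ∑ i, (z i : ℂ).re := by
  simp [ps]

theorem ps_cont (q : ℕ) : Continuous (ps q) := by
  unfold ps
  refine (PiLp.continuous_toLp 2 _).comp (continuous_pi fun i => ?_)
  refine Fin.lastCases ?_ (fun i => ?_) i
  · simp only [Fin.snoc_last]
    fun_prop
  · simp only [Fin.snoc_castSucc]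
    fun_prop

theorem re_ge (z : Circle) : -1 ≤ (z : ℂ).re := by
  have := Complex.abs_re_le_norm (z : ℂ)
  rw [Circle.norm_coe] at this
  exact (abs_le.1 this).1

theorem ps_last_pos {q : ℕ} (z : Fin q → Circle) (i : Fin q) (hi : (z i : ℂ).re = 1) :
    0 < ps q z (Fin.last q) := by
  rw [ps_last, ← Finset.add_sum_erase _ _ (Finset.mem_univ i), hi]
  have : ((Finset.univ.erase i).card : ℝ) * (-1) ≤ ∑ j ∈ Finset.univ.erase i, (z j : ℂ).re := by
    rw [← nsmul_eq_mul]
    exact Finset.card_nsmul_le_sum _ _ _ (fun j _ => re_ge _)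
  rw [Finset.card_erase_of_mem (Finset.mem_univ i), Finset.card_univ, Fintype.card_fin] at this
  have hq : 1 ≤ q := by have := i.2; omega
  rw [Nat.cast_sub hq] at this
  push_cast at this
  linarith

theorem ps_ne {q : ℕ} (hq : 1 ≤ q) (z : Fin q → Circle) : ps q z ≠ 0 := by
  intro h
  have him : ∀ i, (z i : ℂ).im = 0 := fun i => by
    have := ps_castSucc z i
    rw [h] at this
    simpa using this.symm
  have hre : ∀ i, (z i : ℂ).re = 1 ∨ (z i : ℂ).re = -1 := fun i => by
    have := Complex.sq_norm (z i : ℂ)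
    rw [Circle.norm_coe, Complex.normSq_apply, him] at this
    have : ((z i : ℂ).re - 1) * ((z i : ℂ).re + 1) = 0 := by linarith
    rcases mul_eq_zero.1 this with h | h
    · left; linarith
    · right; linarith
  have hl : ps q z (Fin.last q) = 0 := by rw [h]; rfl
  by_cases hex : ∃ i, (z i : ℂ).re = 1
  · obtain ⟨i, hi⟩ := hex
    have := ps_last_pos z i hi
    linarith
  · push Not at hex
    rw [ps_last, Finset.sum_congr rfl (fun i _ => (hre i).resolve_left (hex i))] at hl
    simp at hl
    linarith

theorem gr_im {M : ℕ} (t : ZMod (2 * M)) : ((gr t : Circle) : ℂ).im = Real.sin (Real.pi * t.val / M) := by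
  unfold gr
  rw [Circle.coe_exp, Complex.exp_ofReal_mul_I_im]
  congr 1
  push_cast
  rw [mul_assoc 2, mul_div_mul_left _ _ two_ne_zero]

theorem gr_re {M : ℕ} (t : ZMod (2 * M)) : ((gr t : Circle) : ℂ).re = Real.cos (Real.pi * t.val / M) := by
  unfold gr
  rw [Circle.coe_exp, Complex.exp_ofReal_mul_I_re]
  congr 1
  push_cast
  rw [mul_assoc 2, mul_div_mul_left _ _ two_ne_zero]

theorem neg_iff {M : ℕ} [NeZero (2 * M)] (t : ZMod (2 * M)) :
    0 < ((gr t : Circle) : ℂ).im ↔ 0 < t.val ∧ t.val < M := by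
  have hM : (0 : ℝ) < M := by
    have := NeZero.ne (2 * M)
    exact_mod_cast (by omega : 0 < M)
  have hv := ZMod.val_lt t
  rw [gr_im]
  constructor
  · intro h
    constructor
    · by_contra hc
      have : t.val = 0 := by omega
      rw [this] at h
      simp at h
    · by_contra hc
      have h1 : (M : ℝ) ≤ t.val := by exact_mod_cast (by omega : M ≤ t.val)
      have h2 : (t.val : ℝ) ≤ 2 * M := by exact_mod_cast hv.le
      have : 0 ≤ Real.sin (Real.pi * t.val / M - Real.pi) := by
        apply Real.sin_nonneg_of_nonneg_of_le_pi
        · rw [sub_nonneg, le_div_iff₀ hM]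
          exact mul_le_mul_of_nonneg_left h1 Real.pi_pos.le
        · rw [sub_le_iff_le_add, div_le_iff₀ hM]
          nlinarith [Real.pi_pos]
      rw [Real.sin_sub_pi] at this
      linarith
  · rintro ⟨h1, h2⟩
    have h1' : (0 : ℝ) < t.val := by exact_mod_cast h1
    have h2' : (t.val : ℝ) < M := by exact_mod_cast h2
    apply Real.sin_pos_of_pos_of_lt_pi
    · have := Real.pi_pos
      positivity
    · rw [div_lt_iff₀ hM]
      exact mul_lt_mul_of_pos_left h2' Real.pi_pos

theorem val_succ {L : ℕ} [NeZero L] (t : ZMod L) :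
    (t + 1).val = t.val + 1 ∧ t.val + 1 < L ∨ (t + 1).val = 0 ∧ t.val + 1 = L := by
  rcases (Nat.succ_le_of_lt (ZMod.val_lt t)).lt_or_eq with h | h
  · left
    have h1 : (1 : ZMod L).val = 1 := ZMod.val_one'' (by omega)
    rw [ZMod.val_add_of_lt (by rw [h1]; exact h), h1]
    exact ⟨rfl, h⟩
  · right
    have h1 : t + 1 = 0 := by
      have : ((t.val + 1 : ℕ) : ZMod L) = ((L : ℕ) : ZMod L) :=
        congrArg (Nat.cast : ℕ → ZMod L) h
      simpa using this
    rw [h1, ZMod.val_zero]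
    exact ⟨rfl, h⟩

def blkC {N q : ℕ} (b : Fin N) (z : Fin (N * q) → Circle) : Fin q → Circle :=
  fun i => z (finProdFinEquiv (b, i))

theorem no_homotopy {q K : ℕ} (hq : 1 ≤ q) (hqe : Even q)
    (F G : Fin (K + 1) → (Fin ((K + 1) * q) → Circle) → EE q)
    (hF : ∀ j, Continuous (F j)) (hG : ∀ j, Continuous (G j))
    (hF0 : ∀ j x, F j x ≠ 0) (hG0 : ∀ j x, G j x ≠ 0)
    (U : Fin (K + 1) → Set (Fin ((K + 1) * q) → Circle)) (hU : ∀ j, IsOpen (U j))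
    (hcov : (⋃ j, U j) = univ)
    (h : Fin (K + 1) → (Fin ((K + 1) * q) → Circle) × I → EE q)
    (hh1 : ∀ j, ContinuousOn (h j) (U j ×ˢ univ))
    (hh0 : ∀ j, ∀ x ∈ U j, ∀ t, h j (x, t) ≠ 0)
    (hhF : ∀ j, ∀ x ∈ U j, h j (x, 1) = F j x) (hhG : ∀ j, ∀ x ∈ U j, h j (x, 0) = G j x)
    (ef eg : Fin (K + 1) → Fin (K + 1)) (hne : ∀ j, ef j ≠ eg j)
    (hf : ∀ j x, lab q (F j x) = lab q (ps q (blkC (ef j) x)))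
    (GG : Fin (K + 1) → (Fin q → Circle) → EE q)
    (hg : ∀ j x, lab q (G j x) = lab q (GG j (blkC (eg j) x)))
    (n0 : ℕ)
    (hch : ∀ e : Fin (K + 1) → Fin (K + 1), Function.Bijective e →
      (∀ j, e j = ef j ∨ e j = eg j) → (∀ j, e j = eg j → GG j = ps q) ∧
        (Finset.univ.filter (fun j => e j = eg j)).card = n0)
    (e0 : Fin (K + 1) → Fin (K + 1)) (he0 : Function.Bijective e0)
    (he0' : ∀ j, e0 j = ef j ∨ e0 j = eg j) : False := by
  have h2M : Tendsto (fun M : ℕ => 2 * M) atTop atTop :=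
    tendsto_atTop_mono (fun M => by simp only [id]; omega) tendsto_id
  have ev := h2M.eventually (top_vanish q K hq rfl F G hF hG hF0 hG0 U hU hcov h hh1 hh0 hhF hhG)
  have hcos : ∀ᶠ M : ℕ in atTop, (q : ℝ) - 1 < q * Real.cos (Real.pi / M) := by
    have : Tendsto (fun M : ℕ => (q : ℝ) * Real.cos (Real.pi / M)) atTop (𝓝 (q * Real.cos 0)) :=
      ((Real.continuous_cos.tendsto 0).comp (tendsto_const_div_atTop_nhds_zero_nat _)).const_mul _
    rw [Real.cos_zero, mul_one] at this
    exact this.eventually_const_lt (by linarith)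
  obtain ⟨M, hM1, hM2, hM⟩ := (ev.and (hcos.and (eventually_ge_atTop 2))).exists
  have : NeZero (2 * M) := ⟨by omega⟩
  have hMp : (0 : ℝ) < M := by exact_mod_cast (by omega : 0 < M)
  have ht0 : ((M - 1 : ℕ) : ZMod (2 * M)).val = M - 1 := ZMod.val_natCast_of_lt (by omega)
  refine eval_ne (L := 2 * M) hq hqe (fun t => 0 < ((gr t : Circle) : ℂ).im)
    (fun t => lab q (ps q (fun i => gr (t i)))) ((M - 1 : ℕ) : ZMod (2 * M)) (fun _ => lab_le _)
    ?_ ?_ ?_ ?_ ?_ ?_ ?_ (fun j x => lab q (F (Fin.ofNat (K + 1) j) (grid x)))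
    (fun j x => lab q (G (Fin.ofNat (K + 1) j) (grid x))) ef eg hne ?_
    (fun j t => lab q (GG j (fun i => gr (t i)))) ?_ n0 ?_ e0 he0 he0' hM1
  · intro t _ i hi
    have := lab_lt _ i (by omega) hi
    change 0 ≤ ps q (fun i => gr (t i)) i.castSucc at this
    rw [ps_castSucc] at this
    linarith
  · intro t _ i hi
    obtain ⟨h1, h2⟩ := lab_mem _ i hi.symm
    change ps q (fun i => gr (t i)) i.castSucc < 0 at h2
    rw [ps_castSucc] at h2
    linarith
  · intro t ht i h1 h2
    have : (t i).val = 0 := by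
      rw [neg_iff] at h1 h2
      have := val_succ (t i)
      omega
    apply ht
    rw [lab_zero]
    refine (ps_last_pos _ i ?_).le
    rw [gr_re, this]
    simp
  · intro t h1 h2
    rw [neg_iff] at h1 h2
    have := val_succ t
    apply ZMod.val_injective
    rw [ht0]
    omega
  · rw [neg_iff, ht0]
    omega
  · rw [neg_iff]
    have := val_succ ((M - 1 : ℕ) : ZMod (2 * M))
    rw [ht0] at this
    omega
  · intro t ht h0
    rw [lab_zero, ps_last] at h0
    have : ∀ i, ((gr (t i) : Circle) : ℂ).re ≤ - Real.cos (Real.pi / M) := by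
      intro i
      rw [gr_re]
      rcases ht i with h | h
      · rw [h, ht0, Nat.cast_sub (by omega)]
        have : Real.pi * ((M : ℝ) - (1 : ℕ)) / M = Real.pi - Real.pi / M := by
          field_simp
          push_cast
          ring
        rw [this, Real.cos_pi_sub]
      · have hv := val_succ ((M - 1 : ℕ) : ZMod (2 * M))
        rw [ht0, ← h] at hv
        have : (t i).val = M := by omega
        rw [this, mul_div_assoc, div_self hMp.ne', mul_one, Real.cos_pi]
        linarith [Real.cos_le_one (Real.pi / M)]
    have := Finset.sum_le_card_nsmul Finset.univ _ _ (fun i _ => this i)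
    simp at this
    linarith
  · intro j x
    have : Fin.ofNat (K + 1) (j : ℕ) = j := Fin.ext (by simp [Fin.ofNat, Nat.mod_eq_of_lt j.2])
    simp only [this]
    exact hf j _
  · intro j x
    have : Fin.ofNat (K + 1) (j : ℕ) = j := Fin.ext (by simp [Fin.ofNat, Nat.mod_eq_of_lt j.2])
    simp only [this]
    exact hg j _
  · intro e he hee
    obtain ⟨h1, h2⟩ := hch e he hee
    refine ⟨fun j hj => ?_, h2⟩
    rw [h1 j hj]

end FN

namespace FN

theorem no_homotopy' {q K : ℕ} {R : Type} [Fintype R] [DecidableEq R] (φ : R ≃ Fin (K + 1))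
    (hq : 1 ≤ q) (hqe : Even q)
    (F G : R → (Fin ((K + 1) * q) → Circle) → EE q)
    (hF : ∀ j, Continuous (F j)) (hG : ∀ j, Continuous (G j))
    (hF0 : ∀ j x, F j x ≠ 0) (hG0 : ∀ j x, G j x ≠ 0)
    (U : R → Set (Fin ((K + 1) * q) → Circle)) (hU : ∀ j, IsOpen (U j))
    (hcov : (⋃ j, U j) = univ)
    (hex : ∀ j, ∃ h : (Fin ((K + 1) * q) → Circle) × I → EE q,
      ContinuousOn h (U j ×ˢ univ) ∧ (∀ x ∈ U j, ∀ t, h (x, t) ≠ 0) ∧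
      (∀ x ∈ U j, h (x, 1) = F j x) ∧ (∀ x ∈ U j, h (x, 0) = G j x))
    (ef eg : R → R) (hne : ∀ j, ef j ≠ eg j)
    (hf : ∀ j x, lab q (F j x) = lab q (ps q (blkC (φ (ef j)) x)))
    (GG : R → (Fin q → Circle) → EE q)
    (hg : ∀ j x, lab q (G j x) = lab q (GG j (blkC (φ (eg j)) x)))
    (n0 : ℕ)
    (hch : ∀ e : R → R, Function.Bijective e →
      (∀ j, e j = ef j ∨ e j = eg j) → (∀ j, e j = eg j → GG j = ps q) ∧
        (Finset.univ.filter (fun j => e j = eg j)).card = n0)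
    (e0 : R → R) (he0 : Function.Bijective e0)
    (he0' : ∀ j, e0 j = ef j ∨ e0 j = eg j) : False := by
  choose h hh1 hh0 hhF hhG using hex
  refine no_homotopy hq hqe (fun j => F (φ.symm j)) (fun j => G (φ.symm j)) (fun j => hF _)
    (fun j => hG _) (fun j => hF0 _) (fun j => hG0 _) (fun j => U (φ.symm j)) (fun j => hU _) ?_
    (fun j => h (φ.symm j)) (fun j => hh1 _) (fun j => hh0 _) (fun j => hhF _) (fun j => hhG _)
    (fun j => φ (ef (φ.symm j))) (fun j => φ (eg (φ.symm j))) (fun j hj => hne _ (φ.injective hj))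
    (fun j x => hf _ _) (fun j => GG (φ.symm j)) (fun j x => hg _ _) n0 ?_
    (fun j => φ (e0 (φ.symm j))) (φ.bijective.comp (he0.comp φ.symm.bijective)) ?_
  · rw [← hcov]
    exact φ.symm.surjective.iUnion_comp (fun j => U j)
  · intro e he hee
    obtain ⟨h1, h2⟩ := hch (fun j => φ.symm (e (φ j))) (φ.symm.bijective.comp (he.comp φ.bijective))
      (fun j => by simpa [Equiv.symm_apply_eq] using hee (φ j))
    refine ⟨fun j hj => h1 _ (by simp [hj]), ?_⟩
    rw [← h2]
    symm
    apply Finset.card_bij (fun j _ => φ j)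
    · intro j hj
      simpa [Equiv.symm_apply_eq] using hj
    · intro a _ b _ hab
      exact φ.injective hab
    · intro j hj
      exact ⟨φ.symm j, by simpa [Equiv.symm_apply_eq] using hj, by simp⟩
  · intro j
    rcases he0' (φ.symm j) with h | h <;> simp [h]

/-- pointwise section -/
theorem sec_lift {E : Type u} {B : Type v} [TopologicalSpace E] [TopologicalSpace B]
    (p : E → B) (r : ℕ) (U : Set (ParamSpace p r))
    (s : C(U, FibConstPath p)) (hs : ∀ x : U, paramEval p r (s x) = (x : ParamSpace p r)) (b0 : Fin r) :
    ∃ A : ParamSpace p r × I → E, ContinuousOn A (U ×ˢ univ) ∧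
      ∀ y ∈ U, ∀ b, A (y, schedule r b) = y.1 b := by
  classical
  refine ⟨fun y => if hy : y.1 ∈ U then (s ⟨y.1, hy⟩).1 y.2 else y.1.1 b0, ?_, ?_⟩
  · rw [continuousOn_iff_continuous_restrict]
    have : Continuous fun y : (U ×ˢ (univ : Set I) : Set (ParamSpace p r × I)) =>
        (s ⟨y.1.1, y.2.1⟩).1 y.1.2 := by
      fun_prop
    refine this.congr ?_
    rintro ⟨⟨y, t⟩, hy⟩
    simp [restrict, hy.1]
  · intro y hy b
    simp only [hy, dite_true]
    have := hs ⟨y, hy⟩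
    exact congrFun (congrArg Subtype.val this) b

noncomputable def xs {q : ℕ} (z : Fin q → Circle) : EE q := ‖ps q z‖⁻¹ • ps q z

theorem xs_cont {q : ℕ} (hq : 1 ≤ q) : Continuous (xs (q := q)) := by
  unfold xs
  exact ((ps_cont q).norm.inv₀ (fun z => norm_ne_zero_iff.2 (ps_ne hq z))).smul (ps_cont q)

theorem xs_norm {q : ℕ} (hq : 1 ≤ q) (z : Fin q → Circle) : ‖xs z‖ = 1 := by
  unfold xs
  rw [norm_smul, norm_inv, norm_norm, inv_mul_cancel₀ (norm_ne_zero_iff.2 (ps_ne hq z))]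

theorem xs_lab {q : ℕ} (hq : 1 ≤ q) (z : Fin q → Circle) (c : ℝ) (hc : 0 < c) :
    lab q (c • xs z) = lab q (ps q z) := by
  unfold xs
  have := norm_pos_iff.2 (ps_ne hq z)
  rw [smul_smul, lab_smul _ _ (by positivity)]

theorem xs_lab_neg {q : ℕ} (hq : 1 ≤ q) (z : Fin q → Circle) :
    lab q (-xs z) = lab q (-ps q z) := by
  unfold xs
  have := norm_pos_iff.2 (ps_ne hq z)
  rw [← smul_neg, lab_smul _ _ (by positivity)]

theorem blkC_cont {N q : ℕ} (b : Fin N) : Continuous (blkC (q := q) b) := by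
  unfold blkC
  fun_prop

abbrev Row (m n r : ℕ) := (Fin (n + 1) × Fin (r + 2)) ⊕ Fin m

noncomputable def sc {n r : ℕ} (i : Fin (n + 1)) (a : Fin (r + 2)) : ℝ :=
  if i = 0 ∧ a = 0 then 1 else 3 + (i : ℕ)

noncomputable def oc {m : ℕ} (k : Fin m) : ℝ := ((k : ℕ) + 1) / (2 * (m + 1))

theorem oc_pos {m : ℕ} (k : Fin m) : 0 < oc k := by unfold oc; positivity

theorem oc_le {m : ℕ} (k : Fin m) : oc k ≤ 1 / 2 := by
  unfold oc
  rw [div_le_div_iff₀ (by positivity) (by positivity)]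
  have : ((k : ℕ) : ℝ) ≤ m := by exact_mod_cast k.2.le
  linarith

theorem oc_inj {m : ℕ} (k k' : Fin m) (h : oc k = oc k') : k = k' := by
  unfold oc at h
  rw [div_left_inj' (by positivity)] at h
  exact Fin.ext (by exact_mod_cast (add_right_cancel h))

theorem sc_inj {n r : ℕ} (i i' : Fin (n + 1)) (a : Fin (r + 2)) (h : sc i a = sc i' a) : i = i' := by
  unfold sc at h
  have h1 : (0 : ℝ) ≤ (i : ℕ) := by positivity
  have h2 : (0 : ℝ) ≤ (i' : ℕ) := by positivity
  split_ifs at h with ha hb hb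
  · exact ha.1.trans hb.1.symm
  · linarith
  · linarith
  · exact Fin.ext (by exact_mod_cast (add_left_cancel h))

theorem sc_ge {n r : ℕ} (i : Fin (n + 1)) (a : Fin (r + 2)) : 1 ≤ sc i a := by
  unfold sc
  have h1 : (0 : ℝ) ≤ (i : ℕ) := by positivity
  split_ifs <;> linarith

variable {q m n r : ℕ}

noncomputable def zpt (x : Row m n r → EE q) (i : Fin (n + 1)) (a : Fin (r + 2)) : EE q :=
  sc i a • x (Sum.inl (i, a))

noncomputable def opt (x : Row m n r → EE q) (k : Fin (m + 1)) : EE q :=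
  Fin.cases (motive := fun _ => EE q) 0 (fun k => x (Sum.inl (0, 0)) + oc k • x (Sum.inr k)) k

noncomputable def conf (x : Row m n r → EE q) (a : Fin (r + 2)) : Fin (m + 1 + (n + 1)) → EE q :=
  Fin.addCases (motive := fun _ => EE q) (opt x) (fun i => zpt x i a)

theorem zpt_norm (x : Row m n r → EE q) (hx : ∀ ρ, ‖x ρ‖ = 1) (i : Fin (n + 1)) (a : Fin (r + 2)) :
    ‖zpt x i a‖ = sc i a := by
  unfold zpt
  rw [norm_smul, hx, mul_one, Real.norm_of_nonneg (by linarith [sc_ge i a])]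

theorem ocx_norm (x : Row m n r → EE q) (hx : ∀ ρ, ‖x ρ‖ = 1) (k : Fin m) :
    ‖oc k • x (Sum.inr k)‖ = oc k := by
  rw [norm_smul, hx, mul_one, Real.norm_of_nonneg (oc_pos k).le]

theorem opt_norm_le (x : Row m n r → EE q) (hx : ∀ ρ, ‖x ρ‖ = 1) (k : Fin (m + 1)) :
    ‖opt x k‖ ≤ 3 / 2 := by
  refine Fin.cases ?_ (fun k => ?_) k
  · simp [opt]
    norm_num
  · simp only [opt, Fin.cases_succ]
    refine (norm_add_le _ _).trans ?_
    rw [ocx_norm x hx, hx]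
    linarith [oc_le k]

theorem opt_succ_norm_ge (x : Row m n r → EE q) (hx : ∀ ρ, ‖x ρ‖ = 1) (k : Fin m) :
    1 / 2 ≤ ‖opt x k.succ‖ := by
  simp only [opt, Fin.cases_succ]
  have := norm_sub_le (x (Sum.inl (0, 0)) + oc k • x (Sum.inr k)) (oc k • x (Sum.inr k))
  rw [add_sub_cancel_right, ocx_norm x hx, hx] at this
  linarith [oc_le k]

theorem opt_ne_zpt (x : Row m n r → EE q) (hx : ∀ ρ, ‖x ρ‖ = 1) (k : Fin (m + 1))
    (i : Fin (n + 1)) (a : Fin (r + 2)) : opt x k ≠ zpt x i a := by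
  intro h
  have hn := zpt_norm x hx i a
  have hn2 := opt_norm_le x hx k
  rw [h, hn] at hn2
  have h1 : (0 : ℝ) ≤ (i : ℕ) := by positivity
  by_cases hc : i = 0 ∧ a = 0
  · obtain ⟨rfl, rfl⟩ := hc
    revert h
    refine Fin.cases (fun h => ?_) (fun k h => ?_) k
    · rw [← h] at hn
      simp [opt, sc] at hn
    · simp only [opt, Fin.cases_succ, zpt, sc, and_self, if_true, one_smul, add_eq_left] at h
      have := ocx_norm x hx k
      rw [h, norm_zero] at this
      linarith [oc_pos k]
  · simp only [sc, hc, if_false] at hn2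
    linarith

theorem conf_inj (x : Row m n r → EE q) (hx : ∀ ρ, ‖x ρ‖ = 1) (a : Fin (r + 2)) :
    Function.Injective (conf x a) := by
  intro s t
  refine Fin.addCases (fun s => ?_) (fun s => ?_) s <;> refine Fin.addCases (fun t => ?_) (fun t => ?_) t <;>
    simp only [conf, Fin.addCases_left, Fin.addCases_right] <;> intro h
  · congr 1
    revert h
    refine Fin.cases ?_ (fun s => ?_) s <;> refine Fin.cases ?_ (fun t => ?_) t <;> intro h
    · rfl
    · have := opt_succ_norm_ge x hx t
      rw [← h] at this
      simp [opt] at this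
      norm_num at this
    · have := opt_succ_norm_ge x hx s
      rw [h] at this
      simp [opt] at this
      norm_num at this
    · simp only [opt, Fin.cases_succ, add_right_inj] at h
      have h1 := congrArg norm h
      rw [ocx_norm x hx, ocx_norm x hx] at h1
      rw [oc_inj _ _ h1]
  · exact absurd h (opt_ne_zpt x hx _ _ _)
  · exact absurd h.symm (opt_ne_zpt x hx _ _ _)
  · congr 1
    have h1 := congrArg norm h
    rw [zpt_norm x hx, zpt_norm x hx] at h1
    exact sc_inj _ _ _ h1

def ef (ρ : Row m n r) : Row m n r :=
  match ρ with
  | Sum.inl (i, a) => Sum.inl (i, if a = 0 then 1 else a)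
  | Sum.inr k => Sum.inr k

def eg (ρ : Row m n r) : Row m n r :=
  match ρ with
  | Sum.inl (i, _) => Sum.inl (i, 0)
  | Sum.inr _ => Sum.inl (0, 1)

theorem choice_inr (e : Row m n r → Row m n r) (he : Function.Bijective e)
    (hee : ∀ j, e j = ef j ∨ e j = eg j) (k : Fin m) : e (Sum.inr k) = Sum.inr k := by
  obtain ⟨ρ, hρ⟩ := he.2 (Sum.inr k)
  rcases ρ with ⟨i, a⟩ | k'
  · rcases hee (Sum.inl (i, a)) with h | h <;> rw [h] at hρ <;> simp [ef, eg] at hρ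
  · rcases hee (Sum.inr k') with h | h
    · have : k' = k := by rw [h] at hρ; simpa [ef] using hρ
      rw [← this, hρ, this]
    · rw [h] at hρ; simp [eg] at hρ

theorem choice_card (e : Row m n r → Row m n r) (he : Function.Bijective e)
    (hee : ∀ j, e j = ef j ∨ e j = eg j) :
    (Finset.univ.filter (fun j => e j = eg j)).card = n + 1 := by
  rw [← Finset.card_image_of_injective _ he.1]
  have : (Finset.univ.filter (fun j => e j = eg j)).image e =
      (Finset.univ : Finset (Fin (n + 1))).image (fun i => (Sum.inl (i, 0) : Row m n r)) := by
    ext ρ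
    simp only [Finset.mem_image, Finset.mem_filter, Finset.mem_univ, true_and]
    constructor
    · rintro ⟨j, hj, rfl⟩
      rcases j with ⟨i, a⟩ | k
      · exact ⟨i, by rw [hj]; rfl⟩
      · rw [choice_inr e he hee] at hj
        simp [eg] at hj
    · rintro ⟨i, rfl⟩
      obtain ⟨j, hj⟩ := he.2 (Sum.inl (i, 0))
      refine ⟨j, ?_, hj⟩
      rcases hee j with h | h
      · rw [hj] at h
        rcases j with ⟨i', a⟩ | k
        · simp only [ef, Sum.inl.injEq, Prod.mk.injEq] at h
          split_ifs at h with ha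
          · simp at h
          · exact absurd h.2.symm ha
        · simp [ef] at h
      · exact h
  rw [this, Finset.card_image_of_injective]
  · simp
  · intro a b h
    simpa using h

end FN

namespace FN

variable {q m n r : ℕ}

theorem csm {X : Type*} [TopologicalSpace X] (c : ℝ) {f : X → EE q} (hf : Continuous f) :
    Continuous (fun z => c • f z) := hf.const_smul c

theorem conf_cont {X : Type*} [TopologicalSpace X] (x : X → Row m n r → EE q) (hx : ∀ ρ, Continuous fun z => x z ρ)
    (a : Fin (r + 2)) : Continuous (fun z => conf (x z) a) := by
  refine continuous_pi fun s => ?_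
  refine Fin.addCases (fun s => ?_) (fun s => ?_) s <;>
    simp only [conf, Fin.addCases_left, Fin.addCases_right]
  · refine Fin.cases ?_ (fun s => ?_) s
    · simp only [opt, Fin.cases_zero]
      exact continuous_const
    · simp only [opt, Fin.cases_succ]
      exact (hx _).add (csm _ (hx (Sum.inr s)))
  · exact csm _ (hx (Sum.inl (s, a)))

noncomputable def Phi (x : Row m n r → EE q) (hx : ∀ ρ, ‖x ρ‖ = 1) :
    ParamSpace (fnProj (q + 1) (m + 1) (n + 1)) (r + 2) :=
  ⟨fun a => ⟨conf x a, conf_inj x hx a⟩, fun a b => by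
    apply Subtype.ext
    funext s
    simp [fnProj, conf]⟩

noncomputable def tau (b b' : I) (t : I) : I :=
  projIcc 0 1 zero_le_one ((1 - (t : ℝ)) * b + t * b')

theorem tau_zero (b b' : I) : tau b b' 0 = b := by simp [tau]

theorem tau_one (b b' : I) : tau b b' 1 = b' := by simp [tau]

theorem tau_cont (b b' : I) : Continuous (tau b b') := by
  unfold tau
  exact continuous_projIcc.comp (by fun_prop)

theorem lower (hq : 1 ≤ q) (hqe : Even q) (k : ℕ) (hk : k + 1 ≤ (n + 1) * (r + 2) + m)
    (h : HasSecatLE (paramEval (fnProj (q + 1) (m + 1) (n + 1)) (r + 2)) k) : False := by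
  classical
  obtain ⟨U, hUo, hUc, hUs⟩ := h
  have hA : ∀ i, ∃ A : ParamSpace (fnProj (q + 1) (m + 1) (n + 1)) (r + 2) × I → Conf (q + 1) (m + 1 + (n + 1)),
      ContinuousOn A (U i ×ˢ univ) ∧ ∀ y ∈ U i, ∀ b, A (y, schedule (r + 2) b) = y.1 b := fun i => by
    obtain ⟨s, hs⟩ := hUs i
    exact sec_lift _ _ _ s hs 0
  choose A hAc hAs using hA
  have hcard : Fintype.card (Row m n r) = (n + 1) * (r + 2) + m := by simp
  obtain ⟨K, hK⟩ : ∃ K, (n + 1) * (r + 2) + m = K + 1 := ⟨_, (Nat.succ_pred (by positivity)).symm⟩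
  let φ : Row m n r ≃ Fin (K + 1) := Fintype.equivFinOfCardEq (hcard.trans hK)
  obtain ⟨g, hg⟩ : ∃ g : Row m n r → Fin (k + 1), Function.Surjective g := by
    obtain ⟨f⟩ := Function.Embedding.nonempty_of_card_le (α := Fin (k + 1)) (β := Row m n r) (by
      rw [hcard, Fintype.card_fin]; exact hk)
    exact ⟨Function.invFun f, Function.invFun_surjective f.injective⟩
  let x : (Fin ((K + 1) * q) → Circle) → Row m n r → EE q := fun z ρ => xs (blkC (φ ρ) z)
  have hx : ∀ z ρ, ‖x z ρ‖ = 1 := fun z ρ => xs_norm hq _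
  have hxc : ∀ ρ, Continuous fun z => x z ρ := fun ρ => (xs_cont hq).comp (blkC_cont _)
  let P := fun z => Phi (x z) (hx z)
  have hP : Continuous P := by
    refine Continuous.subtype_mk (continuous_pi fun a => ?_) _
    exact Continuous.subtype_mk (conf_cont x hxc a) _
  let ab : Fin (r + 2) → Fin (r + 2) := fun a => if a = 0 then 1 else a
  let F : Row m n r → (Fin ((K + 1) * q) → Circle) → EE q := fun ρ z =>
    match ρ with
    | Sum.inl (i, a) => zpt (x z) i (ab a)
    | Sum.inr k => oc k • x z (Sum.inr k)
  let G : Row m n r → (Fin ((K + 1) * q) → Circle) → EE q := fun ρ z =>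
    match ρ with
    | Sum.inl (i, a) => zpt (x z) i 0
    | Sum.inr k => - x z (Sum.inl (0, 1))
  have hF : ∀ ρ, Continuous (F ρ) := by
    rintro (⟨i, a⟩ | k)
    · exact csm _ (hxc (Sum.inl (i, ab a)))
    · exact csm _ (hxc (Sum.inr k))
  have hG : ∀ ρ, Continuous (G ρ) := by
    rintro (⟨i, a⟩ | k)
    · exact csm _ (hxc (Sum.inl (i, 0)))
    · exact (hxc _).neg
  have hzne : ∀ z i a, zpt (x z) i a ≠ 0 := fun z i a h0 => by
    have := zpt_norm (x z) (hx z) i a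
    rw [h0, norm_zero] at this
    linarith [sc_ge i a]
  have hxne : ∀ z ρ, x z ρ ≠ 0 := fun z ρ h0 => by
    have := hx z ρ
    rw [h0, norm_zero] at this
    linarith
  have key : ∀ ρ (s t : Fin (m + 1 + (n + 1))) (b b' : Fin (r + 2)), s ≠ t →
      ∃ D : (Fin ((K + 1) * q) → Circle) × I → EE q,
      ContinuousOn D ((P ⁻¹' U (g ρ)) ×ˢ univ) ∧ (∀ y, D y ≠ 0) ∧
      (∀ z ∈ P ⁻¹' U (g ρ), D (z, 0) = conf (x z) b s - conf (x z) b t) ∧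
      (∀ z ∈ P ⁻¹' U (g ρ), D (z, 1) = conf (x z) b' s - conf (x z) b' t) := by
    intro ρ s t b b' hst
    refine ⟨fun y =>
        (A (g ρ) (P y.1, tau (schedule _ b) (schedule _ b') y.2)).1 s -
        (A (g ρ) (P y.1, tau (schedule _ b) (schedule _ b') y.2)).1 t, ?_, ?_, ?_, ?_⟩
    · have h1 : ContinuousOn (fun y : (Fin ((K + 1) * q) → Circle) × I =>
          A (g ρ) (P y.1, tau (schedule _ b) (schedule _ b') y.2)) ((P ⁻¹' U (g ρ)) ×ˢ univ) := by
        refine (hAc (g ρ)).comp (Continuous.continuousOn ?_) ?_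
        · exact (hP.comp continuous_fst).prodMk ((tau_cont _ _).comp continuous_snd)
        · rintro ⟨z, t⟩ ⟨hz, -⟩
          exact ⟨hz, trivial⟩
      have h2 : ∀ s : Fin (m + 1 + (n + 1)), Continuous fun c : Conf (q + 1) (m + 1 + (n + 1)) => c.1 s := by
        intro s
        exact (continuous_apply s).comp continuous_subtype_val
      exact ((h2 s).comp_continuousOn h1).sub ((h2 t).comp_continuousOn h1)
    · intro y hy
      exact hst ((A (g ρ) _).2 (sub_eq_zero.1 hy))
    · intro z hz
      simp only []
      rw [tau_zero, hAs _ _ hz]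
      rfl
    · intro z hz
      simp only []
      rw [tau_one, hAs _ _ hz]
      rfl
  refine no_homotopy' φ hq hqe F G hF hG ?_ ?_ (fun ρ => P ⁻¹' U (g ρ)) (fun ρ => (hUo _).preimage hP) ?_
    ?_ ef eg ?_ ?_
    (fun ρ => match ρ with
      | Sum.inl _ => ps q
      | Sum.inr _ => fun z => - ps q z) ?_ (n + 1) ?_ id Function.bijective_id ?_
  · rintro (⟨i, a⟩ | k) z
    · exact hzne _ _ _
    · exact smul_ne_zero (oc_pos k).ne' (hxne _ _)
  · rintro (⟨i, a⟩ | k) z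
    · exact hzne _ _ _
    · exact neg_ne_zero.2 (hxne _ _)
  · rw [hg.iUnion_comp (fun i => P ⁻¹' U i), ← preimage_iUnion, hUc, preimage_univ]
  · rintro (⟨i, a⟩ | k)
    · obtain ⟨D, h1, h2, h3, h4⟩ := key (Sum.inl (i, a)) (Fin.natAdd (m + 1) i) (Fin.castAdd (n + 1) 0) 0 (ab a)
        (by intro h; have := congrArg Fin.val h; simp at this)
      refine ⟨_, h1, fun z hz t => h2 _, fun z hz => (h4 z hz).trans ?_, fun z hz => (h3 z hz).trans ?_⟩
      · simp [conf, opt, F]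
      · simp [conf, opt, G]
    · obtain ⟨D, h1, h2, h3, h4⟩ := key (Sum.inr k) (Fin.castAdd (n + 1) k.succ) (Fin.natAdd (m + 1) 0) 1 0
        (by intro h; have := congrArg Fin.val h; simp at this; omega)
      let c1 : I → I := fun t => projIcc 0 1 zero_le_one (2 * (t : ℝ) - 1)
      let c2 : I → ℝ := fun t => 1 - min (2 * (t : ℝ)) 1
      have hc1 : Continuous c1 := continuous_projIcc.comp (by fun_prop)
      have hc2 : Continuous c2 := by
        simp only [c2]
        fun_prop
      let E : (Fin ((K + 1) * q) → Circle) × I → EE q := fun y =>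
        c2 y.2 • ((2 : ℝ) • x y.1 (Sum.inl (0, 1)) - opt (x y.1) k.succ)
      have hE : Continuous E := by
        refine (hc2.comp continuous_snd).smul ?_
        refine Continuous.sub (csm _ ((hxc (Sum.inl (0, 1))).comp continuous_fst)) ?_
        simp only [opt, Fin.cases_succ]
        exact ((hxc _).comp continuous_fst).add (csm _ ((hxc (Sum.inr k)).comp continuous_fst))
      have hz01 : ∀ z, zpt (x z) 0 1 = (3 : ℝ) • x z (Sum.inl (0, 1)) := fun z => by
        simp [zpt, sc]
      refine ⟨_, (h1.comp (f := fun y : (Fin ((K + 1) * q) → Circle) × I => (y.1, c1 y.2))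
        (Continuous.continuousOn (continuous_fst.prodMk (hc1.comp continuous_snd))) ?_).add hE.continuousOn, ?_, ?_, ?_⟩
      · rintro ⟨z, t⟩ ⟨hz, -⟩
        exact ⟨hz, trivial⟩
      · intro z hz t
        by_cases ht : (t : ℝ) ≤ 1 / 2
        · have e1 : c1 t = 0 := projIcc_of_le_left _ (by linarith)
          simp only [Function.comp_apply, e1, Pi.add_apply]
          rw [h3 z hz]
          simp only [conf, Fin.addCases_left, Fin.addCases_right, E, c2, hz01]
          rw [min_eq_left (by linarith)]
          have ht0 := t.2.1
          intro h0
          have h5 : (2 * (t : ℝ)) • opt (x z) k.succ = (1 + 4 * (t : ℝ)) • x z (Sum.inl (0, 1)) := by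
            rw [← sub_eq_zero, ← h0]
            module
          have h6 := congrArg norm h5
          rw [norm_smul, norm_smul, hx, Real.norm_of_nonneg (by linarith), Real.norm_of_nonneg (by linarith)] at h6
          have := opt_norm_le (x z) (hx z) k.succ
          nlinarith
        · have e1 : c2 t = 0 := by
            simp only [c2]
            rw [min_eq_right (by linarith), sub_self]
          simp only [Pi.add_apply, E, e1, zero_smul, add_zero]
          exact h2 _
      · intro z hz
        have e1 : c1 1 = 1 := projIcc_of_right_le _ (by norm_num)
        have e2 : c2 1 = 0 := by norm_num [c2]
        simp only [Function.comp_apply, Pi.add_apply, E, e1, e2, zero_smul, add_zero]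
        rw [h4 z hz]
        simp [conf, opt, F, zpt, sc]
      · intro z hz
        have e1 : c1 0 = 0 := projIcc_of_le_left _ (by norm_num)
        have e2 : c2 0 = 1 := by norm_num [c2]
        simp only [Function.comp_apply, Pi.add_apply, E, e1, e2, one_smul]
        rw [h3 z hz]
        simp only [conf, Fin.addCases_left, Fin.addCases_right, hz01, G]
        module
  · rintro (⟨i, a⟩ | k)
    · simp only [ef, eg, ne_eq, Sum.inl.injEq, Prod.mk.injEq, true_and]
      split_ifs with h
      · simp
      · exact h
    · simp [ef, eg]
  · rintro (⟨i, a⟩ | k) z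
    · exact xs_lab hq _ _ (by linarith [sc_ge i (ab a)])
    · exact xs_lab hq _ _ (oc_pos k)
  · rintro (⟨i, a⟩ | k) z
    · exact xs_lab hq _ _ (by linarith [sc_ge i (0 : Fin (r + 2))])
    · exact xs_lab_neg hq _
  · intro e he hee
    refine ⟨?_, choice_card e he hee⟩
    rintro (⟨i, a⟩ | k) h
    · rfl
    · rw [choice_inr e he hee] at h
      simp [eg] at h
  · rintro (⟨i, a⟩ | k)
    · by_cases h : a = 0
      · right; simp [eg, h]
      · left; simp [ef, h]
    · left; rfl

end FN

namespace FN

section gaps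
variable {ι : Type} [Fintype ι]

open Classical in
noncomputable def MM (P : Setoid ι) (ξ : ι → ℝ) (a : ι) : ℝ :=
  (Finset.univ.filter (fun b => P a b)).sup' ⟨a, by simpa using P.refl a⟩ ξ

open Classical in
noncomputable def eps [Nonempty ι] (P : Setoid ι) (ξ : ι → ℝ) : ℝ :=
  (Finset.univ : Finset (ι × ι)).inf' Finset.univ_nonempty
    (fun x => if P x.1 x.2 then 1 else |ξ x.1 - ξ x.2|)

def Gap (P : Setoid ι) (ξ : ι → ℝ) : Prop :=
  ∀ a b c d, P a b → ¬ P c d → |ξ a - ξ b| < |ξ c - ξ d|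

theorem le_MM (P : Setoid ι) (ξ : ι → ℝ) (a b : ι) (h : P a b) : ξ b ≤ MM P ξ a := by
  unfold MM
  exact Finset.le_sup' ξ (by simpa using h)

theorem MM_mem (P : Setoid ι) (ξ : ι → ℝ) (a : ι) : ∃ b, P a b ∧ MM P ξ a = ξ b := by
  classical
  obtain ⟨b, hb, h⟩ := Finset.exists_mem_eq_sup' (s := Finset.univ.filter (fun b => P a b))
    ⟨a, by simpa using P.refl a⟩ ξ
  exact ⟨b, by simpa using hb, by unfold MM; convert h⟩

theorem MM_congr (P : Setoid ι) (ξ : ι → ℝ) (a b : ι) (h : P a b) : MM P ξ a = MM P ξ b := by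
  obtain ⟨c, hc, hc'⟩ := MM_mem P ξ a
  obtain ⟨e, he, he'⟩ := MM_mem P ξ b
  apply le_antisymm
  · rw [hc']; exact le_MM _ _ _ _ (P.trans (P.symm h) hc)
  · rw [he']; exact le_MM _ _ _ _ (P.trans h he)

theorem eps_le [Nonempty ι] (P : Setoid ι) (ξ : ι → ℝ) (a b : ι) (h : ¬ P a b) :
    eps P ξ ≤ |ξ a - ξ b| := by
  classical
  have := Finset.inf'_le (s := (Finset.univ : Finset (ι × ι)))
    (fun x => if P x.1 x.2 then 1 else |ξ x.1 - ξ x.2|) (Finset.mem_univ (a, b))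
  simp only [h, if_false] at this
  unfold eps
  convert this

theorem eps_pos [Nonempty ι] (P : Setoid ι) (ξ : ι → ℝ) (h : Gap P ξ) : 0 < eps P ξ := by
  unfold eps
  rw [Finset.lt_inf'_iff]
  rintro ⟨a, b⟩ -
  split_ifs with hab
  · exact one_pos
  · exact (abs_nonneg _).trans_lt (h a a a b (P.refl a) hab)

theorem gap_aux (P : Setoid ι) (ξ : ι → ℝ) (h : Gap P ξ) (a b a' : ι) (hab : ¬ P a b)
    (hlt : ξ a < ξ b) (ha : P a a') : ξ a' < ξ b := by
  by_contra hc
  have := h a' a b a (P.symm ha) (fun h' => hab (P.symm h'))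
  rw [abs_of_pos (by linarith), abs_of_nonneg (by linarith)] at this
  linarith

theorem gap_sep [Nonempty ι] (P : Setoid ι) (ξ : ι → ℝ) (h : Gap P ξ) (a b : ι) (hab : ¬ P a b) :
    MM P ξ a + eps P ξ ≤ ξ b ∨ MM P ξ b + eps P ξ ≤ ξ a := by
  have key : ∀ a b, ¬ P a b → ξ a < ξ b → MM P ξ a + eps P ξ ≤ ξ b := by
    intro a b hab hlt
    obtain ⟨c, hc, hc'⟩ := MM_mem P ξ a
    have h1 := gap_aux P ξ h a b c hab hlt hc
    have h2 := eps_le P ξ c b (fun h' => hab (P.trans hc h'))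
    rw [abs_sub_comm, abs_of_pos (by linarith)] at h2
    rw [hc']
    linarith
  rcases lt_trichotomy (ξ a) (ξ b) with h1 | h1 | h1
  · exact Or.inl (key a b hab h1)
  · have := h a a a b (P.refl a) hab
    rw [h1] at this
    simp at this
  · exact Or.inr (key b a (fun h' => hab (P.symm h')) h1)

theorem gap_disj (P P' : Setoid ι) (ξ : ι → ℝ) (h : Gap P ξ) (h' : Gap P' ξ)
    (hc : Nat.card (Quotient P) = Nat.card (Quotient P')) : P = P' := by
  have key : ∀ P P' : Setoid ι, Nat.card (Quotient P) = Nat.card (Quotient P') → P ≤ P' → P = P' := by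
    intro P P' hc hle
    refine le_antisymm hle ?_
    have hs : Function.Surjective (Quotient.map' (s₁ := P) (s₂ := P') id hle) := by
      intro x
      induction x using Quotient.inductionOn with
      | h a => exact ⟨Quotient.mk _ a, rfl⟩
    have hb := (Function.Surjective.bijective_of_nat_card_le hs hc.le).1
    intro a b hab
    have : (Quotient.mk P a) = Quotient.mk P b := hb (Quotient.sound hab)
    exact Quotient.exact this
  by_cases h1 : P ≤ P'
  · exact key P P' hc h1
  by_cases h2 : P' ≤ P
  · exact (key P' P hc.symm h2).symm
  exfalso
  rw [Setoid.le_def] at h1 h2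
  push Not at h1 h2
  obtain ⟨a, b, h3, h4⟩ := h1
  obtain ⟨c, e, h5, h6⟩ := h2
  exact lt_asymm (h a b c e h3 h6) (h' c e a b h5 h4)

theorem MM_cont {X : Type*} [TopologicalSpace X] (P : Setoid ι) (ξ : X → ι → ℝ)
    (hξ : ∀ a, Continuous fun x => ξ x a) (a : ι) : Continuous fun x => MM P (ξ x) a := by
  unfold MM
  exact Continuous.finset_sup'_apply _ (fun b _ => hξ b)

theorem eps_cont [Nonempty ι] {X : Type*} [TopologicalSpace X] (P : Setoid ι) (ξ : X → ι → ℝ)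
    (hξ : ∀ a, Continuous fun x => ξ x a) : Continuous fun x => eps P (ξ x) := by
  unfold eps
  refine Continuous.finset_inf'_apply _ (fun b _ => ?_)
  split_ifs
  · exact continuous_const
  · exact ((hξ _).sub (hξ _)).abs

theorem gap_open {X : Type*} [TopologicalSpace X] (P : Setoid ι) (ξ : X → ι → ℝ)
    (hξ : ∀ a, Continuous fun x => ξ x a) : IsOpen {x | Gap P (ξ x)} := by
  unfold Gap
  simp only [setOf_forall]
  refine isOpen_iInter_of_finite fun a => isOpen_iInter_of_finite fun b =>
    isOpen_iInter_of_finite fun c => isOpen_iInter_of_finite fun e =>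
    isOpen_iInter_of_finite fun _ => isOpen_iInter_of_finite fun _ => ?_
  exact isOpen_lt ((hξ _).sub (hξ _)).abs ((hξ _).sub (hξ _)).abs

end gaps

end FN

namespace FN

variable {d m n r : ℕ}

abbrev YY (d m n r : ℕ) := ParamSpace (fnProj (d + 2) m n) (r + 2)
abbrev Idx (m n r : ℕ) := Fin m ⊕ (Fin (r + 2) × Fin n)

def pt (y : YY d m n r) (a : Idx m n r) : EuclideanSpace ℝ (Fin (d + 2)) :=
  match a with
  | Sum.inl k => (y.1 0).1 (Fin.castAdd n k)
  | Sum.inr (j, i) => (y.1 j).1 (Fin.natAdd m i)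

def idx (j : Fin (r + 2)) : Fin (m + n) → Idx m n r :=
  Fin.addCases (motive := fun _ => Idx m n r) (fun k => Sum.inl k) (fun i => Sum.inr (j, i))

theorem y_o (y : YY d m n r) (j j' : Fin (r + 2)) (k : Fin m) :
    (y.1 j).1 (Fin.castAdd n k) = (y.1 j').1 (Fin.castAdd n k) :=
  congrFun (congrArg Subtype.val (y.2 j j')) k

theorem pt_idx (y : YY d m n r) (j : Fin (r + 2)) (s : Fin (m + n)) : pt y (idx j s) = (y.1 j).1 s := by
  refine Fin.addCases (fun k => ?_) (fun i => ?_) s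
  · simp only [idx, Fin.addCases_left, pt]
    exact y_o y _ _ k
  · simp only [idx, Fin.addCases_right, pt]

theorem y_cont (j : Fin (r + 2)) (s : Fin (m + n)) : Continuous fun y : YY d m n r => (y.1 j).1 s :=
  (continuous_apply s).comp (continuous_subtype_val.comp ((continuous_apply j).comp continuous_subtype_val))

theorem y_cont' (j : Fin (r + 2)) (s : Fin (m + n)) (c : Fin (d + 2)) :
    Continuous fun y : YY d m n r => (y.1 j).1 s c := by
  exact (EuclideanSpace.proj (𝕜 := ℝ) c).continuous.comp (y_cont (d := d) j s)

def xi (y : YY d m n r) (a : Idx m n r) : ℝ := pt y a 0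

theorem xi_cont (a : Idx m n r) : Continuous fun y : YY d m n r => xi y a := by
  rcases a with k | ⟨j, i⟩
  · exact y_cont' _ _ _
  · exact y_cont' _ _ _

def UP (P : Setoid (Idx m n r)) : Set (YY d m n r) :=
  {y | Gap P (xi y)} ∩ {y | ∀ j s t, s ≠ t → P (idx j s) (idx j t) →
    ∃ c : Fin (d + 2), c ≠ 0 ∧ (y.1 j).1 s c ≠ (y.1 j).1 t c}

theorem UP_open (P : Setoid (Idx m n r)) : IsOpen (UP (d := d) P) := by
  refine (gap_open P xi xi_cont).inter ?_
  simp only [setOf_forall, setOf_exists]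
  refine isOpen_iInter_of_finite fun j => isOpen_iInter_of_finite fun s =>
    isOpen_iInter_of_finite fun t => isOpen_iInter_of_finite fun _ => isOpen_iInter_of_finite fun _ =>
    isOpen_iUnion fun c => ?_
  exact isOpen_const.inter (isOpen_ne_fun (y_cont' _ _ _) (y_cont' _ _ _))

theorem UP_cover (y : YY d m n r) : ∃ P, y ∈ UP P := by
  refine ⟨Setoid.ker (xi y), ?_, ?_⟩
  · intro a b c e h1 h2
    rw [Setoid.ker_def] at h1 h2
    rw [h1, sub_self, abs_zero, abs_pos, sub_ne_zero]
    exact h2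
  · intro j s t hst h
    rw [Setoid.ker_def] at h
    by_contra hc
    push Not at hc
    apply hst
    apply (y.1 j).2
    ext c
    by_cases h0 : c = 0
    · subst h0
      simpa only [xi, pt_idx] using h
    · exact hc c h0

/-- offset -/
noncomputable def th (i : Fin n) : ℝ := ((i : ℕ) + 1) / (n + 1)

theorem th_pos (i : Fin n) : 0 < th i := by unfold th; positivity

theorem th_lt (i : Fin n) : th i < 1 := by
  unfold th
  rw [div_lt_one (by positivity)]
  have : ((i : ℕ) : ℝ) < n := by exact_mod_cast i.2
  linarith

theorem th_inj (i i' : Fin n) (h : th i = th i') : i = i' := by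
  unfold th at h
  rw [div_left_inj' (by positivity)] at h
  exact Fin.ext (by exact_mod_cast (add_right_cancel h))

noncomputable def Rad (y : YY d m n r) (i : Fin n) : ℝ :=
  ∑ k : Fin m, |(y.1 0).1 (Fin.castAdd n k) 1| + 1 + (i : ℕ)

theorem Rad_gt (y : YY d m n r) (i : Fin n) (j : Fin (r + 2)) (k : Fin m) :
    (y.1 j).1 (Fin.castAdd n k) 1 < Rad y i := by
  have h := Finset.single_le_sum (f := fun k : Fin m => |(y.1 0).1 (Fin.castAdd n k) 1|)
    (fun _ _ => abs_nonneg _) (Finset.mem_univ k)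
  have h2 := le_abs_self ((y.1 0).1 (Fin.castAdd n k) 1)
  have h3 : (0 : ℝ) ≤ (i : ℕ) := by positivity
  rw [y_o y j 0]
  unfold Rad
  simp only at h
  linarith

theorem Rad_inj (y : YY d m n r) (i i' : Fin n) (h : Rad y i = Rad y i') : i = i' := by
  unfold Rad at h
  exact Fin.ext (by exact_mod_cast (add_left_cancel h))

theorem Rad_cont (i : Fin n) : Continuous fun y : YY d m n r => Rad y i := by
  unfold Rad
  refine Continuous.add (Continuous.add (continuous_finsetSum _ fun k _ => ?_) continuous_const) continuous_const
  exact (y_cont' _ _ _).abs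

noncomputable def eta [NeZero m] (P : Setoid (Idx m n r)) (y : YY d m n r) (j : Fin (r + 2)) (i : Fin n) : ℝ :=
  MM P (xi y) (Sum.inr (j, i)) + eps P (xi y) * th i

theorem eta_cont [NeZero m] (P : Setoid (Idx m n r)) (j : Fin (r + 2)) (i : Fin n) :
    Continuous fun y : YY d m n r => eta P y j i := by
  unfold eta
  exact (MM_cont P xi xi_cont _).add ((eps_cont P xi xi_cont).mul continuous_const)

/-- the moving points -/
noncomputable def WW [NeZero m] (P : Setoid (Idx m n r)) (y : YY d m n r) (j : Fin (r + 2)) (α β γ : ℝ) :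
    Fin (m + n) → EuclideanSpace ℝ (Fin (d + 2)) :=
  Fin.addCases (motive := fun _ => EuclideanSpace ℝ (Fin (d + 2)))
    (fun k => (y.1 j).1 (Fin.castAdd n k))
    (fun i => WithLp.toLp 2 (fun c =>
      if c = 0 then (y.1 j).1 (Fin.natAdd m i) 0 + α * (eta P y j i - (y.1 j).1 (Fin.natAdd m i) 0) - γ * eta P y j i
      else (1 - β) * (y.1 j).1 (Fin.natAdd m i) c + β * (if c = 1 then Rad y i else 0)))

theorem WW_o [NeZero m] (P : Setoid (Idx m n r)) (y : YY d m n r) (j : Fin (r + 2)) (α β γ : ℝ) (k : Fin m) :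
    WW P y j α β γ (Fin.castAdd n k) = (y.1 j).1 (Fin.castAdd n k) := by
  simp [WW]

theorem WW_z0 [NeZero m] (P : Setoid (Idx m n r)) (y : YY d m n r) (j : Fin (r + 2)) (α β γ : ℝ) (i : Fin n) :
    WW P y j α β γ (Fin.natAdd m i) 0 = (y.1 j).1 (Fin.natAdd m i) 0 + α * (eta P y j i - (y.1 j).1 (Fin.natAdd m i) 0) - γ * eta P y j i := by
  simp [WW]

theorem WW_z [NeZero m] (P : Setoid (Idx m n r)) (y : YY d m n r) (j : Fin (r + 2)) (α β γ : ℝ) (i : Fin n)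
    (c : Fin (d + 2)) (hc : c ≠ 0) :
    WW P y j α β γ (Fin.natAdd m i) c = (1 - β) * (y.1 j).1 (Fin.natAdd m i) c + β * (if c = 1 then Rad y i else 0) := by
  simp [WW, hc]

theorem WW_zero [NeZero m] (P : Setoid (Idx m n r)) (y : YY d m n r) (j : Fin (r + 2)) (s : Fin (m + n)) :
    WW P y j 0 0 0 s = (y.1 j).1 s := by
  refine Fin.addCases (fun k => ?_) (fun i => ?_) s
  · rw [WW_o]
  · ext c
    by_cases hc : c = 0
    · subst hc
      rw [WW_z0]; ring
    · rw [WW_z _ _ _ _ _ _ _ _ hc]; ring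

theorem WW_one [NeZero m] (P : Setoid (Idx m n r)) (y : YY d m n r) (j j' : Fin (r + 2)) (s : Fin (m + n)) :
    WW P y j 1 1 1 s = WW P y j' 1 1 1 s := by
  refine Fin.addCases (fun k => ?_) (fun i => ?_) s
  · rw [WW_o, WW_o, y_o]
  · ext c
    by_cases hc : c = 0
    · subst hc
      rw [WW_z0, WW_z0]; ring
    · rw [WW_z _ _ _ _ _ _ _ _ hc, WW_z _ _ _ _ _ _ _ _ hc]; ring

theorem WW_cont [NeZero m] {X : Type*} [TopologicalSpace X] (P : Setoid (Idx m n r)) (j : Fin (r + 2))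
    (s : Fin (m + n)) (y : X → YY d m n r) (α β γ : X → ℝ) (hy : Continuous y) (hα : Continuous α)
    (hβ : Continuous β) (hγ : Continuous γ) :
    Continuous fun x => WW P (y x) j (α x) (β x) (γ x) s := by
  refine Fin.addCases (fun k => ?_) (fun i => ?_) s
  · simp only [WW_o]
    exact (y_cont _ _).comp hy
  · simp only [WW, Fin.addCases_right]
    refine (PiLp.continuous_toLp 2 _).comp (continuous_pi fun c => ?_)
    have h1 := (eta_cont (d := d) P j i).comp hy
    have h2 := fun c => (y_cont' (d := d) j (Fin.natAdd m i) c).comp hy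
    have h3 := (Rad_cont (d := d) (m := m) (r := r) i).comp hy
    simp only [Function.comp_def] at h1 h2 h3
    split_ifs
    · exact ((h2 0).add (hα.mul (h1.sub (h2 0)))).sub (hγ.mul h1)
    · exact ((continuous_const.sub hβ).mul (h2 c)).add (hβ.mul h3)
    · exact ((continuous_const.sub hβ).mul (h2 c)).add (hβ.mul continuous_const)

theorem eta_gt [NeZero m] (P : Setoid (Idx m n r)) (y : YY d m n r) (hy : y ∈ UP P) (j : Fin (r + 2))
    (i : Fin n) : MM P (xi y) (Sum.inr (j, i)) < eta P y j i := by
  have := mul_pos (eps_pos P _ hy.1) (th_pos i)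
  unfold eta
  linarith

theorem eta_lt [NeZero m] (P : Setoid (Idx m n r)) (y : YY d m n r) (hy : y ∈ UP P) (j : Fin (r + 2))
    (i : Fin n) : eta P y j i < MM P (xi y) (Sum.inr (j, i)) + eps P (xi y) := by
  have := mul_lt_mul_of_pos_left (th_lt i) (eps_pos P _ hy.1)
  unfold eta
  linarith

theorem range1 [NeZero m] (P : Setoid (Idx m n r)) (y : YY d m n r) (hy : y ∈ UP P) (j : Fin (r + 2))
    (α β : ℝ) (h0 : 0 ≤ α) (h1 : α ≤ 1) (s : Fin (m + n)) :
    xi y (idx j s) ≤ WW P y j α β 0 s 0 ∧ WW P y j α β 0 s 0 < MM P (xi y) (idx j s) + eps P (xi y) := by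
  have hM := le_MM P (xi y) (idx j s) (idx j s) (P.refl _)
  have he := eps_pos P _ hy.1
  have hxi : xi y (idx j s) = (y.1 j).1 s 0 := by unfold xi; rw [pt_idx]
  revert hM hxi
  refine Fin.addCases (fun k => ?_) (fun i => ?_) s
  · intro hM hxi
    rw [WW_o, ← hxi]
    exact ⟨le_rfl, by linarith⟩
  · intro hM hxi
    rw [WW_z0, ← hxi]
    have e1 := eta_gt P y hy j i
    have e2 := eta_lt P y hy j i
    simp only [idx, Fin.addCases_right] at hM ⊢
    constructor
    · nlinarith
    · nlinarith

theorem WW_inj [NeZero m] (P : Setoid (Idx m n r)) (y : YY d m n r) (hy : y ∈ UP P) (j : Fin (r + 2))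
    (α β γ : ℝ) (h0 : 0 ≤ α) (h1 : α ≤ 1) (h : (β = 0 ∧ γ = 0) ∨ (α = 1 ∧ γ = 0) ∨ (α = 1 ∧ β = 1)) :
    Function.Injective (WW P y j α β γ) := by
  intro s t hst
  by_contra hne
  rcases h with ⟨rfl, rfl⟩ | ⟨rfl, rfl⟩ | ⟨rfl, rfl⟩
  · by_cases hP : P (idx j s) (idx j t)
    · obtain ⟨c, hc, hcne⟩ := hy.2 j s t hne hP
      have hW : ∀ s, WW P y j α 0 0 s c = (y.1 j).1 s c := by
        intro s
        refine Fin.addCases (fun k => ?_) (fun i => ?_) s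
        · rw [WW_o]
        · rw [WW_z _ _ _ _ _ _ _ _ hc]; ring
      rw [← hW, ← hW, hst] at hcne
      exact hcne rfl
    · have a1 := range1 P y hy j α 0 h0 h1 s
      have a2 := range1 P y hy j α 0 h0 h1 t
      rw [hst] at a1
      rcases gap_sep P _ hy.1 _ _ hP with h | h <;> linarith
  · have hc : WW P y j 1 β 0 s 0 = WW P y j 1 β 0 t 0 := by rw [hst]
    by_cases hP : P (idx j s) (idx j t)
    · revert hc hP hne hst
      refine Fin.addCases (fun k => ?_) (fun i => ?_) s <;> refine Fin.addCases (fun k' => ?_) (fun i' => ?_) t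
      · intro hne hst _ _
        rw [WW_o, WW_o] at hst
        exact hne ((y.1 j).2 hst)
      · intro hne hst hc hP
        rw [WW_o, WW_z0, ← pt_idx] at hc
        have e1 := eta_gt P y hy j i'
        have e2 := le_MM P (xi y) (idx j (Fin.natAdd m i')) (idx j (Fin.castAdd n k)) (P.symm hP)
        change xi y _ = _ at hc
        simp only [idx, Fin.addCases_right, Fin.addCases_left] at e2 hc
        linarith
      · intro hne hst hc hP
        rw [WW_o, WW_z0, ← pt_idx _ _ (Fin.castAdd n k')] at hc
        have e1 := eta_gt P y hy j i
        have e2 := le_MM P (xi y) (idx j (Fin.natAdd m i)) (idx j (Fin.castAdd n k')) hP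
        change _ = xi y _ at hc
        simp only [idx, Fin.addCases_right, Fin.addCases_left] at e2 hc
        linarith
      · intro hne hst hc hP
        rw [WW_z0, WW_z0] at hc
        have e2 := MM_congr P (xi y) _ _ hP
        simp only [idx, Fin.addCases_right] at e2
        unfold eta at hc
        rw [e2] at hc
        have e3 : eps P (xi y) * th i = eps P (xi y) * th i' := by linarith
        have := th_inj _ _ (mul_left_cancel₀ (eps_pos P _ hy.1).ne' e3)
        exact hne (by rw [this])
    · have a1 := range1 P y hy j 1 β h0 h1 s
      have a2 := range1 P y hy j 1 β h0 h1 t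
      rw [hst] at a1
      rcases gap_sep P _ hy.1 _ _ hP with h | h <;> linarith
  · have hc : WW P y j 1 1 γ s 1 = WW P y j 1 1 γ t 1 := by rw [hst]
    have h10 : (1 : Fin (d + 2)) ≠ 0 := by simp
    revert hc hne hst
    refine Fin.addCases (fun k => ?_) (fun i => ?_) s <;> refine Fin.addCases (fun k' => ?_) (fun i' => ?_) t
    · intro hne hst _
      rw [WW_o, WW_o] at hst
      exact hne ((y.1 j).2 hst)
    · intro hne hst hc
      rw [WW_o, WW_z _ _ _ _ _ _ _ _ h10] at hc
      have := Rad_gt y i' j k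
      simp at hc
      linarith
    · intro hne hst hc
      rw [WW_o, WW_z _ _ _ _ _ _ _ _ h10] at hc
      have := Rad_gt y i j k'
      simp at hc
      linarith
    · intro hne hst hc
      rw [WW_z _ _ _ _ _ _ _ _ h10, WW_z _ _ _ _ _ _ _ _ h10] at hc
      simp at hc
      exact hne (by rw [Rad_inj y i i' hc])

end FN

namespace FN

variable {d m n r : ℕ}

noncomputable def cl (x : ℝ) : ℝ := max 0 (min 1 x)

theorem cl_cont : Continuous cl := by unfold cl; fun_prop

theorem cl_ge {x : ℝ} (h : 1 ≤ x) : cl x = 1 := by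
  unfold cl
  rw [min_eq_left h, max_eq_right zero_le_one]

theorem cl_le {x : ℝ} (h : x ≤ 0) : cl x = 0 := by
  unfold cl
  rw [min_eq_right (by linarith), max_eq_left h]

noncomputable def W1 [NeZero m] (P : Setoid (Idx m n r)) (y : YY d m n r) (j : Fin (r + 2)) (w : ℝ) :
    Fin (m + n) → EuclideanSpace ℝ (Fin (d + 2)) :=
  WW P y j (cl (3 * w)) (cl (3 * w - 1)) (cl (3 * w - 2))

theorem W1_inj [NeZero m] (P : Setoid (Idx m n r)) (y : YY d m n r) (hy : y ∈ UP P) (j : Fin (r + 2)) (w : ℝ) :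
    Function.Injective (W1 P y j w) := by
  apply WW_inj P y hy
  · exact le_max_left _ _
  · exact max_le zero_le_one (min_le_left _ _)
  · rcases le_total w (1 / 3) with h | h
    · left
      exact ⟨cl_le (by linarith), cl_le (by linarith)⟩
    · rcases le_total w (2 / 3) with h' | h'
      · right; left
        exact ⟨cl_ge (by linarith), cl_le (by linarith)⟩
      · right; right
        exact ⟨cl_ge (by linarith), cl_ge (by linarith)⟩

theorem W1_one [NeZero m] (P : Setoid (Idx m n r)) (y : YY d m n r) (j : Fin (r + 2)) (w : ℝ) (hw : 1 ≤ w)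
    (s : Fin (m + n)) : W1 P y j w s = WW P y 0 1 1 1 s := by
  unfold W1
  rw [cl_ge (by linarith), cl_ge (by linarith), cl_ge (by linarith), WW_one P y j 0]

theorem W1_zero [NeZero m] (P : Setoid (Idx m n r)) (y : YY d m n r) (j : Fin (r + 2))
    (s : Fin (m + n)) : W1 P y j 0 s = (y.1 j).1 s := by
  unfold W1
  rw [cl_le (by linarith), cl_le (by linarith), cl_le (by linarith), WW_zero]

noncomputable def gam [NeZero m] (P : Setoid (Idx m n r)) (y : YY d m n r) (t : ℝ)
    (s : Fin (m + n)) : EuclideanSpace ℝ (Fin (d + 2)) :=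
  WW P y 0 1 1 1 s + ∑ j : Fin (r + 2), (W1 P y j (2 * |(r + 1) * t - (j : ℕ)|) s - WW P y 0 1 1 1 s)

theorem gam_eq [NeZero m] (P : Setoid (Idx m n r)) (y : YY d m n r) (t : ℝ) (j : Fin (r + 2))
    (hj : ∀ j' : Fin (r + 2), j' ≠ j → 1 / 2 ≤ |(r + 1) * t - (j' : ℕ)|) (s : Fin (m + n)) :
    gam P y t s = W1 P y j (2 * |(r + 1) * t - (j : ℕ)|) s := by
  unfold gam
  rw [Finset.sum_eq_single j]
  · abel
  · intro j' _ hj'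
    rw [W1_one _ _ _ _ (by linarith [hj j' hj']), sub_self]
  · simp

theorem nat_sep {a b : ℕ} (h : a ≠ b) : a + 1 ≤ b ∨ b + 1 ≤ a := by omega

theorem gam_ex [NeZero m] (P : Setoid (Idx m n r)) (y : YY d m n r) (t : I) :
    ∃ j w, gam P y t = W1 P y j w := by
  have h0 : (0 : ℝ) ≤ (r + 1) * (t : ℝ) + 1 / 2 := by
    have := t.2.1
    positivity
  have h1 := Nat.floor_le h0
  have h2 := Nat.lt_floor_add_one ((r + 1) * (t : ℝ) + 1 / 2)
  have h3 : ⌊(r + 1) * (t : ℝ) + 1 / 2⌋₊ < r + 2 := by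
    rw [Nat.floor_lt h0]
    have := t.2.2
    have hr : (0 : ℝ) ≤ r := by positivity
    push_cast
    nlinarith
  refine ⟨⟨_, h3⟩, _, funext fun s => gam_eq P y t ⟨_, h3⟩ ?_ s⟩
  intro j' hj'
  have hne : (j' : ℕ) ≠ ⌊(r + 1) * (t : ℝ) + 1 / 2⌋₊ := fun h => hj' (Fin.ext h)
  rcases nat_sep hne with h | h
  · have : ((j' : ℕ) : ℝ) + 1 ≤ (⌊(r + 1) * (t : ℝ) + 1 / 2⌋₊ : ℝ) := by exact_mod_cast h
    rw [le_abs]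
    left
    linarith
  · have : (⌊(r + 1) * (t : ℝ) + 1 / 2⌋₊ : ℝ) + 1 ≤ ((j' : ℕ) : ℝ) := by exact_mod_cast h
    rw [le_abs]
    right
    linarith

theorem sched (j : Fin (r + 2)) : ((r : ℝ) + 1) * (schedule (r + 2) j : ℝ) = (j : ℕ) := by
  unfold schedule
  have hj : ((j : ℕ) : ℝ) ≤ r + 1 := by exact_mod_cast (by omega : (j : ℕ) ≤ r + 1)
  have e : ((r + 2 : ℕ) : ℝ) - 1 = r + 1 := by push_cast; ring
  rw [e, projIcc_of_mem zero_le_one (⟨by positivity, by rw [div_le_one (by positivity)]; exact hj⟩ :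
    ((j : ℕ) : ℝ) / ((r : ℝ) + 1) ∈ Icc (0 : ℝ) 1)]
  simp only
  field_simp

theorem gam_sched [NeZero m] (P : Setoid (Idx m n r)) (y : YY d m n r) (j : Fin (r + 2)) :
    gam P y (schedule (r + 2) j) = (y.1 j).1 := by
  funext s
  rw [gam_eq P y _ j, sched, sub_self, abs_zero, mul_zero, W1_zero]
  intro j' hj'
  rw [sched]
  have hne : (j' : ℕ) ≠ j := fun h => hj' (Fin.ext h)
  rcases nat_sep hne with h | h
  · have : ((j' : ℕ) : ℝ) + 1 ≤ ((j : ℕ) : ℝ) := by exact_mod_cast h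
    rw [le_abs]
    left
    linarith
  · have : ((j : ℕ) : ℝ) + 1 ≤ ((j' : ℕ) : ℝ) := by exact_mod_cast h
    rw [le_abs]
    right
    linarith

theorem gam_o [NeZero m] (P : Setoid (Idx m n r)) (y : YY d m n r) (t : ℝ) (k : Fin m) :
    gam P y t (Fin.castAdd n k) = (y.1 0).1 (Fin.castAdd n k) := by
  unfold gam W1
  simp only [WW_o]
  rw [Finset.sum_eq_zero, add_zero]
  intro j _
  rw [y_o y j 0, sub_self]

theorem gam_cont [NeZero m] (P : Setoid (Idx m n r)) :
    Continuous fun x : YY d m n r × I => gam P x.1 x.2 := by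
  refine continuous_pi fun s => ?_
  unfold gam W1
  have h1 : Continuous fun x : YY d m n r × I => WW P x.1 0 1 1 1 s :=
    WW_cont P 0 s _ _ _ _ continuous_fst continuous_const continuous_const continuous_const
  refine h1.add (continuous_finsetSum _ fun j _ => Continuous.sub ?_ h1)
  have h2 : Continuous fun x : YY d m n r × I => 2 * |(r + 1) * (x.2 : ℝ) - (j : ℕ)| := by fun_prop
  exact WW_cont P j s _ _ _ _ continuous_fst (cl_cont.comp (continuous_const.mul h2))
    (cl_cont.comp ((continuous_const.mul h2).sub continuous_const))
    (cl_cont.comp ((continuous_const.mul h2).sub continuous_const))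

def UC (c : ℕ) : Set (YY d m n r) := {y | ∃ P : Setoid (Idx m n r), Nat.card (Quotient P) = c ∧ y ∈ UP P}

theorem UC_open (c : ℕ) : IsOpen (UC (d := d) (m := m) (n := n) (r := r) c) := by
  rw [isOpen_iff_mem_nhds]
  rintro y ⟨P, hP, hy⟩
  filter_upwards [(UP_open P).mem_nhds hy] with z hz
  exact ⟨P, hP, hz⟩

theorem UC_section [NeZero m] (c : ℕ) :
    ∃ s : C(UC (d := d) (m := m) (n := n) (r := r) c, FibConstPath (fnProj (d + 2) m n)),
      ∀ x, paramEval (fnProj (d + 2) m n) (r + 2) (s x) = (x : YY d m n r) := by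
  choose Q hQ1 hQ2 using fun y : UC (d := d) (m := m) (n := n) (r := r) c => y.2
  let A : UC (d := d) (m := m) (n := n) (r := r) c × I → Conf (d + 2) (m + n) := fun x =>
    ⟨gam (Q x.1) x.1.1 x.2, by
      obtain ⟨j, w, h⟩ := gam_ex (Q x.1) x.1.1 x.2
      rw [h]
      exact W1_inj _ _ (hQ2 x.1) _ _⟩
  have hA : Continuous A := by
    refine Continuous.subtype_mk ?_ _
    rw [continuous_iff_continuousAt]
    rintro ⟨y, t⟩
    have h1 : Continuous fun x : UC (d := d) (m := m) (n := n) (r := r) c × I => gam (Q y) x.1.1 x.2 :=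
      (gam_cont (Q y)).comp ((continuous_subtype_val.comp continuous_fst).prodMk continuous_snd)
    refine h1.continuousAt.congr ?_
    have h2 : IsOpen {x : UC (d := d) (m := m) (n := n) (r := r) c × I | x.1.1 ∈ UP (Q y)} :=
      (UP_open (Q y)).preimage (continuous_subtype_val.comp continuous_fst)
    filter_upwards [h2.mem_nhds (hQ2 y)] with x hx
    have : Q y = Q x.1 := gap_disj _ _ _ hx.1 (hQ2 x.1).1 ((hQ1 y).trans (hQ1 x.1).symm)
    rw [this]
  let A' : C(UC (d := d) (m := m) (n := n) (r := r) c × I, Conf (d + 2) (m + n)) := ⟨A, hA⟩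
  refine ⟨⟨fun y => ⟨A'.curry y, ?_⟩, ?_⟩, ?_⟩
  · intro t t'
    apply Subtype.ext
    funext k
    change gam (Q y) y.1 t (Fin.castAdd n k) = gam (Q y) y.1 t' (Fin.castAdd n k)
    rw [gam_o, gam_o]
  · exact Continuous.subtype_mk A'.curry.continuous _
  · intro y
    apply Subtype.ext
    funext j
    apply Subtype.ext
    exact gam_sched (Q y) y.1 j

theorem upper [NeZero m] (N : ℕ) (hN : N + 1 = m + (r + 2) * n) :
    HasSecatLE (paramEval (fnProj (d + 2) m n) (r + 2)) N := by
  refine ⟨fun i => UC ((i : ℕ) + 1), fun i => UC_open _, ?_, fun i => UC_section _⟩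
  rw [eq_univ_iff_forall]
  intro y
  obtain ⟨P, hP⟩ := UP_cover y
  have hne0 : Nonempty (Quotient P) := ⟨Quotient.mk P (Sum.inl 0)⟩
  have h1 : 0 < Nat.card (Quotient P) := Nat.card_pos
  have h2 : Nat.card (Quotient P) ≤ N + 1 := by
    have := Nat.card_le_card_of_surjective (Quotient.mk P) Quotient.mk_surjective
    rw [Nat.card_eq_fintype_card (α := Idx m n r)] at this
    simpa [← hN] using this
  rw [mem_iUnion]
  exact ⟨⟨Nat.card (Quotient P) - 1, by omega⟩, P, by simp only; omega, hP⟩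

end FN

/-- For the Fadell–Neuwirth fibration with `d ≥ 3` odd, `n ≥ 1`, `m ≥ 2`, `r ≥ 2`:
`TC_r[p] = rn + m - 1`. -/
theorem stmt15 (d m n r : ℕ) (hodd : Odd d) (hd : 3 ≤ d) (hn : 1 ≤ n) (hm : 2 ≤ m)
    (hr : 2 ≤ r) :
    seqParamTC (fnProj d m n) r = ((r * n + m - 1 : ℕ) : ℕ∞) := by
  obtain ⟨d, rfl⟩ : ∃ d', d = d' + 2 := ⟨d - 2, by omega⟩
  obtain ⟨m, rfl⟩ : ∃ m', m = m' + 1 := ⟨m - 1, by omega⟩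
  obtain ⟨n, rfl⟩ : ∃ n', n = n' + 1 := ⟨n - 1, by omega⟩
  obtain ⟨r, rfl⟩ : ∃ r', r = r' + 2 := ⟨r - 2, by omega⟩
  unfold seqParamTC secat
  apply le_antisymm
  · refine iInf₂_le _ ?_
    exact FN.upper _ (by
      generalize (r + 2) * (n + 1) = x
      omega)
  · refine le_iInf₂ fun k hk => ?_
    by_contra hc
    rw [not_le] at hc
    have hc' : k < (r + 2) * (n + 1) + (m + 1) - 1 := by exact_mod_cast hc
    refine FN.lower (q := d + 1) (by omega) ?_ k ?_ hk
    · rw [Nat.odd_iff] at hodd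
      rw [Nat.even_iff]
      omega
    · rw [mul_comm (n + 1)]
      generalize (r + 2) * (n + 1) = x at *
      omega
end

section
/- For the Fadell–Neuwirth fibration p : F(ℝ^d, m+n) → F(ℝ^d, m) with any d ≥ 2, m ≥ 2, n ≥ 1 and r ≥ 2, one has the lower bound TC_r[p] ≥ rn + m − 2. -/
open Set unitInterval

universe u v

section Brouwer
open MeasureTheory Polynomial

lemma aux_det_poly {E : Type*} [NormedAddCommGroup E] [NormedSpace ℝ E] [FiniteDimensional ℝ E]
    (A : E →L[ℝ] E) : ∃ p : ℝ[X], p.natDegree ≤ Module.finrank ℝ E ∧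
      ∀ t : ℝ, p.eval t = (1 + t • A).det := by
  let b := Module.finBasis ℝ E
  let M := LinearMap.toMatrix b b (A : E →ₗ[ℝ] E)
  refine ⟨((X : ℝ[X]) • M.map (C : ℝ →+* ℝ[X]) + (1 : Matrix _ _ ℝ).map (C : ℝ →+* ℝ[X])).det, ?_, ?_⟩
  · simpa using Polynomial.natDegree_det_X_add_C_le M 1
  · intro t
    have h1 : (1 + t • A).det = LinearMap.det ((1 : E →ₗ[ℝ] E) + t • (A : E →ₗ[ℝ] E)) := rfl
    rw [h1, ← LinearMap.det_toMatrix b, map_add, map_smul, LinearMap.toMatrix_one,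
      ← coe_evalRingHom, RingHom.map_det]
    congr 1
    ext i j
    by_cases hij : i = j <;> simp [M, hij] <;> ring

lemma aux_det_interp (E : Type*) [NormedAddCommGroup E] [NormedSpace ℝ E] [FiniteDimensional ℝ E]
    (δ : ℝ) (hδ : 0 < δ) : ∃ (s : Finset ℝ) (c : ℝ → ℝ), (∀ t ∈ s, 0 < t ∧ t < δ) ∧
      (∑ t ∈ s, c t = 1) ∧ ∀ A : E →L[ℝ] E, (1 + A).det = ∑ t ∈ s, c t * (1 + t • A).det := by
  classical
  let s : Finset ℝ := (Finset.range (Module.finrank ℝ E + 1)).image (fun i : ℕ => δ / (i + 2))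
  have hcard : s.card = Module.finrank ℝ E + 1 := by
    rw [Finset.card_image_of_injective, Finset.card_range]
    intro i j hij
    have h1 : (0 : ℝ) < i + 2 := by positivity
    have h2 : (0 : ℝ) < j + 2 := by positivity
    have hij' : δ / ((i : ℝ) + 2) = δ / (j + 2) := hij
    rw [div_eq_div_iff h1.ne' h2.ne'] at hij'
    have := mul_left_cancel₀ hδ.ne' hij'
    have h3 : (i : ℝ) = j := by linarith
    exact_mod_cast h3
  let c : ℝ → ℝ := fun t => (Lagrange.basis s id t).eval 1
  have key : ∀ A : E →L[ℝ] E, (1 + A).det = ∑ t ∈ s, c t * (1 + t • A).det := by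
    intro A
    obtain ⟨p, hp, hpe⟩ := aux_det_poly A
    have h1 := Lagrange.eq_interpolate (s := s) (v := id) (f := p) (injOn_id _) (by
      rw [hcard]
      refine lt_of_le_of_lt degree_le_natDegree ?_
      exact_mod_cast Nat.lt_succ_of_le hp)
    have h2 : (1 + A).det = p.eval 1 := by rw [hpe, one_smul]
    rw [h2, h1, Lagrange.interpolate_apply, eval_finsetSum]
    refine Finset.sum_congr rfl fun t _ => ?_
    rw [eval_mul, eval_C, mul_comm, ← hpe]; rfl
  refine ⟨s, c, ?_, ?_, key⟩
  · intro t ht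
    obtain ⟨i, _, rfl⟩ := Finset.mem_image.1 ht
    have h1 : (0 : ℝ) < i + 2 := by positivity
    refine ⟨by positivity, ?_⟩
    rw [div_lt_iff₀ h1]
    nlinarith
  · have := key 0
    have h1 : (1 : E →L[ℝ] E).det = 1 := by
      show LinearMap.det (1 : E →ₗ[ℝ] E) = 1
      simp
    simpa [h1] using this.symm

lemma aux_lip {E : Type*} [NormedAddCommGroup E] [NormedSpace ℝ E]
    (g : E → E) (R : ℝ) (K : NNReal) (hg : LipschitzOnWith K g (Metric.closedBall 0 R))
    (h0 : ∀ x, ‖x‖ = R → g x = 0) :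
    LipschitzWith K ((Metric.closedBall (0:E) R).indicator g) := by
  classical
  set G := (Metric.closedBall (0:E) R).indicator g with hG
  have key : ∀ x y : E, ‖x‖ ≤ R → R < ‖y‖ → dist (G x) (G y) ≤ K * dist x y := by
    intro x y hx hy
    have hc : ContinuousOn (fun t : ℝ => ‖AffineMap.lineMap x y t‖) (Icc 0 1) := by
      apply Continuous.continuousOn
      exact (AffineMap.lineMap_continuous (p := x) (q := y)).norm
    obtain ⟨t, ht, hts⟩ := intermediate_value_Icc (zero_le_one' ℝ) hc
      (show R ∈ Icc _ _ by simpa using ⟨hx, hy.le⟩)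
    have hts' : ‖AffineMap.lineMap x y t‖ = R := hts
    have e1 : G x = g x := indicator_of_mem (by simpa using hx) _
    have e2 : G y = 0 := indicator_of_notMem (by simpa using hy) _
    rw [e1, e2, ← h0 _ hts']
    refine (hg.dist_le_mul _ (by simpa using hx) _ (by simp [hts'])).trans ?_
    gcongr
    rw [dist_left_lineMap, Real.norm_of_nonneg ht.1]
    exact mul_le_of_le_one_left dist_nonneg ht.2
  refine LipschitzWith.of_dist_le_mul fun x y => ?_
  rcases le_or_gt ‖x‖ R with hx | hx <;> rcases le_or_gt ‖y‖ R with hy | hy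
  · have e1 : G x = g x := indicator_of_mem (by simpa using hx) _
    have e2 : G y = g y := indicator_of_mem (by simpa using hy) _
    rw [e1, e2]
    exact hg.dist_le_mul _ (by simpa using hx) _ (by simpa using hy)
  · exact key x y hx hy
  · rw [dist_comm, dist_comm x]; exact key y x hy hx
  · have e1 : G x = 0 := indicator_of_notMem (by simpa using hx) _
    have e2 : G y = 0 := indicator_of_notMem (by simpa using hy) _
    rw [e1, e2, dist_self]; positivity

lemma aux_vol {E : Type*} [NormedAddCommGroup E] [NormedSpace ℝ E] [FiniteDimensional ℝ E]
    [MeasurableSpace E] [BorelSpace E] (μ : Measure E) [μ.IsAddHaarMeasure]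
    (g : E → E) (hgd : ContDiff ℝ 1 g) (R : ℝ)
    (h0 : ∀ x, ‖x‖ = R → g x = 0) :
    ∃ δ > 0, ∀ t : ℝ, 0 < t → t < δ →
      ∫ x in Metric.ball (0:E) R, (1 + t • fderiv ℝ g x).det ∂μ = μ.real (Metric.ball (0:E) R) := by
  have hfc : Continuous (fderiv ℝ g) := hgd.continuous_fderiv one_ne_zero
  obtain ⟨K, hK⟩ : ∃ K : NNReal, ∀ x ∈ Metric.closedBall (0:E) R, ‖fderiv ℝ g x‖₊ ≤ K := by
    obtain ⟨C, hC⟩ := (isCompact_closedBall (0:E) R).exists_bound_of_continuousOn hfc.continuousOn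
    exact ⟨C.toNNReal, fun x hx => NNReal.coe_le_coe.1 ((hC x hx).trans (Real.le_coe_toNNReal C))⟩
  have hlip := aux_lip g R K (Convex.lipschitzOnWith_of_nnnorm_fderiv_le (𝕜 := ℝ)
    (fun x _ => hgd.differentiable one_ne_zero x) hK (convex_closedBall 0 R)) h0
  set G := (Metric.closedBall (0:E) R).indicator g with hG
  have hdet1 : (1 : E →L[ℝ] E).det = 1 := by
    show LinearMap.det (1 : E →ₗ[ℝ] E) = 1
    simp
  obtain ⟨ε, hε, hdet⟩ : ∃ ε > 0, ∀ T : E →L[ℝ] E, ‖T‖ < ε → 0 < (1 + T).det := by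
    have hc : Continuous fun T : E →L[ℝ] E => (1 + T).det :=
      ContinuousLinearMap.continuous_det.comp (continuous_const.add continuous_id)
    have := (hc.continuousAt (x := (0 : E →L[ℝ] E))).eventually (p := fun r => 0 < r)
      (lt_mem_nhds (by simp [hdet1]))
    obtain ⟨ε, hε, h⟩ := Metric.eventually_nhds_iff.1 this
    exact ⟨ε, hε, fun T hT => h (by simpa using hT)⟩
  refine ⟨min ε 1 / (K + 1), by positivity, fun t ht0 ht => ?_⟩
  rw [lt_div_iff₀ (by positivity)] at ht
  have htε : t * (K + 1) < ε := ht.trans_le (min_le_left _ _)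
  have ht1 : t * (K + 1) < 1 := ht.trans_le (min_le_right _ _)
  let h : E → E := fun x => x + t • G x
  let c : NNReal := ⟨t, ht0.le⟩ * K
  have hc1 : c < 1 := by
    rw [← NNReal.coe_lt_coe]
    show t * K < 1
    linarith
  have happ : ApproximatesLinearOn h ((ContinuousLinearEquiv.refl ℝ E : E ≃L[ℝ] E) : E →L[ℝ] E) univ c := by
    intro x _ y _
    have : h x - h y - (x - y) = t • (G x - G y) := by simp only [h, smul_sub]; abel
    simp only [ContinuousLinearEquiv.coe_refl, ContinuousLinearMap.coe_id', id_eq]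
    rw [this, norm_smul, Real.norm_of_nonneg ht0.le]
    have := hlip.dist_le_mul x y
    rw [dist_eq_norm, dist_eq_norm] at this
    calc t * ‖G x - G y‖ ≤ t * (K * ‖x - y‖) := by gcongr
      _ = (t * K) * ‖x - y‖ := by ring
  have hcond : Subsingleton E ∨ c < ‖((ContinuousLinearEquiv.refl ℝ E).symm : E →L[ℝ] E)‖₊⁻¹ := by
    rcases subsingleton_or_nontrivial E with h | h
    · exact Or.inl h
    · right
      simpa using hc1
  have hinj : Function.Injective h := by
    intro x y hxy
    have := happ.injOn hcond (mem_univ x) (mem_univ y) hxy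
    exact this
  have hsurj : Function.Surjective h := happ.surjective hcond
  have hout : ∀ x, x ∉ Metric.ball (0:E) R → h x = x := by
    intro x hx
    have hx' : R ≤ ‖x‖ := by simpa using hx
    have : G x = 0 := by
      rcases hx'.eq_or_lt with e | e
      · rw [hG, indicator_of_mem (by simp [← e]), h0 x e.symm]
      · exact indicator_of_notMem (by simpa using e) _
    simp [h, this]
  have himg : h '' Metric.ball (0:E) R = Metric.ball (0:E) R := by
    apply Subset.antisymm
    · rintro _ ⟨x, hx, rfl⟩
      by_contra hcon
      have := hinj (hout _ hcon)
      rw [this] at hcon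
      exact hcon hx
    · intro y hy
      obtain ⟨x, rfl⟩ := hsurj y
      by_cases hx : x ∈ Metric.ball (0:E) R
      · exact ⟨x, hx, rfl⟩
      · rw [hout x hx] at hy; exact absurd hy hx
  have hder : ∀ x ∈ Metric.ball (0:E) R,
      HasFDerivWithinAt h (1 + t • fderiv ℝ g x) (Metric.ball (0:E) R) x := by
    intro x hx
    have h1 : HasFDerivAt (fun x => x + t • g x) (1 + t • fderiv ℝ g x) x :=
      (hasFDerivAt_id x).add (((hgd.differentiable one_ne_zero x).hasFDerivAt).const_smul t)
    refine h1.hasFDerivWithinAt.congr (fun y hy => ?_) ?_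
    · simp only [h, hG]; rw [indicator_of_mem (Metric.ball_subset_closedBall hy)]
    · simp only [h, hG]; rw [indicator_of_mem (Metric.ball_subset_closedBall hx)]
  have := integral_image_eq_integral_abs_det_fderiv_smul μ measurableSet_ball hder hinj.injOn
    (fun _ => (1:ℝ))
  rw [himg] at this
  simp only [smul_eq_mul, mul_one, setIntegral_const] at this
  rw [this]
  refine setIntegral_congr_fun measurableSet_ball fun x hx => ?_
  have : 0 < (1 + t • fderiv ℝ g x).det := by
    apply hdet
    rw [norm_smul, Real.norm_of_nonneg ht0.le]
    have : ‖fderiv ℝ g x‖ ≤ K := hK x (Metric.ball_subset_closedBall hx)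
    nlinarith
  exact (abs_of_pos this).symm

lemma aux_noretract {E : Type*} [NormedAddCommGroup E] [InnerProductSpace ℝ E]
    [FiniteDimensional ℝ E] [MeasurableSpace E] [BorelSpace E]
    (f : E → E) (hf : ContDiff ℝ 1 f) (R : ℝ) (hR : 0 < R) (h1 : ∀ x, ‖x‖ = R → f x = x)
    (h2 : ∀ x, ‖f x‖ = R) : False := by
  let μ : Measure E := Measure.addHaar
  let g : E → E := fun x => f x - x
  have hg : ContDiff ℝ 1 g := hf.sub contDiff_id
  obtain ⟨δ, hδ, hvol⟩ := aux_vol μ g hg R (fun x hx => by simp [g, h1 x hx])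
  obtain ⟨s, c, hs, hc, hdet⟩ := aux_det_interp E δ hδ
  have hgf : ∀ x, 1 + fderiv ℝ g x = fderiv ℝ f x := by
    intro x
    have : fderiv ℝ g x = fderiv ℝ f x - 1 := by
      have := ((hf.differentiable one_ne_zero x).hasFDerivAt.sub (hasFDerivAt_id x)).fderiv
      exact this
    rw [this]; abel
  have hzero : ∀ x, (1 + fderiv ℝ g x).det = 0 := by
    intro x
    rw [hgf]
    by_contra hne
    have hne' : LinearMap.det (fderiv ℝ f x : E →ₗ[ℝ] E) ≠ 0 := hne
    obtain ⟨v, hv⟩ := (LinearMap.equivOfDetNeZero _ hne').surjective (f x)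
    have hv' : fderiv ℝ f x v = f x := hv
    have hd := (hf.differentiable one_ne_zero x).hasFDerivAt
    have hd2 := hd.inner ℝ hd
    have hconst : (fun y => inner ℝ (f y) (f y)) = fun _ => R ^ 2 := by
      funext y; rw [real_inner_self_eq_norm_sq, h2]
    rw [hconst] at hd2
    have := hd2.unique (hasFDerivAt_const _ _)
    have := congrArg (fun T => T v) this
    simp [hv', h2] at this
    exact hR.ne' this
  have hint : ∀ t : ℝ, IntegrableOn (fun x => (1 + t • fderiv ℝ g x).det) (Metric.ball (0:E) R) μ := by
    intro t
    have hcont : Continuous fun x => (1 + t • fderiv ℝ g x).det :=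
      ContinuousLinearMap.continuous_det.comp
        (continuous_const.add ((hg.continuous_fderiv one_ne_zero).const_smul t))
    exact (hcont.continuousOn.integrableOn_compact (isCompact_closedBall (0:E) R)).mono_set
      Metric.ball_subset_closedBall
  have e1 : ∫ x in Metric.ball (0:E) R, (1 + fderiv ℝ g x).det ∂μ = μ.real (Metric.ball (0:E) R) := by
    have hfun : (fun x => (1 + fderiv ℝ g x).det) =
        fun x => ∑ t ∈ s, c t * (1 + t • fderiv ℝ g x).det := funext fun x => hdet _
    rw [hfun, integral_finsetSum _ (fun t _ => (hint t).const_mul _)]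
    simp_rw [integral_const_mul]
    rw [Finset.sum_congr rfl (fun t ht => by rw [hvol t (hs t ht).1 (hs t ht).2]),
      ← Finset.sum_mul, hc, one_mul]
  simp_rw [hzero] at e1
  simp only [integral_zero] at e1
  have : 0 < μ.real (Metric.ball (0:E) R) :=
    ENNReal.toReal_pos (Metric.measure_ball_pos μ 0 hR).ne' measure_ball_lt_top.ne
  linarith

lemma aux_zero {E : Type*} [NormedAddCommGroup E] [InnerProductSpace ℝ E]
    [FiniteDimensional ℝ E] [MeasurableSpace E] [BorelSpace E]
    (F : E → E) (hF : Continuous F) (ρ : ℝ) (hρ : ∀ x, ρ ≤ ‖x‖ → F x = x) : ∃ x, F x = 0 := by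
  by_contra! hne
  set R := max ρ 0 + 1 with hRdef
  have hR : 0 < R := by positivity
  have hRρ : ρ < R := lt_of_le_of_lt (le_max_left ρ 0) (lt_add_one _)
  obtain ⟨g, hg, hga, hgS, -⟩ := hF.exists_contDiff_approx_and_eqOn (ε := fun x => ‖F x‖ / 2) 1
    (by fun_prop) (fun x => by have := norm_pos_iff.2 (hne x); positivity)
    (S := {x | R ≤ ‖x‖}) (U := {x | ρ < ‖x‖}) (isClosed_le continuous_const continuous_norm)
    ((isOpen_lt continuous_const continuous_norm).mem_nhdsSet.2
      (fun x hx => lt_of_lt_of_le hRρ hx))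
    (contDiffOn_id.congr fun x hx => hρ x (le_of_lt hx))
  have hg0 : ∀ x, g x ≠ 0 := by
    intro x h0
    have := hga x
    rw [h0, dist_zero_left] at this
    have := norm_nonneg (F x)
    linarith
  have hgn : ∀ x, ‖g x‖ ≠ 0 := fun x => norm_ne_zero_iff.2 (hg0 x)
  refine aux_noretract (fun x => (R / ‖g x‖) • g x) ?_ R hR ?_ ?_
  · exact (contDiff_const.div (hg.norm ℝ hg0) hgn).smul hg
  · intro x hx
    have : g x = x := by rw [hgS (show R ≤ ‖x‖ from hx.ge), hρ x (hRρ.le.trans hx.ge)]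
    simp only [this, hx, div_self hR.ne', one_smul]
  · intro x
    rw [norm_smul, norm_div, norm_norm, Real.norm_of_nonneg hR.le, div_mul_cancel₀ _ (hgn x)]

lemma aux_surj {E : Type*} [NormedAddCommGroup E] [NormedSpace ℝ E]
    [FiniteDimensional ℝ E]
    (F : E → E) (hF : Continuous F) (ρ : ℝ) (hρ : ∀ x, ρ ≤ ‖x‖ → F x = x) (w : E) :
    ∃ x, F x = w := by
  let e : E ≃L[ℝ] EuclideanSpace ℝ (Fin (Module.finrank ℝ E)) := toEuclidean
  let C : ℝ := ‖(e : E →L[ℝ] EuclideanSpace ℝ (Fin (Module.finrank ℝ E)))‖ + 1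
  have hC : 0 < C := by positivity
  obtain ⟨y, hy⟩ := aux_zero (fun y => e (F (e.symm y + w) - w)) (by fun_prop) (C * (ρ + ‖w‖)) (by
    intro y hy
    have h1 : ‖y‖ ≤ C * ‖e.symm y‖ := by
      have := (e : E →L[ℝ] EuclideanSpace ℝ (Fin (Module.finrank ℝ E))).le_opNorm (e.symm y)
      simp only [ContinuousLinearEquiv.coe_coe, ContinuousLinearEquiv.apply_symm_apply] at this
      refine this.trans ?_
      gcongr
      simp [C]
    have h2 : ρ + ‖w‖ ≤ ‖e.symm y‖ := le_of_mul_le_mul_left (hy.trans h1) hC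
    have h3 : ρ ≤ ‖e.symm y + w‖ := by
      have := norm_sub_le (e.symm y + w) w
      rw [add_sub_cancel_right] at this
      linarith
    rw [hρ _ h3]; simp)
  refine ⟨e.symm y + w, ?_⟩
  have := (map_eq_zero_iff e e.injective).1 hy
  exact sub_eq_zero.1 this

end Brouwer

section Key

lemma aux_key2 {J V : Type*} [Fintype J] [NormedAddCommGroup V] [NormedSpace ℝ V]
    [FiniteDimensional ℝ V]
    (G : (J → Metric.sphere (0:V) 1) × I → (J → Metric.sphere (0:V) 1)) (hG : Continuous G)
    (hG0 : ∀ x, G (x, 0) = x) (w : J → Metric.sphere (0:V) 1) (hw : ∀ x, G (x, 1) ≠ w) : False := by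
  classical
  let N : J → V → Metric.sphere (0:V) 1 := fun j v => if h : v = 0 then w j else
    ⟨‖v‖⁻¹ • v, by simp [norm_smul, h]⟩
  have hN : ∀ j v, ‖v‖ • (N j v : V) = v := by
    intro j v
    by_cases h : v = 0
    · simp [h]
    · simp [N, h]
  have hNc : ∀ j v, v ≠ 0 → ContinuousAt (N j) v := by
    intro j v hv
    rw [Topology.IsInducing.subtypeVal.continuousAt_iff]
    have : (Subtype.val ∘ N j) =ᶠ[nhds v] fun v => ‖v‖⁻¹ • v := by
      filter_upwards [isOpen_ne.mem_nhds hv] with u hu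
      have : u ≠ 0 := hu
      simp [N, this]
    refine ContinuousAt.congr ?_ this.symm
    exact (continuousAt_id.norm.inv₀ (by simpa using hv)).smul continuousAt_id
  let φ : (J → V) → ℝ := fun z => 1 - ‖fun j => ‖z j‖ - 2‖
  have hφ : Continuous φ := by fun_prop
  let τ : (J → V) → I := fun z => Set.projIcc 0 1 zero_le_one (φ z)
  have hτ : Continuous τ := continuous_projIcc.comp hφ
  let F : (J → V) → (J → V) := fun z j => ‖z j‖ • (G (fun j => N j (z j), τ z) j : V)
  have hF0 : ∀ z, φ z ≤ 0 → F z = z := by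
    intro z hz
    have : τ z = 0 := Set.projIcc_of_le_left _ hz
    funext j
    simp only [F, this, hG0, hN]
  have hFc : Continuous F := by
    rw [continuous_iff_continuousAt]
    intro z
    by_cases h : ∀ j, z j ≠ 0
    · have h1 : ContinuousAt (fun z : J → V => G (fun j => N j (z j), τ z)) z := by
        refine hG.continuousAt.comp (ContinuousAt.prodMk ?_ hτ.continuousAt)
        refine continuousAt_pi.2 fun j => ?_
        exact ContinuousAt.comp (f := fun z : J → V => z j) (hNc j (z j) (h j)) (continuous_apply j).continuousAt
      refine continuousAt_pi.2 fun j => ?_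
      refine ContinuousAt.smul ((continuous_apply j).norm.continuousAt) ?_
      exact continuous_subtype_val.continuousAt.comp ((continuous_apply j).continuousAt.comp h1)
    · push Not at h
      obtain ⟨j, hj⟩ := h
      refine continuousAt_id.congr ?_
      have hc : Continuous fun z : J → V => ‖z j‖ := by fun_prop
      have : ∀ᶠ y in nhds z, ‖y j‖ < 1 := hc.continuousAt.eventually_lt_const (by simp [hj])
      filter_upwards [this] with y hy
      refine (hF0 y ?_).symm
      have := norm_le_pi_norm (fun j => ‖y j‖ - 2) j
      have h2 : 1 ≤ ‖‖y j‖ - 2‖ := by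
        rw [Real.norm_eq_abs, le_abs]; right; linarith
      simp only [φ]; linarith
  obtain ⟨z, hz⟩ := aux_surj F hFc 3 (by
    intro z hz
    apply hF0
    by_contra! hlt
    have h1 : ‖fun j => ‖z j‖ - 2‖ < 1 := by simp only [φ] at hlt; linarith
    have h2 : ‖z‖ < 3 := by
      rw [pi_norm_lt_iff (by norm_num)]
      intro j
      have := (norm_le_pi_norm (fun j => ‖z j‖ - 2) j).trans_lt h1
      rw [Real.norm_eq_abs, abs_lt] at this
      linarith [this.2]
    linarith) (fun j => (2:ℝ) • (w j : V))
  have hn : ∀ j, ‖z j‖ = 2 := by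
    intro j
    have := congrArg norm (congrFun hz j)
    simpa [F, norm_smul] using this
  have hτ1 : τ z = 1 := by
    apply Set.projIcc_of_right_le
    have : (fun j => ‖z j‖ - 2) = 0 := by funext j; simp [hn j]
    simp [φ, this]
  apply hw (fun j => N j (z j))
  funext j
  apply Subtype.ext
  have := congrFun hz j
  simp only [F, hn, hτ1] at this
  exact smul_right_injective V (two_ne_zero) this

lemma aux_ext {X Y : Type*} [TopologicalSpace X] [TopologicalSpace Y] (U : Set X) (hU : IsOpen U)
    (l : X → I) (hl : Continuous l) (hs : tsupport (fun x => (l x : ℝ)) ⊆ U)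
    (H : I × U → Y) (hH : Continuous H) (b : X → Y) (hb : Continuous b)
    (h0 : ∀ x : U, H (0, x) = b x) :
    ∃ G : X × I → Y, Continuous G ∧ (∀ x, G (x, 0) = b x) ∧
      ∀ x (hx : x ∈ U), l x = 1 → G (x, 1) = H (1, ⟨x, hx⟩) := by
  classical
  let G : X × I → Y := fun p => if h : p.1 ∈ U then H (p.2 * l p.1, ⟨p.1, h⟩) else b p.1
  refine ⟨G, ?_, ?_, ?_⟩
  · rw [continuous_iff_continuousAt]
    rintro ⟨x, t⟩
    by_cases hx : x ∈ U
    · have hO : IsOpen (Prod.fst ⁻¹' U : Set (X × I)) := hU.preimage continuous_fst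
      have : ContinuousOn G (Prod.fst ⁻¹' U) := by
        rw [continuousOn_iff_continuous_domRestrict]
        have e : (Prod.fst ⁻¹' U : Set (X × I)).domRestrict G =
            fun p => H (p.1.2 * l p.1.1, ⟨p.1.1, p.2⟩) := by
          funext p
          have hp : p.1.1 ∈ U := p.2
          simp [G, Set.domRestrict, hp]
        rw [e]
        fun_prop
      exact this.continuousAt (hO.mem_nhds hx)
    · have hx' : x ∉ tsupport (fun x => (l x : ℝ)) := fun h => hx (hs h)
      have hO : IsOpen (Prod.fst ⁻¹' (tsupport (fun x => (l x : ℝ)))ᶜ : Set (X × I)) :=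
        (isClosed_tsupport _).isOpen_compl.preimage continuous_fst
      have hb' : ContinuousAt (fun p : X × I => b p.1) (x, t) := by fun_prop
      refine hb'.congr ?_
      filter_upwards [hO.mem_nhds hx'] with p hp
      have : l p.1 = 0 := Subtype.ext (image_eq_zero_of_notMem_tsupport (f := fun x => (l x : ℝ)) hp)
      by_cases hpU : p.1 ∈ U
      · simp [G, hpU, this, h0]
      · simp [G, hpU]
  · intro x
    by_cases hx : x ∈ U
    · simp [G, hx, h0]
    · simp [G, hx]
  · intro x hx h1
    simp [G, hx, h1]

/-- Unit-sphere coordinate as a nonzero vector. -/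
def auxCoord {J V : Type*} [NormedAddCommGroup V] [NormedSpace ℝ V]
    (U : Set (J → Metric.sphere (0:V) 1)) (j : J) : C(U, {v : V // v ≠ 0}) :=
  ⟨fun x => ⟨(x.1 j : V), fun h => by
      have h1 : ‖(x.1 j : V)‖ = 1 := by simp
      rw [h] at h1; simp at h1⟩, Continuous.subtype_mk
    (continuous_subtype_val.comp ((continuous_apply j).comp continuous_subtype_val)) _⟩

/-- Normalisation of a nonzero vector. -/
noncomputable def auxNrm {V : Type*} [NormedAddCommGroup V] [NormedSpace ℝ V] :
    C({v : V // v ≠ 0}, Metric.sphere (0:V) 1) :=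
  ⟨fun v => ⟨‖(v : V)‖⁻¹ • (v : V), by simp [norm_smul, v.2]⟩, by
    refine Continuous.subtype_mk ?_ _
    refine Continuous.smul (Continuous.inv₀ (by fun_prop) ?_) continuous_subtype_val
    intro v
    simpa using v.2⟩

lemma aux_key {J V : Type*} [Fintype J] [NormedAddCommGroup V] [NormedSpace ℝ V]
    [FiniteDimensional ℝ V] (U : J → Set (J → Metric.sphere (0:V) 1)) (hU : ∀ j, IsOpen (U j))
    (hcov : ⋃ j, U j = univ) (e : J → {v : V // v ≠ 0})
    (hH : ∀ j, (auxCoord (U j) j).Homotopic (ContinuousMap.const _ (e j))) : False := by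
  classical
  obtain ⟨ρ, hρ⟩ := PartitionOfUnity.exists_isSubordinate (isClosed_univ) U hU (by rw [hcov])
  let l : J → (J → Metric.sphere (0:V) 1) → I := fun j x =>
    Set.projIcc 0 1 zero_le_one ((Fintype.card J : ℝ) * ρ j x)
  have hl : ∀ j, Continuous (l j) := fun j => continuous_projIcc.comp (by fun_prop)
  have hls : ∀ j, tsupport (fun x => (l j x : ℝ)) ⊆ U j := by
    intro j
    refine Subset.trans (closure_mono ?_) (hρ j)
    intro x hx hx0
    apply hx
    have : l j x = 0 := Set.projIcc_of_le_left _ (by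
      have h0 : ρ j x = 0 := hx0
      simp [h0])
    simp [this]
  have hl1 : ∀ x, ∃ j, l j x = 1 := by
    intro x
    have hsum : ∑ j, ρ j x = 1 := by
      have := ρ.sum_eq_one (mem_univ x)
      rwa [finsum_eq_sum_of_fintype] at this
    by_contra! hcon
    have hlt : ∀ j, (Fintype.card J : ℝ) * ρ j x < 1 := by
      intro j
      by_contra! h
      exact hcon j (Set.projIcc_of_right_le _ h)
    have hne : (Finset.univ : Finset J).Nonempty := by
      rw [Finset.nonempty_iff_ne_empty]
      intro h
      rw [h] at hsum; simp at hsum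
    have := Finset.sum_lt_sum_of_nonempty hne (fun j _ => hlt j)
    rw [← Finset.mul_sum, hsum] at this
    simp at this
  have hex : ∀ j, ∃ G : (J → Metric.sphere (0:V) 1) × I → Metric.sphere (0:V) 1, Continuous G ∧
      (∀ x, G (x, 0) = x j) ∧ ∀ x, l j x = 1 → G (x, 1) = auxNrm (e j) := by
    intro j
    obtain ⟨H⟩ := hH j
    obtain ⟨G, hG, hG0, hG1⟩ := aux_ext (U j) (hU j) (l j) (hl j) (hls j)
      (fun p => auxNrm (H p)) (by fun_prop) (fun x => x j) (by fun_prop) (by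
        intro x
        rw [H.apply_zero]
        apply Subtype.ext
        simp [auxNrm, auxCoord])
    refine ⟨G, hG, hG0, fun x hx => ?_⟩
    have hxU : x ∈ U j := hls j (subset_tsupport _ (by simp [hx]))
    rw [hG1 x hxU hx, H.apply_one]
    rfl
  choose G hG hG0 hG1 using hex
  refine aux_key2 (fun p j => G j p) (by fun_prop) (fun x => funext fun j => hG0 j x)
    (fun j => - auxNrm (e j)) ?_
  intro x hx
  obtain ⟨j, hj⟩ := hl1 x
  have := congrFun hx j
  simp only [hG1 j x hj] at this
  have h2 := congrArg Subtype.val this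
  have h3 : ((-auxNrm (e j) : Metric.sphere (0:V) 1) : V) = -((auxNrm (e j) : Metric.sphere (0:V) 1) : V) := rfl
  rw [h3, eq_neg_iff_add_eq_zero, ← two_smul ℝ, smul_eq_zero_iff_right two_ne_zero] at h2
  have h4 : ‖((auxNrm (e j) : Metric.sphere (0:V) 1) : V)‖ = 1 := by simp
  rw [h2] at h4
  simp at h4

end Key

section Config

lemma aux_line {X V : Type*} [TopologicalSpace X] [NormedAddCommGroup V] [NormedSpace ℝ V]
    (f g : C(X, {v : V // v ≠ 0})) (R : ℝ) (hR : 0 < R)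
    (h : ∀ x, ‖(f x : V) - R • (g x : V)‖ < R * ‖(g x : V)‖) : f.Homotopic g := by
  refine ⟨⟨⟨fun p => ⟨(1 - (p.1 : ℝ)) • (f p.2 : V) + (p.1 : ℝ) • (g p.2 : V), ?_⟩, ?_⟩, ?_, ?_⟩⟩
  · obtain ⟨t, x⟩ := p
    intro h0
    simp only at h0
    have ht0 := t.2.1
    have ht1 := t.2.2
    have e1 : (1 - (t:ℝ)) • ((f x : V) - R • (g x : V)) =
        - (((t:ℝ) + (1 - t) * R) • (g x : V)) := by
      have : (1 - (t:ℝ)) • (f x : V) = - ((t:ℝ) • (g x : V)) := eq_neg_of_add_eq_zero_left h0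
      rw [smul_sub, this, smul_smul, add_smul, neg_add, sub_eq_add_neg]
    have e2 := congrArg norm e1
    rw [norm_neg, norm_smul, norm_smul, Real.norm_of_nonneg (by linarith),
      Real.norm_of_nonneg (by nlinarith)] at e2
    have hg : 0 < ‖(g x : V)‖ := norm_pos_iff.2 (g x).2
    have hx := h x
    rcases ht1.eq_or_lt with e | e
    · rw [e] at h0
      simp at h0
      exact (g x).2 h0
    · have : (1 - (t:ℝ)) * ‖(f x : V) - R • (g x : V)‖ < (1 - (t:ℝ)) * (R * ‖(g x : V)‖) :=
        mul_lt_mul_of_pos_left hx (by linarith)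
      nlinarith [mul_nonneg ht0 hg.le]
  · refine Continuous.subtype_mk ?_ _
    fun_prop
  · intro x; simp
  · intro x; simp

variable {V : Type*} [NormedAddCommGroup V] [NormedSpace ℝ V] {M r n : ℕ}

/-- index set of the test torus -/
abbrev AuxJ (M r n : ℕ) : Type := Fin M ⊕ (Fin (r + 2) × Fin (n + 1))

/-- extended coordinates -/
def auxY (e : V) (x : AuxJ M r n → Metric.sphere (0:V) 1) (b : ℕ) : V :=
  if h : b < M then (x (Sum.inl ⟨b, h⟩) : V) else e

/-- chain of obstacles -/
noncomputable def auxC (e : V) (x : AuxJ M r n → Metric.sphere (0:V) 1) (s : ℕ) : V :=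
  ∑ b ∈ Finset.range s, ((1/4 : ℝ) ^ (b + 1)) • auxY e x b

/-- obstacles -/
noncomputable def auxO (e : V) (x : AuxJ M r n → Metric.sphere (0:V) 1) : Fin (M + 2) → V :=
  Fin.cons ((2:ℝ) • e) (fun s : Fin (M + 1) => auxC e x s)

/-- moving points -/
noncomputable def auxZ (e : V) (x : AuxJ M r n → Metric.sphere (0:V) 1) (k : Fin (r + 2))
    (i : Fin (n + 1)) : V :=
  (if k = 0 then auxC e x M else (2:ℝ) • e) +
    ((1/4 : ℝ) ^ (M + i + 1)) • (x (Sum.inr (k, i)) : V)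

lemma auxY_norm (e : V) (he : ‖e‖ = 1) (x : AuxJ M r n → Metric.sphere (0:V) 1) (b : ℕ) :
    ‖auxY e x b‖ = 1 := by
  unfold auxY; split_ifs <;> simp [he]

lemma auxY_cont (e : V) (b : ℕ) :
    Continuous fun x : AuxJ M r n → Metric.sphere (0:V) 1 => auxY e x b := by
  unfold auxY; split_ifs
  · exact continuous_subtype_val.comp (continuous_apply _)
  · exact continuous_const

lemma auxC_cont (e : V) (s : ℕ) :
    Continuous fun x : AuxJ M r n → Metric.sphere (0:V) 1 => auxC e x s := by
  unfold auxC
  exact continuous_finsetSum _ fun b _ => (auxY_cont e b).const_smul _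

lemma auxO_cont (e : V) (a : Fin (M + 2)) :
    Continuous fun x : AuxJ M r n → Metric.sphere (0:V) 1 => auxO e x a := by
  unfold auxO
  refine Fin.cases ?_ (fun s => ?_) a
  · exact continuous_const
  · simpa using auxC_cont e s

lemma auxZ_cont (e : V) (k : Fin (r + 2)) (i : Fin (n + 1)) :
    Continuous fun x : AuxJ M r n → Metric.sphere (0:V) 1 => auxZ e x k i := by
  unfold auxZ
  refine Continuous.add ?_
    ((continuous_subtype_val.comp (continuous_apply (Sum.inr (k, i)))).const_smul _)
  split_ifs
  · exact auxC_cont e M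
  · exact continuous_const

lemma auxC_diff (e : V) (he : ‖e‖ = 1) (x : AuxJ M r n → Metric.sphere (0:V) 1) (s k : ℕ) :
    ‖auxC e x (s + k) - auxC e x s‖ ≤ ((1/4 : ℝ) ^ s - (1/4) ^ (s + k)) / 3 := by
  induction k with
  | zero => simp
  | succ k ih =>
    have h1 : auxC e x (s + (k + 1)) - auxC e x s = (auxC e x (s + k) - auxC e x s) +
        ((1/4 : ℝ) ^ (s + k + 1)) • auxY e x (s + k) := by
      unfold auxC
      rw [← add_assoc, Finset.sum_range_succ]; abel
    rw [h1]
    refine (norm_add_le _ _).trans ?_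
    rw [norm_smul, auxY_norm e he, mul_one, Real.norm_of_nonneg (by positivity)]
    have : (1/4 : ℝ) ^ (s + (k + 1)) = (1/4) ^ (s + k) / 4 := by
      rw [← add_assoc, pow_succ]; ring
    rw [add_assoc, this]
    linarith

lemma auxC_norm (e : V) (he : ‖e‖ = 1) (x : AuxJ M r n → Metric.sphere (0:V) 1) (s : ℕ) :
    ‖auxC e x s‖ ≤ 1/3 := by
  have := auxC_diff e he x 0 s
  have h0 : auxC e x 0 = 0 := by simp [auxC]
  simp only [zero_add, h0, sub_zero, pow_zero] at this
  have : (0:ℝ) ≤ (1/4) ^ s := by positivity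
  linarith

lemma auxC_tail (e : V) (he : ‖e‖ = 1) (x : AuxJ M r n → Metric.sphere (0:V) 1) (s t : ℕ)
    (h : s < t) : ‖auxC e x t - auxC e x s - ((1/4 : ℝ) ^ (s + 1)) • auxY e x s‖ ≤
      ((1/4 : ℝ) ^ (s + 1) - (1/4) ^ t) / 3 := by
  obtain ⟨k, rfl⟩ := Nat.exists_eq_add_of_le (Nat.succ_le_of_lt h)
  have := auxC_diff e he x (s + 1) k
  have h1 : auxC e x (s + 1) = auxC e x s + ((1/4 : ℝ) ^ (s + 1)) • auxY e x s := by
    unfold auxC; rw [Finset.sum_range_succ]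
  rw [h1] at this
  simpa [sub_sub] using this

lemma aux_ne {V : Type*} [NormedAddCommGroup V] [NormedSpace ℝ V] {u v : V} (h : ‖u - v‖ < ‖v‖) :
    u ≠ 0 := by
  rintro rfl
  simp at h

lemma aux_small (i : ℕ) : (1/4 : ℝ) ^ (i + 1) ≤ 1/4 := by
  rw [pow_succ]
  have : (1/4 : ℝ) ^ i ≤ 1 := pow_le_one₀ (by norm_num) (by norm_num)
  linarith

lemma auxZ_last (e : V) (x : AuxJ M r n → Metric.sphere (0:V) 1) (i : Fin (n + 1)) :
    auxZ e x 0 i - auxO e x (Fin.last (M + 1)) = ((1/4 : ℝ) ^ (M + i + 1)) • (x (Sum.inr (0, i)) : V) := by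
  have : Fin.last (M + 1) = Fin.succ (Fin.last M) := rfl
  rw [this]
  simp [auxZ, auxO]

lemma auxZ_first (e : V) (x : AuxJ M r n → Metric.sphere (0:V) 1) (k : Fin (r + 2)) (hk : k ≠ 0)
    (i : Fin (n + 1)) :
    auxZ e x k i - auxO e x 0 = ((1/4 : ℝ) ^ (M + i + 1)) • (x (Sum.inr (k, i)) : V) := by
  simp [auxZ, auxO, hk]

lemma auxZ_far (e : V) (he : ‖e‖ = 1) (x : AuxJ M r n → Metric.sphere (0:V) 1) (k : Fin (r + 2))
    (hk : k ≠ 0) (i : Fin (n + 1)) (s : Fin (M + 1)) :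
    ‖auxZ e x k i - auxO e x s.succ - (2:ℝ) • e‖ < 2 := by
  have h1 : auxZ e x k i - auxO e x s.succ - (2:ℝ) • e =
      ((1/4 : ℝ) ^ (M + i + 1)) • (x (Sum.inr (k, i)) : V) - auxC e x s := by
    simp [auxZ, auxO, hk]; abel
  rw [h1]
  refine (norm_sub_le _ _).trans_lt ?_
  rw [norm_smul, Real.norm_of_nonneg (by positivity)]
  have := auxC_norm e he x s
  have := aux_small (M + i)
  have h5 : ‖(x (Sum.inr (k, i)) : V)‖ = 1 := by simp
  rw [h5, mul_one]
  linarith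

lemma auxZ_far0 (e : V) (he : ‖e‖ = 1) (x : AuxJ M r n → Metric.sphere (0:V) 1)
    (i : Fin (n + 1)) :
    ‖auxZ e x 0 i - auxO e x 0 - (2:ℝ) • (-e)‖ < 2 := by
  have h1 : auxZ e x 0 i - auxO e x 0 - (2:ℝ) • (-e) =
      auxC e x M + ((1/4 : ℝ) ^ (M + i + 1)) • (x (Sum.inr (0, i)) : V) := by
    simp [auxZ, auxO]
  rw [h1]
  refine (norm_add_le _ _).trans_lt ?_
  rw [norm_smul, Real.norm_of_nonneg (by positivity)]
  have := auxC_norm e he x M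
  have := aux_small (M + i)
  have h5 : ‖(x (Sum.inr (0, i)) : V)‖ = 1 := by simp
  rw [h5, mul_one]
  linarith

lemma auxZ_near (e : V) (he : ‖e‖ = 1) (x : AuxJ M r n → Metric.sphere (0:V) 1)
    (i : Fin (n + 1)) (b : Fin M) :
    ‖auxZ e x 0 i - auxO e x b.castSucc.succ - ((1/4 : ℝ) ^ ((b:ℕ) + 1)) • (x (Sum.inl b) : V)‖
      < (1/4 : ℝ) ^ ((b:ℕ) + 1) := by
  have hy : (x (Sum.inl b) : V) = auxY e x b := by simp [auxY]
  have h1 : auxZ e x 0 i - auxO e x b.castSucc.succ - ((1/4 : ℝ) ^ ((b:ℕ) + 1)) • (x (Sum.inl b) : V) =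
      (auxC e x M - auxC e x b - ((1/4 : ℝ) ^ ((b:ℕ) + 1)) • auxY e x b) +
        ((1/4 : ℝ) ^ (M + i + 1)) • (x (Sum.inr (0, i)) : V) := by
    rw [hy]
    simp [auxZ, auxO]; abel
  rw [h1]
  refine (norm_add_le _ _).trans_lt ?_
  have h2 := auxC_tail e he x b M b.2
  rw [norm_smul, Real.norm_of_nonneg (by positivity)]
  have h3 : (1/4 : ℝ) ^ (M + (i:ℕ) + 1) ≤ (1/4) ^ M / 4 := by
    have : (1/4 : ℝ) ^ (M + (i:ℕ) + 1) = (1/4) ^ M * (1/4) ^ ((i:ℕ) + 1) := by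
      rw [add_assoc, pow_add]
    rw [this]
    have h4 := aux_small i
    have : (0:ℝ) ≤ (1/4) ^ M := by positivity
    nlinarith
  have h5 : ‖(x (Sum.inr (0, i)) : V)‖ = 1 := by simp
  rw [h5, mul_one]
  have : (0:ℝ) < (1/4) ^ M := by positivity
  have : (0:ℝ) < (1/4) ^ ((b:ℕ) + 1) := by positivity
  linarith

lemma auxO_inj (e : V) (he : ‖e‖ = 1) (x : AuxJ M r n → Metric.sphere (0:V) 1) :
    Function.Injective (auxO e x) := by
  unfold auxO
  rw [Fin.cons_injective_iff]
  have key : ∀ s t : Fin (M + 1), s < t → auxC e x s ≠ auxC e x t := by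
    intro s t hst heq
    have h1 := auxC_tail e he x s t hst
    have h2 : (0:ℝ) < (1/4) ^ ((s:ℕ) + 1) := by positivity
    have h3 : (0:ℝ) < (1/4) ^ (t:ℕ) := by positivity
    rw [heq, sub_self, zero_sub, norm_neg, norm_smul, auxY_norm e he,
      Real.norm_of_nonneg h2.le] at h1
    linarith
  constructor
  · rintro ⟨s, hs⟩
    have h1 := auxC_norm e he x s
    have hs' : auxC e x s = (2:ℝ) • e := hs
    rw [hs', norm_smul, he] at h1
    norm_num at h1
  · intro s t hst
    rcases lt_trichotomy s t with h | h | h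
    · exact absurd hst (key s t h)
    · exact h
    · exact absurd hst.symm (key t s h)

lemma auxZ_inj (e : V) (x : AuxJ M r n → Metric.sphere (0:V) 1) (k : Fin (r + 2)) :
    Function.Injective (auxZ e x k) := by
  intro i j hij
  unfold auxZ at hij
  have h1 := congrArg norm (add_left_cancel hij)
  rw [norm_smul, norm_smul, Real.norm_of_nonneg (by positivity),
    Real.norm_of_nonneg (by positivity)] at h1
  simp only [norm_eq_of_mem_sphere, mul_one] at h1
  have := pow_right_injective₀ (a := (1/4:ℝ)) (by norm_num) (by norm_num) h1
  exact Fin.ext (by omega)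

lemma auxZ_ne (e : V) (he : ‖e‖ = 1) (x : AuxJ M r n → Metric.sphere (0:V) 1) (k : Fin (r + 2))
    (i : Fin (n + 1)) (a : Fin (M + 2)) : auxZ e x k i - auxO e x a ≠ 0 := by
  have hx : ∀ j, (x j : V) ≠ 0 := fun j h => by
    have h1 : ‖(x j : V)‖ = 1 := by simp
    rw [h] at h1; simp at h1
  by_cases hk : k = 0
  · subst hk
    refine Fin.cases ?_ (fun s => ?_) a
    · exact aux_ne ((auxZ_far0 e he x i).trans_le (by rw [norm_smul, norm_neg, he]; simp))
    · refine Fin.lastCases ?_ (fun b => ?_) s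
      · have := auxZ_last e x i
        rw [Fin.succ_last, this]
        exact smul_ne_zero (by positivity) (hx _)
      · refine aux_ne ((auxZ_near e he x i b).trans_le ?_)
        rw [norm_smul, Real.norm_of_nonneg (by positivity)]; simp
  · refine Fin.cases ?_ (fun s => ?_) a
    · rw [auxZ_first e x k hk]
      exact smul_ne_zero (by positivity) (hx _)
    · exact aux_ne ((auxZ_far e he x k hk i s).trans_le (by rw [norm_smul, he]; simp))

lemma aux_data (e : V) (he : ‖e‖ = 1) (j : AuxJ M r n) :
    ∃ (i : Fin (n + 1)) (a : Fin (M + 2)) (k l : Fin (r + 2)) (R : ℝ) (e' : V), 0 < R ∧ ‖e'‖ = 1 ∧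
      (∀ x : AuxJ M r n → Metric.sphere (0:V) 1, ‖auxZ e x k i - auxO e x a - R • (x j : V)‖ < R) ∧
      (∀ x : AuxJ M r n → Metric.sphere (0:V) 1, ‖auxZ e x l i - auxO e x a - (2:ℝ) • e'‖ < 2) := by
  have h10 : (1 : Fin (r + 2)) ≠ 0 := by simp
  rcases j with b | ⟨k, i⟩
  · exact ⟨0, b.castSucc.succ, 0, 1, (1/4 : ℝ) ^ ((b:ℕ) + 1), e, by positivity, he,
      fun x => auxZ_near e he x 0 b, fun x => auxZ_far e he x 1 h10 0 _⟩
  · by_cases hk : k = 0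
    · subst hk
      refine ⟨i, Fin.last (M + 1), 0, 1, (1/4 : ℝ) ^ (M + i + 1), e, by positivity, he,
        fun x => ?_, fun x => auxZ_far e he x 1 h10 i (Fin.last M)⟩
      rw [auxZ_last, sub_self, norm_zero]; positivity
    · refine ⟨i, 0, k, 0, (1/4 : ℝ) ^ (M + i + 1), -e, by positivity, by simpa using he,
        fun x => ?_, fun x => auxZ_far0 e he x i⟩
      rw [auxZ_first e x k hk, sub_self, norm_zero]; positivity

end Config

/-- the test map into the parametrized space -/
noncomputable def auxPhi (d M r n : ℕ) (e : EuclideanSpace ℝ (Fin d)) (he : ‖e‖ = 1) :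
    C(AuxJ M r n → Metric.sphere (0 : EuclideanSpace ℝ (Fin d)) 1,
      ParamSpace (fnProj d (M + 2) (n + 1)) (r + 2)) :=
  ⟨fun x => ⟨fun k => ⟨Fin.append (auxO e x) (auxZ e x k), by
      rw [Fin.append_injective_iff]
      refine ⟨auxO_inj e he x, auxZ_inj e x k, fun a i h => ?_⟩
      exact auxZ_ne e he x k i a (sub_eq_zero.2 h.symm)⟩, by
      intro k l
      apply Subtype.ext
      funext a
      simp [fnProj]⟩, by
    refine Continuous.subtype_mk (continuous_pi fun k => Continuous.subtype_mk
      (continuous_pi fun q => ?_) _) _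
    refine Fin.addCases (fun a => ?_) (fun i => ?_) q
    · simpa using auxO_cont e a
    · simpa using auxZ_cont e k i⟩

theorem stmt16 (d m n r : ℕ) (hd : 2 ≤ d) (hm : 2 ≤ m) (hn : 1 ≤ n) (hr : 2 ≤ r) :
    ((r * n + m - 2 : ℕ) : ℕ∞) ≤ seqParamTC (fnProj d m n) r := by
  classical
  obtain ⟨M, rfl⟩ : ∃ M, m = M + 2 := ⟨m - 2, by omega⟩
  obtain ⟨n, rfl⟩ : ∃ n', n = n' + 1 := ⟨n - 1, by omega⟩
  obtain ⟨r, rfl⟩ : ∃ r', r = r' + 2 := ⟨r - 2, by omega⟩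
  unfold seqParamTC secat
  refine le_iInf₂ fun k hk => ?_
  by_contra hlt
  have hlt' : k < (r + 2) * (n + 1) + (M + 2) - 2 := by
    rw [not_le] at hlt
    exact_mod_cast hlt
  obtain ⟨U, hUo, hUc, hUs⟩ := hk
  obtain ⟨φ⟩ : Nonempty (Fin (k + 1) ↪ AuxJ M r n) := by
    refine Function.Embedding.nonempty_of_card_le ?_
    simp only [Fintype.card_fin, Fintype.card_sum, Fintype.card_prod]
    omega
  let ψ : AuxJ M r n → Fin (k + 1) := Function.invFun φ
  have hψ : Function.Surjective ψ := Function.invFun_surjective φ.injective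
  let e : EuclideanSpace ℝ (Fin d) := EuclideanSpace.single ⟨0, by omega⟩ 1
  have he : ‖e‖ = 1 := by simp [e]
  let Φ := auxPhi d M r n e he
  let W : AuxJ M r n → Set (AuxJ M r n → Metric.sphere (0 : EuclideanSpace ℝ (Fin d)) 1) :=
    fun j => Φ ⁻¹' (U (ψ j))
  choose i a k l R e' hR he' hk hl using aux_data (M := M) (r := r) (n := n) e he
  have hne : ∀ j, e' j ≠ 0 := fun j h => by have := he' j; rw [h] at this; simp at this
  refine aux_key W (fun j => (hUo _).preimage Φ.continuous) ?_ (fun j => ⟨e' j, hne j⟩) ?_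
  · rw [eq_univ_iff_forall]
    intro x
    have : Φ x ∈ ⋃ i, U i := by rw [hUc]; trivial
    obtain ⟨q, hq⟩ := mem_iUnion.1 this
    obtain ⟨j, rfl⟩ := hψ q
    exact mem_iUnion.2 ⟨j, hq⟩
  · intro j
    obtain ⟨sec, hsec⟩ := hUs (ψ j)
    let D : Fin (r + 2) → C(W j, {v : EuclideanSpace ℝ (Fin d) // v ≠ 0}) := fun q =>
      ⟨fun x => ⟨auxZ e x.1 q (i j) - auxO e x.1 (a j), auxZ_ne e he x.1 q (i j) (a j)⟩,
        Continuous.subtype_mk (((auxZ_cont e q (i j)).sub (auxO_cont e (a j))).comp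
          continuous_subtype_val) _⟩
    have h1 : (D (k j)).Homotopic (auxCoord (W j) j) := by
      refine aux_line _ _ (R j) (hR j) fun x => ?_
      have := hk j x.1
      simpa [D, auxCoord] using this
    have h2 : (D (l j)).Homotopic (ContinuousMap.const _ ⟨e' j, hne j⟩) := by
      refine aux_line _ _ 2 two_pos fun x => ?_
      have := hl j x.1
      simpa [D, he' j] using this
    have h3 : (D (k j)).Homotopic (D (l j)) := by
      have hpc : PathConnectedSpace I := isPathConnected_iff_pathConnectedSpace.1
        ((convex_Icc (0:ℝ) 1).isPathConnected ⟨0, by simp⟩)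
      let γ : Path (schedule (r + 2) (k j)) (schedule (r + 2) (l j)) := PathConnectedSpace.somePath _ _
      let Q : I × W j → Conf d (M + 2 + (n + 1)) := fun p => (sec ⟨Φ p.2.1, p.2.2⟩).1 (γ p.1)
      have hQ : Continuous Q := by
        have hc : Continuous fun p : I × W j => (sec ⟨Φ p.2.1, p.2.2⟩).1 := by
          refine continuous_subtype_val.comp (sec.continuous.comp (Continuous.subtype_mk ?_ _))
          exact Φ.continuous.comp (continuous_subtype_val.comp continuous_snd)
        exact ContinuousEval.continuous_eval.comp (hc.prodMk (γ.continuous.comp continuous_fst))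
      have hQe : ∀ (q : Fin (r + 2)) (x : W j), (sec ⟨Φ x.1, x.2⟩).1 (schedule (r + 2) q) = (Φ x.1).1 q := by
        intro q x
        have := hsec ⟨Φ x.1, x.2⟩
        exact congrFun (congrArg Subtype.val this) q
      refine ⟨⟨⟨fun p => ⟨(Q p).1 (Fin.natAdd _ (i j)) - (Q p).1 (Fin.castAdd _ (a j)), ?_⟩, ?_⟩,
        ?_, ?_⟩⟩
      · rw [sub_ne_zero]
        intro h
        have := (Q p).2 h
        have := congrArg Fin.val this
        simp at this
        have := (a j).2
        omega
      · refine Continuous.subtype_mk ?_ _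
        exact ((continuous_apply _).comp (continuous_subtype_val.comp hQ)).sub
          ((continuous_apply _).comp (continuous_subtype_val.comp hQ))
      · intro x
        apply Subtype.ext
        have : Q (0, x) = (Φ x.1).1 (k j) := by
          simp only [Q, γ.source]; exact hQe _ x
        simp [this, D, Φ, auxPhi]
      · intro x
        apply Subtype.ext
        have : Q (1, x) = (Φ x.1).1 (l j) := by
          simp only [Q, γ.target]; exact hQe _ x
        simp [this, D, Φ, auxPhi]
    exact (h1.symm.trans h3).trans h2
end
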